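/- arXiv:1611.01593 — 5 statements merged into one kernel-verified Lean document; each statement's English description precedes it below -/
import Mathlib

section
/- There exists a numerical constant c > 0 with the following property. Let ω : ℝ → ℝ be a modulus of continuity: ω is continuous and nondecreasing on [0,∞), ω(0) = 0, ω(x) > 0 for x > 0, and ω(x + y) ≤ ω(x) + ω(y) for all x, y ≥ 0; assume moreover that t ↦ ω(t)/t² is integrable on (x, ∞) for every x > 0, and set ω_*(x) = x·∫_x^∞ ω(t)/t² dt. Let L ≥ 0 and let f : ℝ → ℝ satisfy |f(x) − f(y)| ≤ L·ω(|x − y|) for all x, y ∈ ℝ. Then for all bounded self-adjoint operators A and B on a complex Hilbert space with A ≠ B, ‖f(A) − f(B)‖ ≤ c·L·ω_*(‖A − B‖). -/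
open MeasureTheory

/-!
Extend `f` to an almost analytic function `U` on the upper half plane by averaging. For
`δ = ‖A - B‖`, the Poisson integral of `x ↦ U (x + iδ)` approximates `f` uniformly to within a
multiple of `ω_* δ`, and applied to `A` it is `-π⁻¹` times the imaginary part of
`∫ U (x + iδ) (x + iδ - A)⁻¹ dx`.

In the difference of these integrals for `A` and `B`, the Cauchy–Pompeiu formula pushes the line of
integration to `+i∞`, at the cost of integrating `∂̄U · ((z - A)⁻¹ - (z - B)⁻¹)` over `im z > δ`.
At height `s`, `|∂̄U|` is at most a multiple of `ω s / s`, while the second resolvent identity, the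
Cauchy–Schwarz inequality and `∫ ‖(x + is - A)⁻¹ v‖² dx ≤ π ‖v‖² / s` show that integration against
`(z - A)⁻¹ - (z - B)⁻¹` along the horizontal line costs only a factor `π ‖A - B‖ / s`. Integrating
over `s` gives a multiple of `‖A - B‖ ∫_δ^∞ ω s / s² ds`.

Only the values of `f` on the spectra matter, so `f` may be taken compactly supported.
-/

theorem modulus_nonneg {f ω : ℝ → ℝ} (hω : MonotoneOn ω (Set.Ici 0))
    (hmod : ∀ x y, |f x - f y| ≤ ω |x - y|) {s : ℝ} (hs : 0 ≤ s) : 0 ≤ ω s := by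
  have hzero : 0 ≤ ω 0 := by simpa using hmod 0 0
  exact hzero.trans (hω Set.self_mem_Ici hs hs)

section AverageExtension

/-- The extension of `f : ℝ → ℝ` to `ℂ` whose value at `x + is` is the average of `f` over
`[x, x + s]`. It is almost analytic: on the upper half plane it is differentiable, and its
`∂̄`-derivative at `x + is` is of size `ω s / s` when `ω` is a modulus of continuity of `f`. -/
noncomputable def averageExtension (f : ℝ → ℝ) (z : ℂ) : ℝ :=
  ∫ u in (0 : ℝ)..1, f (z.re + z.im * u)

/-- The real derivative of `averageExtension f` at a point off the real axis. -/
noncomputable def averageExtensionDeriv (f : ℝ → ℝ) (z : ℂ) : ℂ →L[ℝ] ℝ :=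
  ((f (z.re + z.im) - f z.re) / z.im) • Complex.reCLM +
    ((f (z.re + z.im) - averageExtension f z) / z.im) • Complex.imCLM

variable {f : ℝ → ℝ} {z : ℂ}

theorem continuous_averageExtension (hf : Continuous f) : Continuous (averageExtension f) := by
  unfold averageExtension
  exact intervalIntegral.continuous_parametric_intervalIntegral_of_continuous'
    (by fun_prop) 0 1

theorem abs_averageExtension_sub_le (hf : Continuous f) {c M : ℝ}
    (h : ∀ u ∈ Set.Icc (0 : ℝ) 1, |f (z.re + z.im * u) - c| ≤ M) :
    |averageExtension f z - c| ≤ M := by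
  have hsub : averageExtension f z - c = ∫ u in (0 : ℝ)..1, (f (z.re + z.im * u) - c) := by
    rw [intervalIntegral.integral_sub (Continuous.intervalIntegrable (by fun_prop) 0 1)
      intervalIntegrable_const]
    simp [averageExtension]
  have hle := intervalIntegral.norm_integral_le_of_norm_le_const (a := 0) (b := 1)
    (f := fun u ↦ f (z.re + z.im * u) - c) fun u hu ↦
      h u (Set.Ioc_subset_Icc_self (Set.uIoc_of_le (zero_le_one' ℝ) ▸ hu))
  simpa [hsub] using hle

theorem averageExtension_eq_zero {R : ℝ} (hR : ∀ x, R ≤ |x| → f x = 0)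
    (hz : R + |z.im| ≤ |z.re|) : averageExtension f z = 0 := by
  refine intervalIntegral.integral_zero_ae <| .of_forall fun u hu ↦ hR _ ?_
  rw [Set.uIoc_of_le zero_le_one] at hu
  have him : |z.im * u| ≤ |z.im| := by
    rw [abs_mul, abs_of_pos hu.1]
    exact mul_le_of_le_one_right (abs_nonneg _) hu.2
  have hre : |z.re| ≤ |z.re + z.im * u| + |z.im * u| := by
    simpa using abs_sub (z.re + z.im * u) (z.im * u)
  linarith

theorem hasCompactSupport_averageExtension (hf : HasCompactSupport f) (s : ℝ) :
    HasCompactSupport fun x : ℝ ↦ averageExtension f (x + s * Complex.I) := by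
  obtain ⟨R, -, hR⟩ := hf.exists_pos_le_norm
  refine .intro (K := Set.Icc (-(R + |s|)) (R + |s|)) isCompact_Icc fun x hx ↦ ?_
  refine averageExtension_eq_zero hR ?_
  simpa using (not_le.1 (mt abs_le.1 hx)).le

theorem im_mul_averageExtension (f : ℝ → ℝ) (z : ℂ) :
    z.im * averageExtension f z = ∫ t in z.re..z.re + z.im, f t := by
  simp [averageExtension]

theorem hasFDerivAt_averageExtension (hf : Continuous f) (hz : z.im ≠ 0) :
    HasFDerivAt (averageExtension f) (averageExtensionDeriv f z) z := by
  let F : ℝ → ℝ := fun x ↦ ∫ t in (0 : ℝ)..x, f t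
  have hF (x : ℝ) : HasDerivAt F (f x) x :=
    intervalIntegral.integral_hasDerivAt_right (hf.intervalIntegrable _ _)
      hf.stronglyMeasurable.stronglyMeasurableAtFilter hf.continuousAt
  have heq (w : ℂ) : F (w.re + w.im) - F w.re = w.im * averageExtension f w := by
    rw [im_mul_averageExtension]
    exact intervalIntegral.integral_interval_sub_left (hf.intervalIntegrable _ _)
      (hf.intervalIntegrable _ _)
  have hre : HasFDerivAt Complex.re Complex.reCLM z := Complex.reCLM.hasFDerivAt
  have him : HasFDerivAt Complex.im Complex.imCLM z := Complex.imCLM.hasFDerivAt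
  have hnum := ((hF _).comp_hasFDerivAt z (hre.add him)).sub ((hF _).comp_hasFDerivAt z hre)
  have hquot := hnum.mul ((hasDerivAt_inv hz).comp_hasFDerivAt z him)
  refine (hquot.congr_of_eventuallyEq ?_).congr_fderiv ?_
  · filter_upwards [Complex.continuous_im.continuousAt.eventually_ne hz] with w hw
    simp only [Pi.mul_apply, Pi.sub_apply, Function.comp_apply, Pi.add_apply, heq]
    field_simp
  · ext w
    simp only [averageExtensionDeriv, heq, Pi.add_apply, Pi.sub_apply, Function.comp_apply,
      add_apply, sub_apply, neg_apply, smul_apply, smul_add, smul_neg, neg_smul, smul_eq_mul,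
      Complex.reCLM_apply, Complex.imCLM_apply]
    field_simp
    ring

theorem continuousOn_averageExtensionDeriv (hf : Continuous f) :
    ContinuousOn (averageExtensionDeriv f) {z | z.im ≠ 0} := by
  have havg := continuous_averageExtension hf
  have hadd : Continuous fun z : ℂ ↦ f (z.re + z.im) := by fun_prop
  have hre : Continuous fun z : ℂ ↦ f z.re := by fun_prop
  exact (((hadd.sub hre).continuousOn.div Complex.continuous_im.continuousOn fun _ h ↦ h).smul
    continuousOn_const).add (((hadd.sub havg).continuousOn.div Complex.continuous_im.continuousOn
      fun _ h ↦ h).smul continuousOn_const)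

theorem abs_averageExtension_sub_le_add {ω : ℝ → ℝ} (hω : MonotoneOn ω (Set.Ici 0))
    (hmod : ∀ x y, |f x - f y| ≤ ω |x - y|) (hf : Continuous f) (hz : 0 ≤ z.im) (t : ℝ) :
    |averageExtension f z - f t| ≤ ω z.im + ω |z.re - t| := by
  refine abs_averageExtension_sub_le hf fun u ⟨hu₀, hu₁⟩ ↦ ?_
  have hlast : |f (z.re + z.im * u) - f z.re| ≤ ω z.im := by
    refine (hmod _ _).trans (hω (Set.mem_Ici.2 (abs_nonneg _)) hz ?_)
    rw [add_sub_cancel_left, abs_of_nonneg (by positivity)]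
    exact mul_le_of_le_one_right hz hu₁
  exact (abs_sub_le _ (f z.re) _).trans (add_le_add hlast (hmod _ _))

theorem norm_dbar_averageExtension_le {ω : ℝ → ℝ} (hω : MonotoneOn ω (Set.Ici 0))
    (hmod : ∀ x y, |f x - f y| ≤ ω |x - y|) (hf : Continuous f) (hz : 0 < z.im) :
    ‖Complex.I * averageExtensionDeriv f z 1 - averageExtensionDeriv f z Complex.I‖ ≤
      2 * ω z.im / z.im := by
  have hfirst : |f (z.re + z.im) - f z.re| ≤ ω z.im := by
    simpa [abs_of_pos hz] using hmod (z.re + z.im) z.re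
  have hsecond : |averageExtension f z - f (z.re + z.im)| ≤ ω z.im := by
    refine abs_averageExtension_sub_le hf fun u ⟨hu₀, hu₁⟩ ↦ (hmod _ _).trans ?_
    refine hω (Set.mem_Ici.2 (abs_nonneg _)) hz.le ?_
    rw [abs_le]
    constructor <;> nlinarith
  have hnorm (x : ℝ) (hx : |x| ≤ ω z.im) : ‖((x / z.im : ℝ) : ℂ)‖ ≤ ω z.im / z.im := by
    rw [Complex.norm_real, norm_div, Real.norm_eq_abs, Real.norm_of_nonneg hz.le]
    gcongr
  have hone : averageExtensionDeriv f z 1 = (f (z.re + z.im) - f z.re) / z.im := by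
    simp [averageExtensionDeriv]
  have hI : averageExtensionDeriv f z Complex.I =
      (f (z.re + z.im) - averageExtension f z) / z.im := by
    simp [averageExtensionDeriv]
  calc _ ≤ ω z.im / z.im + ω z.im / z.im := by
        rw [hone, hI]
        refine norm_sub_le_of_le ?_ (hnorm _ ((abs_sub_comm _ _).trans_le hsecond))
        rw [norm_mul, Complex.norm_I, one_mul]
        exact hnorm _ hfirst
    _ = _ := by ring

end AverageExtension

section CauchyPompeiu

open Complex intervalIntegral
open scoped Interval

variable {E : Type*} [NormedAddCommGroup E] [NormedSpace ℂ E]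

theorem integral_smul_sub_integral_smul_eq_dbar {φ : ℂ → ℂ} {φ' : ℂ → ℂ →L[ℝ] ℂ} {T : ℂ → E}
    {a b c d : ℝ} (hφ : ∀ z ∈ [[a, b]] ×ℂ [[c, d]], HasFDerivAt φ (φ' z) z)
    (hφ' : ContinuousOn φ' ([[a, b]] ×ℂ [[c, d]]))
    (hT : ∀ z ∈ [[a, b]] ×ℂ [[c, d]], DifferentiableAt ℂ T z)
    (hleft : ∀ y ∈ [[c, d]], φ (a + y * I) = 0) (hright : ∀ y ∈ [[c, d]], φ (b + y * I) = 0) :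
    (∫ x : ℝ in a..b, φ (x + c * I) • T (x + c * I)) -
        ∫ x : ℝ in a..b, φ (x + d * I) • T (x + d * I) =
      ∫ y : ℝ in c..d, ∫ x : ℝ in a..b,
        (I * φ' (x + y * I) 1 - φ' (x + y * I) I) • T (x + y * I) := by
  have hderiv (z) (hz : z ∈ [[a, b]] ×ℂ [[c, d]]) : HasFDerivAt (fun z ↦ φ z • T z)
      (φ z • (fderiv ℂ T z).restrictScalars ℝ + (φ' z).smulRight (T z)) z :=
    (hφ z hz).smul ((hT z hz).hasFDerivAt.restrictScalars ℝ)
  have hT' (z : ℂ) : fderiv ℂ T z I = I • fderiv ℂ T z 1 := by rw [← map_smul, smul_eq_mul, mul_one]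
  have hdbar (z : ℂ) : I • (φ z • (fderiv ℂ T z).restrictScalars ℝ + (φ' z).smulRight (T z)) 1 -
      (φ z • (fderiv ℂ T z).restrictScalars ℝ + (φ' z).smulRight (T z)) I =
      (I * φ' z 1 - φ' z I) • T z := by
    simp only [add_apply, smul_apply, ContinuousLinearMap.coe_restrictScalars',
      ContinuousLinearMap.smulRight_apply, smul_add, smul_smul, hT']
    module
  have hcont : ContinuousOn (fun z ↦ (I * φ' z 1 - φ' z I) • T z) ([[a, b]] ×ℂ [[c, d]]) := by
    have hTc : ContinuousOn T ([[a, b]] ×ℂ [[c, d]]) := fun z hz ↦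
      (hT z hz).continuousAt.continuousWithinAt
    fun_prop
  have hmem {x y : ℝ} (hx : x ∈ [[a, b]]) (hy : y ∈ [[c, d]]) :
      (x + y * I : ℂ) ∈ [[a, b]] ×ℂ [[c, d]] := by
    simpa [mem_reProdIm] using ⟨hx, hy⟩
  have hstokes := integral_boundary_rect_of_hasFDerivAt_real_off_countable
    (fun z ↦ φ z • T z) (fun z ↦ φ z • (fderiv ℂ T z).restrictScalars ℝ + (φ' z).smulRight (T z))
    ⟨a, c⟩ ⟨b, d⟩ ∅ Set.countable_empty
    (fun z hz ↦ (hderiv z hz).continuousAt.continuousWithinAt)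
    (fun z hz ↦ hderiv z ⟨Set.Ioo_subset_Icc_self hz.1.1, Set.Ioo_subset_Icc_self hz.1.2⟩)
    (by
      simp only [hdbar]
      exact hcont.integrableOn_compact (isCompact_uIcc.reProdIm isCompact_uIcc))
  have hvertical {x : ℝ} (hx : ∀ y ∈ [[c, d]], φ (x + y * I) = 0) :
      ∫ y : ℝ in c..d, φ (x + y * I) • T (x + y * I) = 0 := by
    refine (integral_congr fun y hy ↦ ?_).trans integral_zero
    simp [hx y hy]
  simp only [hdbar, hvertical hleft, hvertical hright, smul_zero, add_zero, sub_zero] at hstokes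
  rw [hstokes, intervalIntegral_intervalIntegral_swap]
  refine (ContinuousOn.integrableOn_compact (isCompact_uIcc.prod isCompact_uIcc) <|
    hcont.comp (f := fun p : ℝ × ℝ ↦ (p.1 + p.2 * I : ℂ)) (by fun_prop)
      fun p hp ↦ hmem hp.1 hp.2).mono_set
        (Set.prod_mono Set.uIoc_subset_uIcc Set.uIoc_subset_uIcc)

end CauchyPompeiu

section Decay

open Complex intervalIntegral

variable {E : Type*} [NormedAddCommGroup E] [NormedSpace ℂ E] {f ω : ℝ → ℝ} {T : ℂ → E}

theorem integral_averageExtension_smul_sub_eq (hf : Continuous f) {R δ N X : ℝ} (hδ : 0 < δ)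
    (hN : δ ≤ N) (hR : ∀ x, R ≤ |x| → f x = 0) (hX : R + N ≤ X)
    (hT : ∀ z, 0 < z.im → DifferentiableAt ℂ T z) :
    (∫ x : ℝ in -X..X, (averageExtension f (x + δ * I) : ℂ) • T (x + δ * I)) -
        ∫ x : ℝ in -X..X, (averageExtension f (x + N * I) : ℂ) • T (x + N * I) =
      ∫ s : ℝ in δ..N, ∫ x : ℝ in -X..X,
        (I * averageExtensionDeriv f (x + s * I) 1 - averageExtensionDeriv f (x + s * I) I) •
          T (x + s * I) := by
  have him {s : ℝ} (hs : s ∈ Set.uIcc δ N) : s ∈ Set.Icc δ N := Set.uIcc_of_le hN ▸ hs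
  have hpos {z : ℂ} (hz : z ∈ Set.uIcc (-X) X ×ℂ Set.uIcc δ N) : 0 < z.im :=
    hδ.trans_le (him hz.2).1
  have hvanish {x s : ℝ} (hx : |x| = |X|) (hs : s ∈ Set.uIcc δ N) :
      (averageExtension f (x + s * I) : ℂ) = 0 := by
    refine mod_cast averageExtension_eq_zero hR ?_
    have := le_abs_self X
    simp only [add_re, ofReal_re, mul_re, I_re, ofReal_im, I_im, add_im, mul_im]
    simp only [mul_zero, mul_one, sub_zero, zero_add, add_zero, hx,
      abs_of_pos (hδ.trans_le (him hs).1)]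
    linarith [(him hs).2]
  refine integral_smul_sub_integral_smul_eq_dbar (φ := fun z ↦ (averageExtension f z : ℂ))
    (φ' := fun z ↦ ofRealCLM ∘L averageExtensionDeriv f z)
    (fun z hz ↦ ofRealCLM.hasFDerivAt.comp z (hasFDerivAt_averageExtension hf (hpos hz).ne'))
    ?_ (fun z hz ↦ hT z (hpos hz)) (fun s ↦ ?_) (fun s ↦ hvanish rfl)
  · exact continuousOn_const.clm_comp
      ((continuousOn_averageExtensionDeriv hf).mono fun z hz ↦ (hpos hz).ne')
  · exact hvanish (abs_neg X)

theorem integral_averageExtension_smul_eq_intervalIntegral {R δ X : ℝ} (hδ : 0 < δ)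
    (hR : ∀ x, R ≤ |x| → f x = 0) (hX : R + δ ≤ X) (g : ℝ → E) :
    ∫ x : ℝ, (averageExtension f (x + δ * I) : ℂ) • g x =
      ∫ x : ℝ in -X..X, (averageExtension f (x + δ * I) : ℂ) • g x := by
  refine (integral_eq_integral_of_support_subset fun x hx ↦ ?_).symm
  have hlt : |x| < X := by
    by_contra! hle
    have hzero := averageExtension_eq_zero (z := x + δ * I) hR
      (by simpa [abs_of_pos hδ] using hX.trans hle)
    simp [hzero] at hx
  exact Set.Ioo_subset_Ioc_self (abs_lt.1 hlt)

theorem norm_integral_dbar_averageExtension_smul_le (hf : Continuous f)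
    (hω : MonotoneOn ω (Set.Ici 0)) (hmod : ∀ x y, |f x - f y| ≤ ω |x - y|) {a b δ N C : ℝ}
    (hδ : 0 < δ) (hN : δ ≤ N) (hint : IntegrableOn (fun s ↦ ω s / s ^ 2) (Set.Ioi δ))
    (hC : ∀ (g : ℝ → ℂ) (M a b s : ℝ), Continuous g → (∀ x, ‖g x‖ ≤ M) → 0 < s →
      ‖∫ x in a..b, g x • T (x + s * I)‖ ≤ C * M / s) :
    ‖∫ s : ℝ in δ..N, ∫ x : ℝ in a..b,
        (I * averageExtensionDeriv f (x + s * I) 1 - averageExtensionDeriv f (x + s * I) I) •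
          T (x + s * I)‖ ≤ 2 * C * ∫ s in Set.Ioi δ, ω s / s ^ 2 := by
  have hC₀ : 0 ≤ C := by
    simpa using (norm_nonneg _).trans (hC 0 1 0 0 1 continuous_const (by simp) one_pos)
  have hslice {s : ℝ} (hs : 0 < s) : ‖∫ x : ℝ in a..b,
      (I * averageExtensionDeriv f (x + s * I) 1 - averageExtensionDeriv f (x + s * I) I) •
        T (x + s * I)‖ ≤ 2 * C * (ω s / s ^ 2) := by
    have hderiv : Continuous fun x : ℝ ↦ averageExtensionDeriv f (x + s * I) :=
      (continuousOn_averageExtensionDeriv hf).comp_continuous (by fun_prop)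
        fun x ↦ by simpa using hs.ne'
    refine (hC _ (2 * ω s / s) a b s (by fun_prop) (fun x ↦ ?_) hs).trans_eq (by ring)
    simpa using norm_dbar_averageExtension_le (z := x + s * I) hω hmod hf (by simpa using hs)
  have hint' : IntervalIntegrable (fun s ↦ ω s / s ^ 2) volume δ N :=
    (intervalIntegrable_iff_integrableOn_Ioc_of_le hN).2 (hint.mono_set Set.Ioc_subset_Ioi_self)
  calc _ ≤ ∫ s in δ..N, 2 * C * (ω s / s ^ 2) :=
        norm_integral_le_of_norm_le hN (.of_forall fun s hs ↦ hslice (hδ.trans hs.1))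
          (hint'.const_mul _)
    _ = 2 * C * ∫ s in Set.Ioc δ N, ω s / s ^ 2 := by
        rw [intervalIntegral.integral_const_mul, integral_of_le hN]
    _ ≤ _ := by
        refine mul_le_mul_of_nonneg_left (setIntegral_mono_set hint ?_
          Set.Ioc_subset_Ioi_self.eventuallyLE) (by positivity)
        refine ae_restrict_of_forall_mem measurableSet_Ioi fun s hs ↦ ?_
        exact div_nonneg (modulus_nonneg hω hmod (hδ.trans hs).le) (sq_nonneg s)

theorem norm_integral_averageExtension_smul_le (hf : Continuous f) (hsupp : HasCompactSupport f)
    (hω : MonotoneOn ω (Set.Ici 0)) (hmod : ∀ x y, |f x - f y| ≤ ω |x - y|) {δ C : ℝ}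
    (hδ : 0 < δ) (hint : IntegrableOn (fun s ↦ ω s / s ^ 2) (Set.Ioi δ))
    (hT : ∀ z, 0 < z.im → DifferentiableAt ℂ T z)
    (hC : ∀ (g : ℝ → ℂ) (M a b s : ℝ), Continuous g → (∀ x, ‖g x‖ ≤ M) → 0 < s →
      ‖∫ x in a..b, g x • T (x + s * I)‖ ≤ C * M / s) :
    ‖∫ x : ℝ, (averageExtension f (x + δ * I) : ℂ) • T (x + δ * I)‖ ≤
      2 * C * ∫ s in Set.Ioi δ, ω s / s ^ 2 := by
  obtain ⟨R, -, hR⟩ := hsupp.exists_pos_le_norm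
  obtain ⟨M, hM⟩ := hsupp.exists_bound_of_continuous hf
  have hcont := continuous_averageExtension hf
  have htop {a b N : ℝ} (hN : 0 < N) :
      ‖∫ x : ℝ in a..b, (averageExtension f (x + N * I) : ℂ) • T (x + N * I)‖ ≤ C * M / N := by
    refine hC _ M _ _ N (by fun_prop) (fun x ↦ ?_) hN
    rw [norm_real]
    simpa using abs_averageExtension_sub_le hf (c := 0) fun u _ ↦ by simpa using hM _
  have hbound {N : ℝ} (hN : δ ≤ N) :
      ‖∫ x : ℝ, (averageExtension f (x + δ * I) : ℂ) • T (x + δ * I)‖ ≤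
        2 * C * (∫ s in Set.Ioi δ, ω s / s ^ 2) + C * M / N := by
    rw [integral_averageExtension_smul_eq_intervalIntegral hδ hR
        (by gcongr : R + δ ≤ R + N) fun x ↦ T (x + δ * I),
      ← sub_add_cancel (intervalIntegral _ _ _ _) (∫ x : ℝ in -(R + N)..R + N,
        (averageExtension f (x + N * I) : ℂ) • T (x + N * I)),
      integral_averageExtension_smul_sub_eq hf hδ hN hR le_rfl hT]
    exact (norm_add_le _ _).trans (add_le_add
      (norm_integral_dbar_averageExtension_smul_le hf hω hmod hδ hN hint hC)
      (htop (hδ.trans_le hN)))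
  have hlim : Filter.Tendsto (fun N ↦ 2 * C * (∫ s in Set.Ioi δ, ω s / s ^ 2) + C * M / N)
      Filter.atTop (nhds (2 * C * ∫ s in Set.Ioi δ, ω s / s ^ 2)) := by
    simpa using (tendsto_const_nhds (x := C * M)).div_atTop Filter.tendsto_id |>.const_add
      (2 * C * ∫ s in Set.Ioi δ, ω s / s ^ 2)
  exact ge_of_tendsto hlim ((Filter.eventually_ge_atTop δ).mono fun N hN ↦ hbound hN)

end Decay

section Resolvent

open Complex

/-- The Poisson kernel `im z / |z - t|²` of the upper half plane, without the factor `π⁻¹`. -/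
noncomputable def halfPlanePoissonKernel (z : ℂ) (t : ℝ) : ℝ :=
  z.im / ((z.re - t) ^ 2 + z.im ^ 2)

theorem halfPlanePoissonKernel_eq_neg_im (z : ℂ) (t : ℝ) :
    halfPlanePoissonKernel z t = -((z - t)⁻¹).im := by
  simp [halfPlanePoissonKernel, inv_im, normSq_apply, sq, neg_div]

theorem halfPlanePoissonKernel_eq_im_mul (z : ℂ) (t : ℝ) :
    (halfPlanePoissonKernel z t : ℂ) = z.im * (star (z - t)⁻¹ * (z - t)⁻¹) := by
  rw [← starRingEnd_apply, ← normSq_eq_conj_mul_self, ← ofReal_mul, normSq_inv]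
  simp [halfPlanePoissonKernel, normSq_apply, sq, div_eq_mul_inv]

variable {𝓐 : Type*} [CStarAlgebra 𝓐] {a : 𝓐} {z : ℂ}

theorem mem_resolventSet_of_im_ne_zero (ha : IsSelfAdjoint a) (hz : z.im ≠ 0) :
    z ∈ resolventSet ℂ a := by
  by_contra hmem
  exact hz (by rw [ha.mem_spectrum_eq_re hmem, ofReal_im])

theorem continuousOn_inv_sub_spectrum (hz : z ∈ resolventSet ℂ a) :
    ContinuousOn (fun w ↦ (z - w)⁻¹) (spectrum ℂ a) :=
  ContinuousOn.inv₀ (by fun_prop) fun _ hw h ↦ hw (sub_eq_zero.1 h ▸ hz)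

theorem resolvent_eq_cfc [IsStarNormal a] (hz : z ∈ resolventSet ℂ a) :
    resolvent a z = cfc (fun w : ℂ ↦ (z - w)⁻¹) a := by
  rw [cfc_inv (fun w ↦ z - w) a fun w hw h ↦ ?_, cfc_sub _ _ a, cfc_const z a, cfc_id' ℂ a]
  · rfl
  · exact hw (sub_eq_zero.1 h ▸ hz)

theorem im_smul_star_resolvent_mul_resolvent (ha : IsSelfAdjoint a) (hz : z.im ≠ 0) :
    (z.im : ℂ) • (star (resolvent a z) * resolvent a z) = cfc (halfPlanePoissonKernel z) a := by
  have := ha.isStarNormal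
  have hmem := mem_resolventSet_of_im_ne_zero ha hz
  have hcont := continuousOn_inv_sub_spectrum hmem
  have hstar : ContinuousOn (fun w ↦ star (z - w)⁻¹) (spectrum ℂ a) := hcont.star
  rw [resolvent_eq_cfc hmem, ← cfc_star, ← cfc_mul _ _ a hstar,
    ← cfc_smul (z.im : ℂ) (fun w ↦ star (z - w)⁻¹ * (z - w)⁻¹) a (hstar.mul hcont),
    cfc_real_eq_complex]
  refine cfc_congr fun w hw ↦ ?_
  rw [halfPlanePoissonKernel_eq_im_mul, ← ha.mem_spectrum_eq_re hw, smul_eq_mul]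

theorem imaginaryPart_resolvent (ha : IsSelfAdjoint a) (hz : z.im ≠ 0) :
    (imaginaryPart (resolvent a z) : 𝓐) = -cfc (halfPlanePoissonKernel z) a := by
  have := ha.isStarNormal
  have hmem := mem_resolventSet_of_im_ne_zero ha hz
  have hcont := continuousOn_inv_sub_spectrum hmem
  have hnormal : IsStarNormal (resolvent a z) := resolvent_eq_cfc hmem ▸ cfc_predicate _ _
  rw [← cfc_im_id (resolvent a z), resolvent_eq_cfc hmem,
    ← cfc_comp' (fun w : ℂ ↦ (w.im : ℂ)) (fun w ↦ (z - w)⁻¹) a, cfc_real_eq_complex, ← cfc_neg]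
  refine cfc_congr fun w hw ↦ ?_
  simp only [halfPlanePoissonKernel_eq_neg_im, ← ha.mem_spectrum_eq_re hw, ofReal_neg, neg_neg]

end Resolvent

section PoissonKernel

open Complex

variable {s x t : ℝ}

theorem halfPlanePoissonKernel_add_mul_I (x s t : ℝ) :
    halfPlanePoissonKernel (x + s * I) t = s / ((x - t) ^ 2 + s ^ 2) := by
  simp [halfPlanePoissonKernel]

theorem halfPlanePoissonKernel_nonneg (hs : 0 ≤ s) :
    0 ≤ halfPlanePoissonKernel (x + s * I) t := by
  rw [halfPlanePoissonKernel_add_mul_I]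
  positivity

theorem halfPlanePoissonKernel_le_inv (hs : 0 < s) :
    halfPlanePoissonKernel (x + s * I) t ≤ s⁻¹ := by
  rw [halfPlanePoissonKernel_add_mul_I, div_le_iff₀ (by positivity), mul_add, sq s,
    inv_mul_cancel_left₀ hs.ne']
  exact le_add_of_nonneg_left (by positivity)

theorem halfPlanePoissonKernel_le_div_sq (hs : 0 ≤ s) (hxt : x ≠ t) :
    halfPlanePoissonKernel (x + s * I) t ≤ s / (x - t) ^ 2 := by
  have : 0 < (x - t) ^ 2 := sq_pos_of_ne_zero (sub_ne_zero.2 hxt)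
  rw [halfPlanePoissonKernel_add_mul_I]
  gcongr
  exact le_add_of_nonneg_right (sq_nonneg s)

theorem continuous_halfPlanePoissonKernel (hs : 0 < s) :
    Continuous fun p : ℝ × ℝ ↦ halfPlanePoissonKernel (p.1 + s * I) p.2 := by
  simp only [halfPlanePoissonKernel_add_mul_I]
  exact continuous_const.div (by fun_prop) fun p ↦ by positivity

theorem halfPlanePoissonKernel_eq_inv_one_add_sq (hs : s ≠ 0) :
    halfPlanePoissonKernel (x + s * I) t = s⁻¹ * (1 + ((x - t) / s) ^ 2)⁻¹ := by
  rw [halfPlanePoissonKernel_add_mul_I]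
  field_simp
  ring

theorem integrable_halfPlanePoissonKernel (hs : s ≠ 0) (t : ℝ) :
    Integrable fun x : ℝ ↦ halfPlanePoissonKernel (x + s * I) t := by
  simp only [halfPlanePoissonKernel_eq_inv_one_add_sq hs]
  exact ((integrable_inv_one_add_sq.comp_div hs).comp_sub_right t).const_mul _

theorem integral_halfPlanePoissonKernel (hs : 0 < s) (t : ℝ) :
    ∫ x : ℝ, halfPlanePoissonKernel (x + s * I) t = Real.pi := by
  simp only [halfPlanePoissonKernel_eq_inv_one_add_sq hs.ne']
  rw [integral_const_mul, integral_sub_right_eq_self (fun x : ℝ ↦ (1 + (x / s) ^ 2)⁻¹) t,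
    Measure.integral_comp_div (fun x : ℝ ↦ (1 + x ^ 2)⁻¹), integral_univ_inv_one_add_sq,
    abs_of_pos hs, smul_eq_mul, inv_mul_cancel_left₀ hs.ne']

end PoissonKernel

section ResolventIntegral

open Complex

variable {𝓐 : Type*} [CStarAlgebra 𝓐] {a : 𝓐} {s : ℝ}

section Weighted

variable {U : ℝ → ℝ} {μ : Measure ℝ}

theorem continuous_weighted_halfPlanePoissonKernel (hU : Continuous U) (hs : 0 < s) :
    Continuous (Function.uncurry fun x t : ℝ ↦ U x * halfPlanePoissonKernel (x + s * I) t) :=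
  (hU.comp continuous_fst).mul (continuous_halfPlanePoissonKernel hs)

theorem norm_weighted_halfPlanePoissonKernel_le (hs : 0 < s) (x t : ℝ) :
    ‖U x * halfPlanePoissonKernel (x + s * I) t‖ ≤ ‖U x‖ * s⁻¹ := by
  rw [norm_mul, Real.norm_of_nonneg (halfPlanePoissonKernel_nonneg hs.le)]
  gcongr
  exact halfPlanePoissonKernel_le_inv hs

theorem continuous_integral_weighted_halfPlanePoissonKernel (hU : Continuous U)
    (hUi : Integrable U μ) (hs : 0 < s) :
    Continuous fun t ↦ ∫ x, U x * halfPlanePoissonKernel (x + s * I) t ∂μ := by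
  have hcont := continuous_weighted_halfPlanePoissonKernel hU hs
  refine continuous_of_dominated (fun t ↦ ?_) (fun t ↦ ae_of_all _ fun x ↦
    norm_weighted_halfPlanePoissonKernel_le hs x t) (hUi.norm.mul_const _) (ae_of_all _ fun x ↦ ?_)
  · exact (hcont.comp (Continuous.prodMk_left t)).aestronglyMeasurable
  · exact hcont.comp (Continuous.prodMk_right x)

theorem integrable_cfc_weighted_halfPlanePoissonKernel (hU : Continuous U) (hUi : Integrable U μ)
    (ha : IsSelfAdjoint a) (hs : 0 < s) :
    Integrable (fun x ↦ cfc (fun t ↦ U x * halfPlanePoissonKernel (x + s * I) t) a) μ :=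
  integrable_cfc _ _ a (continuous_weighted_halfPlanePoissonKernel hU hs).continuousOn
    (ae_of_all _ fun x t _ ↦ norm_weighted_halfPlanePoissonKernel_le hs x t)
    (hUi.norm.mul_const _).hasFiniteIntegral ha

theorem cfc_integral_weighted_halfPlanePoissonKernel (hU : Continuous U) (hUi : Integrable U μ)
    (ha : IsSelfAdjoint a) (hs : 0 < s) :
    cfc (fun t ↦ ∫ x, U x * halfPlanePoissonKernel (x + s * I) t ∂μ) a =
      ∫ x, cfc (fun t ↦ U x * halfPlanePoissonKernel (x + s * I) t) a ∂μ :=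
  cfc_integral _ _ a (continuous_weighted_halfPlanePoissonKernel hU hs).continuousOn
    (ae_of_all _ fun x t _ ↦ norm_weighted_halfPlanePoissonKernel_le hs x t)
    (hUi.norm.mul_const _).hasFiniteIntegral ha

end Weighted

theorem differentiableAt_resolvent {z : ℂ} (ha : IsSelfAdjoint a) (hz : z.im ≠ 0) :
    DifferentiableAt ℂ (resolvent a) z :=
  (spectrum.hasDerivAt_resolvent_const_left
    (mem_resolventSet_of_im_ne_zero ha hz)).differentiableAt

theorem continuous_resolvent_add_mul_I (ha : IsSelfAdjoint a) (hs : s ≠ 0) :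
    Continuous fun x : ℝ ↦ resolvent a (x + s * I) :=
  continuous_iff_continuousAt.2 fun x ↦ ContinuousAt.comp (f := fun x : ℝ ↦ (x + s * I : ℂ))
    (differentiableAt_resolvent ha (by simpa)).continuousAt (by fun_prop)

theorem integrable_smul_resolvent {U : ℝ → ℝ} (hU : Continuous U) (hUc : HasCompactSupport U)
    (ha : IsSelfAdjoint a) (hs : s ≠ 0) :
    Integrable fun x ↦ (U x : ℂ) • resolvent a (x + s * I) :=
  Continuous.integrable_of_hasCompactSupport
    ((continuous_ofReal.comp hU).smul (continuous_resolvent_add_mul_I ha hs))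
    (hUc.comp_left ofReal_zero).smul_right

theorem integral_imaginaryPart {X : Type*} [MeasurableSpace X] {μ : Measure X} {F : X → 𝓐}
    (hF : Integrable F μ) :
    ∫ x, (imaginaryPart (F x) : 𝓐) ∂μ = imaginaryPart (∫ x, F x ∂μ) := by
  have hstar : Integrable (fun x ↦ star (F x)) μ :=
    (starL' ℝ).toContinuousLinearMap.integrable_comp hF
  have hcomm : ∫ x, star (F x) ∂μ = star (∫ x, F x ∂μ) :=
    (starL' ℝ : 𝓐 ≃L[ℝ] 𝓐).integral_comp_comm F
  simp only [imaginaryPart_apply_coe, integral_smul, integral_sub hF hstar, hcomm]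

theorem cfc_integral_mul_halfPlanePoissonKernel {U : ℝ → ℝ} (hU : Continuous U)
    (hUc : HasCompactSupport U) (ha : IsSelfAdjoint a) (hs : 0 < s) :
    cfc (fun t ↦ ∫ x, U x * halfPlanePoissonKernel (x + s * I) t) a =
      -(imaginaryPart (∫ x, (U x : ℂ) • resolvent a (x + s * I)) : 𝓐) := by
  rw [cfc_integral_weighted_halfPlanePoissonKernel hU (hU.integrable_of_hasCompactSupport hUc)
    ha hs, ← integral_imaginaryPart (integrable_smul_resolvent hU hUc ha hs.ne'), ← integral_neg]
  refine integral_congr_ae (ae_of_all _ fun x ↦ ?_)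
  have hcont : ContinuousOn (halfPlanePoissonKernel (x + s * I)) (spectrum ℝ a) :=
    ((continuous_halfPlanePoissonKernel hs).comp (Continuous.prodMk_right x)).continuousOn
  simp only [imaginaryPart_smul, ofReal_re, ofReal_im, zero_smul, add_zero, selfAdjoint.val_smul,
    imaginaryPart_resolvent ha (z := x + s * I) (by simpa using hs.ne'), smul_neg, neg_neg]
  exact cfc_smul (U x) _ a hcont

end ResolventIntegral

section HilbertSpace

open Complex

variable {H : Type*} [NormedAddCommGroup H] [InnerProductSpace ℂ H] [CompleteSpace H]
  {A B : H →L[ℂ] H} {s : ℝ}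

theorem im_mul_norm_resolvent_apply_sq {z : ℂ} (hA : IsSelfAdjoint A) (hz : z.im ≠ 0) (v : H) :
    z.im * ‖resolvent A z v‖ ^ 2 =
      RCLike.re (inner ℂ v (cfc (halfPlanePoissonKernel z) A v)) := by
  rw [← im_smul_star_resolvent_mul_resolvent hA hz, _root_.smul_apply, inner_smul_right,
    ContinuousLinearMap.apply_norm_sq_eq_inner_adjoint_right]
  simp [ContinuousLinearMap.star_eq_adjoint]

theorem norm_star_resolvent_apply {z : ℂ} (hA : IsSelfAdjoint A) (hz : z.im ≠ 0) (v : H) :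
    ‖star (resolvent A z) v‖ = ‖resolvent A z v‖ := by
  have := hA.isStarNormal
  have hnormal : IsStarNormal (resolvent A z) :=
    resolvent_eq_cfc (mem_resolventSet_of_im_ne_zero hA hz) ▸ cfc_predicate _ _
  exact (ContinuousLinearMap.isStarNormal_iff_norm_eq_adjoint.1 hnormal v).symm

theorem setIntegral_norm_resolvent_apply_sq_le (hA : IsSelfAdjoint A) (hs : 0 < s) {S : Set ℝ}
    (hS : volume S ≠ ⊤) (v : H) :
    ∫ x in S, ‖resolvent A (x + s * I) v‖ ^ 2 ≤ Real.pi / s * ‖v‖ ^ 2 := by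
  have : IsFiniteMeasure (volume.restrict S) := isFiniteMeasure_restrict.2 hS
  set P : ℝ → ℝ → ℝ := fun x ↦ halfPlanePoissonKernel (x + s * I)
  have hint : Integrable (fun x ↦ cfc (P x) A) (volume.restrict S) := by
    simpa using integrable_cfc_weighted_halfPlanePoissonKernel (U := 1) continuous_const
      (integrable_const _) hA hs
  have hcfc : cfc (fun t ↦ ∫ x in S, P x t) A = ∫ x in S, cfc (P x) A := by
    simpa using cfc_integral_weighted_halfPlanePoissonKernel (U := 1) continuous_const
      (integrable_const _) hA hs
  have hnorm : ‖cfc (fun t ↦ ∫ x in S, P x t) A‖ ≤ Real.pi := by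
    refine norm_cfc_le Real.pi_nonneg fun t _ ↦ ?_
    have hnonneg (x : ℝ) : 0 ≤ P x t := halfPlanePoissonKernel_nonneg hs.le
    rw [Real.norm_of_nonneg (integral_nonneg hnonneg), ← integral_halfPlanePoissonKernel hs t]
    exact setIntegral_le_integral (integrable_halfPlanePoissonKernel hs.ne' t)
      (ae_of_all _ hnonneg)
  have hsq (x : ℝ) : s * ‖resolvent A (x + s * I) v‖ ^ 2 =
      RCLike.re (inner ℂ v (cfc (P x) A v)) := by
    simpa using im_mul_norm_resolvent_apply_sq (z := x + s * I) hA (by simpa using hs.ne') v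
  have hintv := hint.apply_continuousLinearMap v
  calc ∫ x in S, ‖resolvent A (x + s * I) v‖ ^ 2
      = s⁻¹ * RCLike.re (inner ℂ v (cfc (fun t ↦ ∫ x in S, P x t) A v)) := by
        rw [hcfc, ContinuousLinearMap.integral_apply hint, ← integral_inner hintv,
          ← integral_re (hintv.const_inner v), ← integral_const_mul]
        simp only [← hsq, inv_mul_cancel_left₀ hs.ne']
    _ ≤ s⁻¹ * (‖v‖ * (Real.pi * ‖v‖)) := by
        gcongr
        exact (re_inner_le_norm _ _).trans <| by
          gcongr
          exact ContinuousLinearMap.le_of_opNorm_le _ hnorm v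
    _ = Real.pi / s * ‖v‖ ^ 2 := by ring

theorem norm_inner_resolvent_sub_resolvent_apply_le {z : ℂ} (hA : IsSelfAdjoint A)
    (hB : IsSelfAdjoint B) (hz : z.im ≠ 0) (v w : H) :
    ‖inner ℂ w ((resolvent A z - resolvent B z) v)‖ ≤
      ‖A - B‖ * ((‖resolvent A z w‖ ^ 2 + ‖resolvent B z v‖ ^ 2) / 2) := by
  calc ‖inner ℂ w ((resolvent A z - resolvent B z) v)‖
      = ‖inner ℂ (star (resolvent A z) w) ((A - B) (resolvent B z v))‖ := by
        rw [spectrum.resolvent_sub_resolvent (mem_resolventSet_of_im_ne_zero hA hz)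
          (mem_resolventSet_of_im_ne_zero hB hz), ContinuousLinearMap.star_eq_adjoint,
          ContinuousLinearMap.adjoint_inner_left]
        rfl
    _ ≤ ‖resolvent A z w‖ * (‖A - B‖ * ‖resolvent B z v‖) := by
        refine (norm_inner_le_norm _ _).trans ?_
        rw [norm_star_resolvent_apply hA hz]
        gcongr
        exact (A - B).le_opNorm _
    _ = ‖A - B‖ * (‖resolvent A z w‖ * ‖resolvent B z v‖) := by ring
    _ ≤ ‖A - B‖ * ((‖resolvent A z w‖ ^ 2 + ‖resolvent B z v‖ ^ 2) / 2) := by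
        gcongr
        linarith [two_mul_le_add_sq ‖resolvent A z w‖ ‖resolvent B z v‖]

theorem continuous_norm_resolvent_apply_sq (hA : IsSelfAdjoint A) (hs : s ≠ 0) (v : H) :
    Continuous fun x : ℝ ↦ ‖resolvent A (x + s * I) v‖ ^ 2 :=
  ((continuous_resolvent_add_mul_I hA hs).clm_apply continuous_const).norm.pow 2

theorem norm_setIntegral_inner_smul_resolvent_sub_resolvent_le (hA : IsSelfAdjoint A)
    (hB : IsSelfAdjoint B) {g : ℝ → ℂ} {M : ℝ} (hgM : ∀ x, ‖g x‖ ≤ M) (a b : ℝ) (hs : 0 < s)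
    (v w : H) :
    ‖∫ x in Set.uIoc a b,
        inner ℂ w ((g x • (resolvent A (x + s * I) - resolvent B (x + s * I))) v)‖ ≤
      Real.pi * ‖A - B‖ * M / s * ((‖w‖ ^ 2 + ‖v‖ ^ 2) / 2) := by
  have hM : 0 ≤ M := (norm_nonneg _).trans (hgM 0)
  have hsq {T : H →L[ℂ] H} (hT : IsSelfAdjoint T) (u : H) :=
    (continuous_norm_resolvent_apply_sq hT hs.ne' u).integrableOn_uIoc (a := a) (b := b)
      (μ := volume)
  have hpt (x : ℝ) : ‖inner ℂ w ((g x • (resolvent A (x + s * I) - resolvent B (x + s * I))) v)‖ ≤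
      M * (‖A - B‖ *
        ((‖resolvent A (x + s * I) w‖ ^ 2 + ‖resolvent B (x + s * I) v‖ ^ 2) / 2)) := by
    rw [_root_.smul_apply, inner_smul_right, norm_mul]
    exact mul_le_mul (hgM x) (norm_inner_resolvent_sub_resolvent_apply_le hA hB
      (by simpa using hs.ne') v w) (norm_nonneg _) hM
  refine (norm_integral_le_of_norm_le (((((hsq hA w).add (hsq hB v)).div_const 2).const_mul
    _).const_mul _) (ae_of_all _ hpt)).trans ?_
  calc ∫ x in Set.uIoc a b, M * (‖A - B‖ *
          ((‖resolvent A (x + s * I) w‖ ^ 2 + ‖resolvent B (x + s * I) v‖ ^ 2) / 2))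
      ≤ M * (‖A - B‖ * ((Real.pi / s * ‖w‖ ^ 2 + Real.pi / s * ‖v‖ ^ 2) / 2)) := by
        rw [integral_const_mul, integral_const_mul, integral_div,
          integral_add (hsq hA w) (hsq hB v)]
        gcongr
        · exact setIntegral_norm_resolvent_apply_sq_le hA hs (by simp) w
        · exact setIntegral_norm_resolvent_apply_sq_le hB hs (by simp) v
    _ = Real.pi * ‖A - B‖ * M / s * ((‖w‖ ^ 2 + ‖v‖ ^ 2) / 2) := by ring

theorem norm_intervalIntegral_smul_resolvent_sub_resolvent_le (hA : IsSelfAdjoint A)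
    (hB : IsSelfAdjoint B) {g : ℝ → ℂ} (hg : Continuous g) {M : ℝ} (hgM : ∀ x, ‖g x‖ ≤ M)
    (a b : ℝ) (hs : 0 < s) :
    ‖∫ x in a..b, g x • (resolvent A (x + s * I) - resolvent B (x + s * I))‖ ≤
      Real.pi * ‖A - B‖ * M / s := by
  have hM : 0 ≤ M := (norm_nonneg _).trans (hgM 0)
  have hint : IntegrableOn (fun x : ℝ ↦ g x • (resolvent A (x + s * I) - resolvent B (x + s * I)))
      (Set.uIoc a b) :=
    (hg.smul ((continuous_resolvent_add_mul_I hA hs.ne').sub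
      (continuous_resolvent_add_mul_I hB hs.ne'))).integrableOn_uIoc
  rw [intervalIntegral.norm_intervalIntegral_eq]
  refine ContinuousLinearMap.opNorm_le_of_re_inner_le (𝕜 := ℂ) (by positivity) fun v w hv hw ↦ ?_
  rw [inner_re_symm, ContinuousLinearMap.integral_apply hint,
    ← integral_inner (hint.apply_continuousLinearMap v)]
  refine (RCLike.re_le_norm _).trans
    ((norm_setIntegral_inner_smul_resolvent_sub_resolvent_le hA hB hgM a b hs v w).trans_eq ?_)
  rw [hv, hw]
  ring

end HilbertSpace

section Approximation

open Complex

variable {f ω : ℝ → ℝ} {δ : ℝ}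

theorem modulus_le_mul_setIntegral_Ioi (hω : MonotoneOn ω (Set.Ici 0)) (hδ : 0 < δ)
    (hint : IntegrableOn (fun s ↦ ω s / s ^ 2) (Set.Ioi δ)) :
    ω δ ≤ δ * ∫ s in Set.Ioi δ, ω s / s ^ 2 := by
  have hpow : Set.EqOn (fun s : ℝ ↦ ω δ * s ^ (-2 : ℝ)) (fun s ↦ ω δ / s ^ 2) (Set.Ioi δ) :=
    fun s hs ↦ by
      simp only [Real.rpow_neg (hδ.trans hs).le, Real.rpow_ofNat, div_eq_mul_inv]
  have hconst : IntegrableOn (fun s ↦ ω δ / s ^ 2) (Set.Ioi δ) :=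
    IntegrableOn.congr_fun ((integrableOn_Ioi_rpow_of_lt (by norm_num) hδ).const_mul _) hpow
      measurableSet_Ioi
  calc ω δ = δ * ∫ s in Set.Ioi δ, ω δ / s ^ 2 := by
        rw [← setIntegral_congr_fun measurableSet_Ioi hpow, integral_const_mul,
          integral_Ioi_rpow_of_lt (by norm_num) hδ, show (-2 : ℝ) + 1 = -1 by norm_num,
          Real.rpow_neg_one]
        field_simp
    _ ≤ δ * ∫ s in Set.Ioi δ, ω s / s ^ 2 := by
        refine mul_le_mul_of_nonneg_left ?_ hδ.le
        refine setIntegral_mono_on hconst hint measurableSet_Ioi fun s hs ↦ ?_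
        gcongr
        exact hω hδ.le (hδ.trans hs).le (le_of_lt hs)

theorem modulus_mul_halfPlanePoissonKernel_le (hω : MonotoneOn ω (Set.Ici 0))
    (hω₀ : ∀ s, 0 ≤ s → 0 ≤ ω s) (hδ : 0 < δ) (x t : ℝ) :
    ω |x - t| * halfPlanePoissonKernel (x + δ * I) t ≤
      ω δ * halfPlanePoissonKernel (x + δ * I) t +
        δ * (Set.Ioi δ).indicator (fun s ↦ ω s / s ^ 2) |x - t| := by
  have hP : 0 ≤ halfPlanePoissonKernel (x + δ * I) t := halfPlanePoissonKernel_nonneg hδ.le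
  rcases le_or_gt |x - t| δ with hle | hlt
  · rw [Set.indicator_of_notMem (by simpa using hle), mul_zero, add_zero]
    exact mul_le_mul_of_nonneg_right (hω (Set.mem_Ici.2 (abs_nonneg _)) hδ.le hle) hP
  · have hxt : x ≠ t := by rintro rfl; simp [hδ.not_gt] at hlt
    rw [Set.indicator_of_mem (by simpa using hlt), sq_abs]
    calc ω |x - t| * halfPlanePoissonKernel (x + δ * I) t
        ≤ ω |x - t| * (δ / (x - t) ^ 2) :=
          mul_le_mul_of_nonneg_left (halfPlanePoissonKernel_le_div_sq hδ.le hxt)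
            (hω₀ _ (abs_nonneg _))
      _ = δ * (ω |x - t| / (x - t) ^ 2) := by ring
      _ ≤ _ := le_add_of_nonneg_left (mul_nonneg (hω₀ δ hδ.le) hP)

theorem integral_indicator_Ioi_abs_sub {φ : ℝ → ℝ} (hδ : 0 ≤ δ) (t : ℝ) :
    ∫ x, (Set.Ioi δ).indicator φ |x - t| = 2 * ∫ s in Set.Ioi δ, φ s := by
  rw [integral_sub_right_eq_self (fun x ↦ (Set.Ioi δ).indicator φ |x|) t, integral_comp_abs,
    setIntegral_indicator measurableSet_Ioi, Set.Ioi_inter_Ioi, max_eq_right hδ]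

theorem indicator_Ioi_abs {φ : ℝ → ℝ} (hδ : 0 ≤ δ) (y : ℝ) :
    (Set.Ioi δ).indicator φ |y| = (Set.Ioi δ).indicator φ y + (Set.Ioi δ).indicator φ (-y) := by
  have hzero {u : ℝ} (hu : u ≤ 0) : (Set.Ioi δ).indicator φ u = 0 :=
    Set.indicator_of_notMem (Set.notMem_Ioi.2 (hu.trans hδ)) φ
  rcases le_total 0 y with hy | hy
  · rw [abs_of_nonneg hy, hzero (neg_nonpos.2 hy), add_zero]
  · rw [abs_of_nonpos hy, hzero hy, zero_add]

theorem integrable_indicator_Ioi_abs_sub {φ : ℝ → ℝ} (hδ : 0 ≤ δ)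
    (hφ : IntegrableOn φ (Set.Ioi δ)) (t : ℝ) :
    Integrable fun x ↦ (Set.Ioi δ).indicator φ |x - t| := by
  simp only [indicator_Ioi_abs hδ]
  have hind : Integrable ((Set.Ioi δ).indicator φ) := hφ.integrable_indicator measurableSet_Ioi
  exact (hind.add hind.comp_neg).comp_sub_right t

theorem abs_sub_averageExtension_mul_halfPlanePoissonKernel_le (hf : Continuous f)
    (hω : MonotoneOn ω (Set.Ici 0)) (hmod : ∀ x y, |f x - f y| ≤ ω |x - y|) (hδ : 0 < δ)
    (x t : ℝ) :
    |(f t - averageExtension f (x + δ * I)) * halfPlanePoissonKernel (x + δ * I) t| ≤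
      2 * ω δ * halfPlanePoissonKernel (x + δ * I) t +
        δ * (Set.Ioi δ).indicator (fun s ↦ ω s / s ^ 2) |x - t| := by
  have hP : 0 ≤ halfPlanePoissonKernel (x + δ * I) t := halfPlanePoissonKernel_nonneg hδ.le
  have havg : |f t - averageExtension f (x + δ * I)| ≤ ω δ + ω |x - t| := by
    rw [abs_sub_comm]
    simpa using abs_averageExtension_sub_le_add (z := x + δ * I) hω hmod hf (by simpa using hδ.le) t
  calc |(f t - averageExtension f (x + δ * I)) * halfPlanePoissonKernel (x + δ * I) t|
      ≤ (ω δ + ω |x - t|) * halfPlanePoissonKernel (x + δ * I) t := by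
        rw [abs_mul, abs_of_nonneg hP]
        gcongr
    _ ≤ _ := by
        linarith [modulus_mul_halfPlanePoissonKernel_le hω (fun s ↦ modulus_nonneg hω hmod) hδ x t]

theorem sub_inv_pi_mul_integral_mul_halfPlanePoissonKernel {U : ℝ → ℝ} {c : ℝ} (hδ : 0 < δ) (t : ℝ)
    (hint : Integrable fun x : ℝ ↦ (c - U x) * halfPlanePoissonKernel (x + δ * I) t) :
    c - Real.pi⁻¹ * ∫ x : ℝ, U x * halfPlanePoissonKernel (x + δ * I) t =
      Real.pi⁻¹ * ∫ x : ℝ, (c - U x) * halfPlanePoissonKernel (x + δ * I) t := by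
  have hsub (x : ℝ) : U x * halfPlanePoissonKernel (x + δ * I) t =
      c * halfPlanePoissonKernel (x + δ * I) t -
        (c - U x) * halfPlanePoissonKernel (x + δ * I) t := by ring
  simp only [hsub]
  rw [integral_sub ((integrable_halfPlanePoissonKernel hδ.ne' t).const_mul c) hint,
    integral_const_mul, integral_halfPlanePoissonKernel hδ]
  field_simp
  ring

theorem abs_sub_integral_averageExtension_mul_le (hf : Continuous f)
    (hω : MonotoneOn ω (Set.Ici 0)) (hmod : ∀ x y, |f x - f y| ≤ ω |x - y|) (hδ : 0 < δ)
    (hint : IntegrableOn (fun s ↦ ω s / s ^ 2) (Set.Ioi δ)) (t : ℝ) :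
    |f t - Real.pi⁻¹ * ∫ x : ℝ, averageExtension f (x + δ * I) *
        halfPlanePoissonKernel (x + δ * I) t| ≤ 3 * (δ * ∫ s in Set.Ioi δ, ω s / s ^ 2) := by
  set J := ∫ s in Set.Ioi δ, ω s / s ^ 2
  have hωJ : ω δ ≤ δ * J := modulus_le_mul_setIntegral_Ioi hω hδ hint
  have hJ : 0 ≤ δ * J := (modulus_nonneg hω hmod hδ.le).trans hωJ
  have hP := (integrable_halfPlanePoissonKernel hδ.ne' t).const_mul (2 * ω δ)
  have htail := (integrable_indicator_Ioi_abs_sub hδ.le hint t).const_mul δ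
  have hpt := abs_sub_averageExtension_mul_halfPlanePoissonKernel_le hf hω hmod hδ (t := t)
  have hmeas : Continuous fun x : ℝ ↦
      (f t - averageExtension f (x + δ * I)) * halfPlanePoissonKernel (x + δ * I) t :=
    (continuous_const.sub ((continuous_averageExtension hf).comp (by fun_prop))).mul
      ((continuous_halfPlanePoissonKernel hδ).comp (Continuous.prodMk_left t))
  have hdiff : Integrable fun x : ℝ ↦
      (f t - averageExtension f (x + δ * I)) * halfPlanePoissonKernel (x + δ * I) t :=
    (hP.add htail).mono' hmeas.aestronglyMeasurable (ae_of_all _ hpt)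
  rw [sub_inv_pi_mul_integral_mul_halfPlanePoissonKernel hδ t hdiff, abs_mul,
    abs_of_pos (inv_pos.2 Real.pi_pos), inv_mul_le_iff₀ Real.pi_pos]
  calc ‖∫ x : ℝ, (f t - averageExtension f (x + δ * I)) * halfPlanePoissonKernel (x + δ * I) t‖
      ≤ 2 * ω δ * Real.pi + δ * (2 * J) := by
        rw [← integral_halfPlanePoissonKernel hδ t, ← integral_indicator_Ioi_abs_sub hδ.le t,
          ← integral_const_mul, ← integral_const_mul, ← integral_add hP htail]
        exact norm_integral_le_of_norm_le (hP.add htail) (ae_of_all _ hpt)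
    _ ≤ Real.pi * (3 * (δ * J)) := by
        nlinarith [Real.pi_gt_three, Real.pi_pos]

end Approximation

section OperatorEstimate

open Complex

variable {H : Type*} [NormedAddCommGroup H] [InnerProductSpace ℂ H] [CompleteSpace H]
  {A B : H →L[ℂ] H} {f ω : ℝ → ℝ} {δ : ℝ}

theorem norm_cfc_integral_averageExtension_sub_le (hf : Continuous f)
    (hsupp : HasCompactSupport f) (hω : MonotoneOn ω (Set.Ici 0))
    (hmod : ∀ x y, |f x - f y| ≤ ω |x - y|) (hδ : 0 < δ)
    (hint : IntegrableOn (fun s ↦ ω s / s ^ 2) (Set.Ioi δ)) (hA : IsSelfAdjoint A)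
    (hB : IsSelfAdjoint B) :
    ‖cfc (fun t ↦ ∫ x : ℝ, averageExtension f (x + δ * I) *
          halfPlanePoissonKernel (x + δ * I) t) A -
        cfc (fun t ↦ ∫ x : ℝ, averageExtension f (x + δ * I) *
          halfPlanePoissonKernel (x + δ * I) t) B‖ ≤
      2 * (Real.pi * ‖A - B‖) * ∫ s in Set.Ioi δ, ω s / s ^ 2 := by
  have hU : Continuous fun x : ℝ ↦ averageExtension f (x + δ * I) :=
    (continuous_averageExtension hf).comp (by fun_prop)
  have hUc := hasCompactSupport_averageExtension hsupp δ
  rw [cfc_integral_mul_halfPlanePoissonKernel hU hUc hA hδ,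
    cfc_integral_mul_halfPlanePoissonKernel hU hUc hB hδ, neg_sub_neg, norm_sub_rev,
    ← AddSubgroupClass.coe_sub, ← map_sub,
    ← integral_sub (integrable_smul_resolvent hU hUc hA hδ.ne')
      (integrable_smul_resolvent hU hUc hB hδ.ne')]
  simp only [← smul_sub]
  refine (imaginaryPart.norm_le (A := H →L[ℂ] H) _).trans ?_
  refine norm_integral_averageExtension_smul_le (T := fun z ↦ resolvent A z - resolvent B z) hf
    hsupp hω hmod hδ hint (fun z hz ↦ ?_) fun g M a b s hg hM hs ↦ ?_
  · exact (differentiableAt_resolvent hA hz.ne').sub (differentiableAt_resolvent hB hz.ne')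
  · exact norm_intervalIntegral_smul_resolvent_sub_resolvent_le hA hB hg hM a b hs

theorem norm_cfc_sub_cfc_le_of_hasCompactSupport (hf : Continuous f) (hsupp : HasCompactSupport f)
    (hω : MonotoneOn ω (Set.Ici 0)) (hmod : ∀ x y, |f x - f y| ≤ ω |x - y|) (hδ : 0 < δ)
    (hint : IntegrableOn (fun s ↦ ω s / s ^ 2) (Set.Ioi δ)) (hA : IsSelfAdjoint A)
    (hB : IsSelfAdjoint B) (hAB : ‖A - B‖ ≤ δ) :
    ‖cfc f A - cfc f B‖ ≤ 8 * (δ * ∫ s in Set.Ioi δ, ω s / s ^ 2) := by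
  set J := ∫ s in Set.Ioi δ, ω s / s ^ 2
  have hJ₀ : 0 ≤ J := setIntegral_nonneg measurableSet_Ioi fun s hs ↦
    div_nonneg (modulus_nonneg hω hmod (hδ.trans hs).le) (sq_nonneg s)
  have hU : Continuous fun x : ℝ ↦ averageExtension f (x + δ * I) :=
    (continuous_averageExtension hf).comp (by fun_prop)
  have hUc := hasCompactSupport_averageExtension hsupp δ
  set ψ : ℝ → ℝ := fun t ↦ ∫ x : ℝ, averageExtension f (x + δ * I) *
    halfPlanePoissonKernel (x + δ * I) t
  have hψ : Continuous ψ := continuous_integral_weighted_halfPlanePoissonKernel hU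
    (hU.integrable_of_hasCompactSupport hUc) hδ
  have happrox {T : H →L[ℂ] H} : ‖cfc f T - Real.pi⁻¹ • cfc ψ T‖ ≤ 3 * (δ * J) := by
    rw [← cfc_smul _ ψ T, ← cfc_sub f _ T]
    exact norm_cfc_le (by positivity) fun t _ ↦
      abs_sub_integral_averageExtension_mul_le hf hω hmod hδ hint t
  have hsmooth : ‖Real.pi⁻¹ • (cfc ψ A - cfc ψ B)‖ ≤ 2 * (δ * J) := by
    rw [norm_smul, Real.norm_of_nonneg (by positivity), inv_mul_le_iff₀ Real.pi_pos]
    calc ‖cfc ψ A - cfc ψ B‖ ≤ 2 * (Real.pi * ‖A - B‖) * J :=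
          norm_cfc_integral_averageExtension_sub_le hf hsupp hω hmod hδ hint hA hB
      _ ≤ 2 * (Real.pi * δ) * J := by gcongr
      _ = Real.pi * (2 * (δ * J)) := by ring
  calc ‖cfc f A - cfc f B‖
      = ‖(cfc f A - Real.pi⁻¹ • cfc ψ A) + Real.pi⁻¹ • (cfc ψ A - cfc ψ B) -
          (cfc f B - Real.pi⁻¹ • cfc ψ B)‖ := by
        congr 1
        module
    _ ≤ 3 * (δ * J) + 2 * (δ * J) + 3 * (δ * J) :=
        norm_sub_le_of_le (norm_add_le_of_le happrox hsmooth) happrox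
    _ = 8 * (δ * J) := by ring

end OperatorEstimate

section Truncation

/-- The `1`-Lipschitz map which is the identity on `[-R, R]` and takes the value `R` outside
`[-3R, R]`. Composing `f` with it and subtracting `f R` yields a compactly supported function with
the same modulus of continuity which differs from `f` by a constant on `[-R, R]`. -/
def foldedClamp (R x : ℝ) : ℝ := min R (|x + R| - R)

variable {f ω : ℝ → ℝ} {R x : ℝ}

theorem continuous_foldedClamp (R : ℝ) : Continuous (foldedClamp R) := by
  unfold foldedClamp
  fun_prop

theorem abs_foldedClamp_sub_le (R x y : ℝ) : |foldedClamp R x - foldedClamp R y| ≤ |x - y| := by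
  refine (abs_min_sub_min_le_max _ _ _ _).trans (max_le (by simp) ?_)
  simpa using abs_abs_sub_abs_le_abs_sub (x + R) (y + R)

theorem foldedClamp_of_abs_le (hx : |x| ≤ R) : foldedClamp R x = x := by
  obtain ⟨hlower, hupper⟩ := abs_le.1 hx
  rw [foldedClamp, abs_of_nonneg (by linarith), add_sub_cancel_right, min_eq_right hupper]

theorem foldedClamp_of_three_mul_lt_abs (hR : 0 ≤ R) (hx : 3 * R < |x|) : foldedClamp R x = R := by
  refine min_eq_left ?_
  rcases lt_abs.1 hx with h | h
  · linarith [le_abs_self (x + R)]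
  · linarith [neg_abs_le (x + R)]

theorem exists_hasCompactSupport_eqOn_add_const (hf : Continuous f)
    (hω : MonotoneOn ω (Set.Ici 0)) (hmod : ∀ x y, |f x - f y| ≤ ω |x - y|) (hR : 0 ≤ R) :
    ∃ (g : ℝ → ℝ) (c : ℝ), Continuous g ∧ HasCompactSupport g ∧
      (∀ x y, |g x - g y| ≤ ω |x - y|) ∧ ∀ x, |x| ≤ R → f x = g x + c := by
  refine ⟨fun x ↦ f (foldedClamp R x) - f R, f R,
    (hf.comp (continuous_foldedClamp R)).sub continuous_const, ?_, fun x y ↦ ?_, fun x hx ↦ ?_⟩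
  · refine .intro (K := Set.Icc (-(3 * R)) (3 * R)) isCompact_Icc fun x hx ↦ ?_
    rw [foldedClamp_of_three_mul_lt_abs hR (not_le.1 (mt abs_le.1 hx)), sub_self]
  · rw [sub_sub_sub_cancel_right]
    exact (hmod _ _).trans (hω (Set.mem_Ici.2 (abs_nonneg _)) (Set.mem_Ici.2 (abs_nonneg _))
      (abs_foldedClamp_sub_le R x y))
  · simp only [foldedClamp_of_abs_le hx, sub_add_cancel]

end Truncation

theorem continuous_of_abs_sub_le_modulus {f ω : ℝ → ℝ} (hω : ContinuousOn ω (Set.Ici 0))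
    (hω₀ : ω 0 = 0) (hmod : ∀ x y, |f x - f y| ≤ ω |x - y|) : Continuous f := by
  refine continuous_iff_continuousAt.2 fun x ↦ tendsto_iff_dist_tendsto_zero.2 ?_
  have hcomp : Continuous fun y ↦ ω |y - x| :=
    hω.comp_continuous (by fun_prop) fun y ↦ Set.mem_Ici.2 (abs_nonneg _)
  exact squeeze_zero (fun y ↦ dist_nonneg) (fun y ↦ hmod y x)
    (by simpa [hω₀] using hcomp.tendsto x)

section Main

variable {H : Type*} [NormedAddCommGroup H] [InnerProductSpace ℂ H] [CompleteSpace H]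
  {A B : H →L[ℂ] H} {f ω : ℝ → ℝ}

theorem norm_cfc_sub_cfc_le (hA : IsSelfAdjoint A) (hB : IsSelfAdjoint B) (hf : Continuous f)
    (hω : MonotoneOn ω (Set.Ici 0)) (hmod : ∀ x y, |f x - f y| ≤ ω |x - y|) {δ : ℝ} (hδ : 0 < δ)
    (hAB : ‖A - B‖ ≤ δ) (hint : IntegrableOn (fun t ↦ ω t / t ^ 2) (Set.Ioi δ)) :
    ‖cfc f A - cfc f B‖ ≤ 8 * (δ * ∫ t in Set.Ioi δ, ω t / t ^ 2) := by
  obtain ⟨g, c, hg, hsupp, hgmod, hfg⟩ :=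
    exists_hasCompactSupport_eqOn_add_const hf hω hmod
      (le_max_of_le_left (norm_nonneg A) : 0 ≤ max ‖A‖ ‖B‖)
  have hcfc {T : H →L[ℂ] H} (hT : IsSelfAdjoint T) (hTR : ‖T‖ ≤ max ‖A‖ ‖B‖) :
      cfc f T = cfc g T + algebraMap ℝ (H →L[ℂ] H) c := by
    nontriviality H →L[ℂ] H
    rw [← cfc_add_const c g T]
    exact cfc_congr fun t ht ↦ hfg t ((spectrum.norm_le_norm_of_mem ht).trans hTR)
  rw [hcfc hA (le_max_left _ _), hcfc hB (le_max_right _ _), add_sub_add_right_eq_sub]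
  exact norm_cfc_sub_cfc_le_of_hasCompactSupport hg hsupp hω hgmod hδ hint hA hB hAB

theorem stmt_7_general (hA : IsSelfAdjoint A) (hB : IsSelfAdjoint B) (hAB : A ≠ B)
    (hf : Continuous f) (hω : MonotoneOn ω (Set.Ici 0)) {L : ℝ} (hL : 0 ≤ L)
    (hmod : ∀ x y, |f x - f y| ≤ L * ω |x - y|)
    (hint : IntegrableOn (fun t ↦ ω t / t ^ 2) (Set.Ioi ‖A - B‖)) :
    ‖cfc f A - cfc f B‖ ≤ 8 * L * (‖A - B‖ * ∫ t in Set.Ioi ‖A - B‖, ω t / t ^ 2) := by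
  have hωL : MonotoneOn (fun t ↦ L * ω t) (Set.Ici 0) := fun _ hx _ hy hxy ↦
    mul_le_mul_of_nonneg_left (hω hx hy hxy) hL
  have hintL : IntegrableOn (fun t ↦ L * ω t / t ^ 2) (Set.Ioi ‖A - B‖) := by
    simpa only [mul_div_assoc, IntegrableOn] using hint.const_mul L
  calc ‖cfc f A - cfc f B‖ ≤ 8 * (‖A - B‖ * ∫ t in Set.Ioi ‖A - B‖, L * ω t / t ^ 2) :=
        norm_cfc_sub_cfc_le hA hB hf hωL hmod (norm_sub_pos_iff.2 hAB) le_rfl hintL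
    _ = 8 * L * (‖A - B‖ * ∫ t in Set.Ioi ‖A - B‖, ω t / t ^ 2) := by
        simp only [mul_div_assoc, integral_const_mul]
        ring

end Main

/-- There is a numerical constant `c > 0` such that: for every modulus of
continuity `ω` (continuous and nondecreasing on `[0,∞)`, `ω 0 = 0`, `ω x > 0`
for `x > 0`, subadditive) with `t ↦ ω t / t²` integrable on `(x, ∞)` for every
`x > 0`, every `L ≥ 0`, every `f : ℝ → ℝ` with `|f x - f y| ≤ L * ω |x - y|`,
and all distinct bounded self-adjoint operators `A`, `B` on a complex Hilbert
space, `‖f(A) - f(B)‖ ≤ c * L * ω_*(‖A - B‖)`, where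
`ω_* x = x * ∫_x^∞ ω t / t² dt`. -/
theorem stmt_7 :
    ∃ c : ℝ, 0 < c ∧
      ∀ ω : ℝ → ℝ,
        ContinuousOn ω (Set.Ici 0) → MonotoneOn ω (Set.Ici 0) → ω 0 = 0 →
        (∀ x : ℝ, 0 < x → 0 < ω x) →
        (∀ x y : ℝ, 0 ≤ x → 0 ≤ y → ω (x + y) ≤ ω x + ω y) →
        (∀ x : ℝ, 0 < x → IntegrableOn (fun t : ℝ => ω t / t ^ 2) (Set.Ioi x)) →
        ∀ L : ℝ, 0 ≤ L →
          ∀ f : ℝ → ℝ, (∀ x y : ℝ, |f x - f y| ≤ L * ω |x - y|) →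
            ∀ (H : Type) [NormedAddCommGroup H] [InnerProductSpace ℂ H] [CompleteSpace H]
              (A B : H →L[ℂ] H), IsSelfAdjoint A → IsSelfAdjoint B → A ≠ B →
              ‖cfc f A - cfc f B‖ ≤
                c * L * (‖A - B‖ * ∫ t in Set.Ioi ‖A - B‖, ω t / t ^ 2) := by
  refine ⟨8, by norm_num, fun ω hcont hmono hzero _ _ hint L hL f hmod H _ _ _ A B hA hB hAB ↦ ?_⟩
  have hf : Continuous f :=
    continuous_of_abs_sub_le_modulus (continuousOn_const.mul hcont) (by simp [hzero]) hmod
  exact stmt_7_general hA hB hAB hf hmono hL hmod (hint _ (norm_sub_pos_iff.2 hAB))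
end

section
/- Operator Hölder estimate for normal operators: There exists a constant c > 0 such that for every α ∈ (0,1), every L ≥ 0, every function f : ℂ → ℂ satisfying |f(z) − f(w)| ≤ L·|z − w|^α for all z, w ∈ ℂ (Hölder of order α on ℝ² ≅ ℂ), and all bounded normal operators N₁ and N₂ on a complex Hilbert space, ‖f(N₁) − f(N₂)‖ ≤ c·(1 − α)^{−1}·L·‖N₁ − N₂‖^α. -/
/-!
The core is a Bernstein inequality: if `|u| ≤ M`, then the Gaussian average of `u` at scale `t`
changes by at most `8πM‖a - b‖ / t` between normal elements `a` and `b`. These need not commute, so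
one works with the relative phases `W ζ = e^{2πi⟨ζ, a⟩} e^{-2πi⟨ζ, b⟩}`, which satisfy
`e^{2πi⟨η, a⟩} W ζ = W (η + ζ) e^{2πi⟨η, b⟩}` and `‖1 - W ζ‖ ≤ 2π|ζ|‖a - b‖`. Averaging against a
Gaussian `ψ` gives `(∫ ψ W) v(b) = ∫ v_ζ(a) W ζ dζ`, where `v_ζ` has Fourier transform
`ψ(· + ζ) 𝓕 v`. When `v` is a Gaussian average of `u`, completing the square shows that
`sup |v_ζ| ≤ M k(ζ)` for a Gaussian `k`, and comparing with the case `W = 1` bounds `v(a) - v(b)`.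

Let `P t` denote Gaussian averaging at scale `t` and let `F` be `α`-Hölder. Then
`P t F - P (√2 t) F = P t (F - P t F)`, and `|F - P t F| ≤ L t ^ α`. Summing the Bernstein
inequality over the scales `‖a - b‖ √2 ^ k` gives a geometric series of ratio `√2 ^ (α - 1)`, hence
the factor `(1 - α)⁻¹`.
-/

namespace OperatorHolder

open MeasureTheory Filter Topology ComplexConjugate FourierTransform Convolution
open scoped ComplexInnerProductSpace ComplexStarModule Real

section FourierTransform

variable {V : Type*} [NormedAddCommGroup V] [InnerProductSpace ℝ V] [FiniteDimensional ℝ V]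
  [MeasurableSpace V] [BorelSpace V] {k u : V → ℂ}

lemma fourier_const_smul (c : ℂ) (k : V → ℂ) : 𝓕 (c • k) = c • 𝓕 k :=
  VectorFourier.fourierIntegral_const_smul ..

lemma fourier_fourierChar_smul (k : V → ℂ) (w ξ : V) :
    𝓕 (fun v => 𝐞 (-inner ℝ v w) • k v) ξ = 𝓕 k (ξ + w) := by
  simp only [Real.fourier_eq, smul_smul, ← AddChar.map_add_eq_mul, ← neg_add, inner_add_right]

lemma norm_convolution_le (hk : Integrable k) {M : ℝ} (hM : ∀ z, ‖u z‖ ≤ M) (z : V) :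
    ‖(k ⋆[.mul ℂ ℂ] u) z‖ ≤ (∫ v, ‖k v‖) * M := by
  rw [convolution_mul, ← integral_mul_const]
  refine norm_integral_le_of_norm_le (hk.norm.mul_const M) (ae_of_all _ fun v => ?_)
  rw [norm_mul]
  gcongr
  exact hM _

lemma continuous_convolution (hk : Integrable k) (hu : Continuous u) {M : ℝ}
    (hM : ∀ z, ‖u z‖ ≤ M) : Continuous (k ⋆[.mul ℂ ℂ] u) :=
  BddAbove.continuous_convolution_right_of_integrable _
    ⟨M, by rintro _ ⟨z, rfl⟩; exact hM z⟩ hk hu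

lemma continuous_fourier_of_integrable (hu : Integrable u) : Continuous (𝓕 u) :=
  VectorFourier.fourierIntegral_continuous Real.continuous_fourierChar
    (by simp only [innerₗ_apply_apply]; fun_prop) hu

lemma integrable_fourier_mul_fourier (hk : Integrable (𝓕 k)) (hu : Integrable u) :
    Integrable fun ξ => 𝓕 k ξ * 𝓕 u ξ :=
  hk.mul_bdd (continuous_fourier_of_integrable hu).aestronglyMeasurable
    (ae_of_all _ (VectorFourier.norm_fourierIntegral_le_integral_norm _ _ _ u))

lemma fourierInv_fourier_mul_fourier (hk : Integrable k) (hk' : Integrable (𝓕 k))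
    (hu : Integrable u) (huc : Continuous u) {M : ℝ} (hM : ∀ z, ‖u z‖ ≤ M) :
    𝓕⁻ (fun ξ => 𝓕 k ξ * 𝓕 u ξ) = k ⋆[.mul ℂ ℂ] u := by
  have fourier_convolution : 𝓕 (k ⋆[.mul ℂ ℂ] u) = fun ξ => 𝓕 k ξ * 𝓕 u ξ :=
    funext (Real.fourier_mul_convolution_eq hk hu)
  rw [← fourier_convolution]
  refine (continuous_convolution hk huc hM).fourierInv_fourier_eq
    (hk.integrable_convolution _ hu) ?_
  rw [fourier_convolution]
  exact integrable_fourier_mul_fourier hk' hu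

lemma integrable_shear_mul {G 𝕜 : Type*} [AddGroup G] [MeasurableSpace G] [MeasurableAdd₂ G]
    [NormedCommRing 𝕜] {μ : Measure G} [SFinite μ] [μ.IsAddLeftInvariant] {Θ ψ : G → 𝕜}
    (hΘ : Integrable Θ μ) (hψ : Integrable ψ μ) :
    Integrable (fun p : G × G => ψ (p.1 + p.2) * Θ p.1) (μ.prod μ) := by
  simpa only [mul_comm] using!
    (measurePreserving_prod_add μ μ).integrable_comp_of_integrable (hΘ.mul_prod hψ)

end FourierTransform

section Gaussian

/-- The Gaussian probability density of width `t` on `ℂ ≅ ℝ²`, complex-valued so that it can be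
fed to `𝓕`. -/
noncomputable def gaussianKernel (t : ℝ) (z : ℂ) : ℂ :=
  ((t ^ 2)⁻¹ * Real.exp (-(π / t ^ 2) * ‖z‖ ^ 2) : ℝ)

variable {t : ℝ}

lemma continuous_gaussianKernel (t : ℝ) : Continuous (gaussianKernel t) := by
  unfold gaussianKernel
  fun_prop

lemma norm_gaussianKernel (t : ℝ) (z : ℂ) :
    ‖gaussianKernel t z‖ = (t ^ 2)⁻¹ * Real.exp (-(π / t ^ 2) * ‖z‖ ^ 2) :=
  Complex.norm_of_nonneg (by positivity)

lemma fourier_gaussianKernel (ht : 0 < t) (ξ : ℂ) :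
    𝓕 (gaussianKernel t) ξ = (Real.exp (-(π * t ^ 2) * ‖ξ‖ ^ 2) : ℝ) := by
  have re_pos : 0 < ((π / t ^ 2 : ℝ) : ℂ).re := by simp only [Complex.ofReal_re]; positivity
  have kernel_eq : gaussianKernel t = ((t : ℂ) ^ 2)⁻¹ •
      fun z : ℂ => Complex.exp (-((π / t ^ 2 : ℝ) : ℂ) * ‖z‖ ^ 2) := by
    ext z
    simp [gaussianKernel]
  have t_ne_zero : (t : ℂ) ≠ 0 := mod_cast ht.ne'
  rw [kernel_eq, fourier_const_smul, Pi.smul_apply, fourier_gaussian_innerProductSpace re_pos]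
  simp
  field_simp

lemma integral_gaussianKernel (ht : 0 < t) : ∫ z, gaussianKernel t z = 1 := by
  simpa [Real.fourier_eq] using fourier_gaussianKernel ht 0

lemma integrable_gaussianKernel (ht : 0 < t) : Integrable (gaussianKernel t) :=
  .of_integral_ne_zero (by simp [integral_gaussianKernel ht])

lemma fourier_gaussianKernel_eq_gaussianKernel_inv (ht : 0 < t) (ξ : ℂ) :
    𝓕 (gaussianKernel t) ξ = (t ^ 2)⁻¹ * gaussianKernel t⁻¹ ξ := by
  rw [fourier_gaussianKernel ht, gaussianKernel]
  norm_cast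
  field_simp

lemma integrable_fourier_gaussianKernel (ht : 0 < t) : Integrable (𝓕 (gaussianKernel t)) := by
  simp only [funext (fourier_gaussianKernel_eq_gaussianKernel_inv ht)]
  exact (integrable_gaussianKernel (inv_pos.2 ht)).const_mul _

lemma integral_norm_gaussianKernel (ht : 0 < t) : ∫ z, ‖gaussianKernel t z‖ = 1 := by
  have coe_norm (z : ℂ) : (‖gaussianKernel t z‖ : ℂ) = gaussianKernel t z := by
    rw [norm_gaussianKernel, gaussianKernel]
  exact_mod_cast (by simp only [coe_norm, integral_gaussianKernel ht] :
    ∫ z, (‖gaussianKernel t z‖ : ℂ) = 1)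

lemma Gamma_one_add_le_one {x : ℝ} (hx₀ : 0 ≤ x) (hx₁ : x ≤ 1) : Real.Gamma (1 + x) ≤ 1 := by
  have := Real.convexOn_Gamma.2 (Set.mem_Ioi.2 one_pos) (Set.mem_Ioi.2 two_pos)
    (sub_nonneg.2 hx₁) hx₀ (sub_add_cancel 1 x)
  convert! this using 2
  · simp; ring
  · simp

lemma integral_norm_rpow_mul_norm_gaussianKernel (ht : 0 < t) {α : ℝ} (hα : 0 ≤ α) :
    ∫ z, ‖z‖ ^ α * ‖gaussianKernel t z‖ =
      (t / √π) ^ α * Real.Gamma (1 + α / 2) := by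
  have b_pos : 0 < π / t ^ 2 := by positivity
  calc ∫ z, ‖z‖ ^ α * ‖gaussianKernel t z‖
    _ = (t ^ 2)⁻¹ * ∫ z : ℂ, ‖z‖ ^ α * Real.exp (-(π / t ^ 2) * ‖z‖ ^ (2 : ℝ)) := by
      rw [← integral_const_mul]
      congr! 2 with _
      rw [norm_gaussianKernel, Real.rpow_two]
      ring
    _ = (t ^ 2)⁻¹ * (π * (π / t ^ 2) ^ (-(α + 2) / 2) * Real.Gamma (1 + α / 2)) := by
      rw [Complex.integral_rpow_mul_exp_neg_mul_rpow one_le_two (by linarith) b_pos]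
      congr 2
      · ring
      · congr 1; ring
    _ = (t / √π) ^ α * Real.Gamma (1 + α / 2) := by
      have : (π / t ^ 2) ^ (-(α + 2) / 2) = (t / √π) ^ α * (t ^ 2 / π) := by
        have : π / t ^ 2 = (t / √π) ^ (-2 : ℝ) := by
          rw [Real.rpow_neg (by positivity), Real.rpow_two, div_pow, Real.sq_sqrt Real.pi_pos.le,
            inv_div]
        rw [this, ← Real.rpow_mul (by positivity), show -2 * (-(α + 2) / 2) = α + 2 by ring,
          Real.rpow_add (by positivity), Real.rpow_two, div_pow, Real.sq_sqrt Real.pi_pos.le]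
      rw [this]
      field_simp

lemma integrable_norm_rpow_mul_norm_gaussianKernel (ht : 0 < t) {α : ℝ} (hα : 0 ≤ α) :
    Integrable fun z => ‖z‖ ^ α * ‖gaussianKernel t z‖ := by
  refine .of_integral_ne_zero ?_
  rw [integral_norm_rpow_mul_norm_gaussianKernel ht hα]
  have := Real.Gamma_pos_of_pos (by positivity : 0 < 1 + α / 2)
  positivity

lemma integral_norm_rpow_mul_norm_gaussianKernel_le (ht : 0 < t) {α : ℝ} (hα₀ : 0 ≤ α)
    (hα₁ : α ≤ 1) :
    ∫ z, ‖z‖ ^ α * ‖gaussianKernel t z‖ ≤ t ^ α := by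
  have div_sqrt_pi_le : t / √π ≤ t :=
    div_le_self ht.le (Real.one_le_sqrt.2 (by linarith [Real.pi_gt_three]))
  rw [integral_norm_rpow_mul_norm_gaussianKernel ht hα₀]
  calc (t / √π) ^ α * Real.Gamma (1 + α / 2)
    _ ≤ t ^ α * 1 := by
      gcongr
      exact Gamma_one_add_le_one (by linarith) (by linarith)
    _ = t ^ α := mul_one _

lemma integrable_norm_mul_norm_gaussianKernel (ht : 0 < t) :
    Integrable fun z => ‖z‖ * ‖gaussianKernel t z‖ := by
  simpa only [Real.rpow_one] using integrable_norm_rpow_mul_norm_gaussianKernel ht zero_le_one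

lemma integral_norm_mul_norm_gaussianKernel_le (ht : 0 < t) :
    ∫ z, ‖z‖ * ‖gaussianKernel t z‖ ≤ t := by
  simpa only [Real.rpow_one] using
    integral_norm_rpow_mul_norm_gaussianKernel_le ht zero_le_one le_rfl

end Gaussian

section GaussianSmoothing

variable {t : ℝ} {u : ℂ → ℂ} {M : ℝ}

/-- The average of `u` at scale `t`, that is, its convolution with the Gaussian of width `t`. -/
noncomputable def gaussianSmoothing (t : ℝ) (u : ℂ → ℂ) : ℂ → ℂ :=
  gaussianKernel t ⋆[.mul ℂ ℂ] u

lemma norm_gaussianSmoothing_le (ht : 0 < t) (hM : ∀ z, ‖u z‖ ≤ M) (z : ℂ) :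
    ‖gaussianSmoothing t u z‖ ≤ M := by
  simpa [gaussianSmoothing, integral_norm_gaussianKernel ht] using
    norm_convolution_le (integrable_gaussianKernel ht) hM z

lemma continuous_gaussianSmoothing (ht : 0 < t) (hu : Continuous u) (hM : ∀ z, ‖u z‖ ≤ M) :
    Continuous (gaussianSmoothing t u) :=
  continuous_convolution (integrable_gaussianKernel ht) hu hM

lemma integrable_gaussianSmoothing (ht : 0 < t) (hu : Integrable u) :
    Integrable (gaussianSmoothing t u) :=
  (integrable_gaussianKernel ht).integrable_convolution _ hu

lemma fourier_gaussianSmoothing (ht : 0 < t) (hu : Integrable u) :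
    𝓕 (gaussianSmoothing t u) = fun ξ => 𝓕 (gaussianKernel t) ξ * 𝓕 u ξ :=
  funext (Real.fourier_mul_convolution_eq (integrable_gaussianKernel ht) hu)

lemma gaussianSmoothing_eq_fourierInv (ht : 0 < t) (hu : Integrable u) (huc : Continuous u)
    (hM : ∀ z, ‖u z‖ ≤ M) :
    gaussianSmoothing t u = 𝓕⁻ (fun ξ => 𝓕 (gaussianKernel t) ξ * 𝓕 u ξ) :=
  (fourierInv_fourier_mul_fourier (integrable_gaussianKernel ht)
    (integrable_fourier_gaussianKernel ht) hu huc hM).symm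

lemma gaussianSmoothing_gaussianSmoothing (ht : 0 < t) (hu : Integrable u) (huc : Continuous u)
    (hM : ∀ z, ‖u z‖ ≤ M) :
    gaussianSmoothing t (gaussianSmoothing t u) = gaussianSmoothing (√2 * t) u := by
  rw [gaussianSmoothing_eq_fourierInv ht (integrable_gaussianSmoothing ht hu)
      (continuous_gaussianSmoothing ht huc hM) (norm_gaussianSmoothing_le ht hM),
    fourier_gaussianSmoothing ht hu, gaussianSmoothing_eq_fourierInv (by positivity) hu huc hM]
  congr 1 with ξ
  rw [← mul_assoc, fourier_gaussianKernel ht, fourier_gaussianKernel (by positivity),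
    ← Complex.ofReal_mul, ← Real.exp_add, mul_pow, Real.sq_sqrt zero_le_two]
  congr 3
  ring

lemma integrable_gaussianKernel_mul_sub (ht : 0 < t) (huc : Continuous u) (hM : ∀ z, ‖u z‖ ≤ M)
    (z : ℂ) :
    Integrable fun v => gaussianKernel t v * u (z - v) :=
  (integrable_gaussianKernel ht).mul_bdd (by fun_prop) (ae_of_all _ fun v => hM (z - v))

lemma gaussianSmoothing_sub {v : ℂ → ℂ} {M' : ℝ} (ht : 0 < t) (huc : Continuous u)
    (hM : ∀ z, ‖u z‖ ≤ M) (hvc : Continuous v) (hM' : ∀ z, ‖v z‖ ≤ M') :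
    gaussianSmoothing t (u - v) = gaussianSmoothing t u - gaussianSmoothing t v := by
  ext z
  simp only [gaussianSmoothing, convolution_mul, Pi.sub_apply, mul_sub]
  exact integral_sub (integrable_gaussianKernel_mul_sub ht huc hM z)
    (integrable_gaussianKernel_mul_sub ht hvc hM' z)

lemma norm_sub_gaussianSmoothing_le (ht : 0 < t) (huc : Continuous u) (hM : ∀ z, ‖u z‖ ≤ M)
    {α L : ℝ} (hα₀ : 0 ≤ α) (hα₁ : α ≤ 1) (hL : 0 ≤ L)
    (hu : ∀ z w, ‖u z - u w‖ ≤ L * ‖z - w‖ ^ α) (z : ℂ) :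
    ‖u z - gaussianSmoothing t u z‖ ≤ L * t ^ α := by
  have eq_integral : u z - gaussianSmoothing t u z =
      ∫ v, gaussianKernel t v * (u z - u (z - v)) := by
    simp only [mul_sub]
    rw [integral_sub ((integrable_gaussianKernel ht).mul_const _)
      (integrable_gaussianKernel_mul_sub ht huc hM z), integral_mul_const,
      integral_gaussianKernel ht, one_mul, gaussianSmoothing, convolution_mul]
  calc ‖u z - gaussianSmoothing t u z‖
    _ ≤ ∫ v, L * (‖v‖ ^ α * ‖gaussianKernel t v‖) := by
      rw [eq_integral]
      refine norm_integral_le_of_norm_le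
        ((integrable_norm_rpow_mul_norm_gaussianKernel ht hα₀).const_mul L)
        (ae_of_all _ fun v => ?_)
      calc ‖gaussianKernel t v * (u z - u (z - v))‖
        _ ≤ ‖gaussianKernel t v‖ * (L * ‖z - (z - v)‖ ^ α) := by
          rw [norm_mul]
          gcongr
          exact hu z (z - v)
        _ = L * (‖v‖ ^ α * ‖gaussianKernel t v‖) := by rw [sub_sub_cancel]; ring
    _ ≤ L * t ^ α := by
      rw [integral_const_mul]
      gcongr
      exact integral_norm_rpow_mul_norm_gaussianKernel_le ht hα₀ hα₁

-- Complete the square: `|η + ζ|² + |η|² = 2 |η + ζ / 2|² + |ζ|² / 2`.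
lemma gaussianKernel_add_mul_fourier_gaussianKernel (ht : 0 < t) (η ζ : ℂ) :
    gaussianKernel t⁻¹ (η + ζ) * 𝓕 (gaussianKernel t) η =
      2 * gaussianKernel (√2 * t⁻¹) ζ * 𝓕 (gaussianKernel (√2 * t)) (η + ζ / 2) := by
  have complete_square : ‖η + ζ‖ ^ 2 + ‖η‖ ^ 2 = 2 * ‖η + ζ / 2‖ ^ 2 + ‖ζ‖ ^ 2 / 2 := by
    have := parallelogram_law_with_norm ℝ (η + ζ / 2) (ζ / 2)
    rw [add_assoc, add_halves, add_sub_cancel_right, norm_div] at this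
    simp only [Complex.norm_ofNat] at this
    linarith
  rw [fourier_gaussianKernel ht, fourier_gaussianKernel (by positivity), gaussianKernel,
    gaussianKernel]
  norm_cast
  simp only [mul_assoc, ← Real.exp_add, mul_pow, inv_pow, inv_inv, mul_inv,
    Real.sq_sqrt zero_le_two, ← mul_assoc (2 : ℝ), mul_inv_cancel₀ (two_ne_zero' ℝ), one_mul]
  congr 2
  generalize ‖η + ζ / 2‖ = m at complete_square ⊢
  field_simp
  linear_combination -2 * complete_square

lemma norm_fourierInv_gaussianKernel_add_mul_le (ht : 0 < t) (hu : Integrable u)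
    (huc : Continuous u) (hM : ∀ z, ‖u z‖ ≤ M) (ζ z : ℂ) :
    ‖𝓕⁻ (fun η => gaussianKernel t⁻¹ (η + ζ) * (𝓕 (gaussianKernel t) η * 𝓕 u η)) z‖ ≤
      2 * M * ‖gaussianKernel (√2 * t⁻¹) ζ‖ := by
  let k : ℂ → ℂ := (2 * gaussianKernel (√2 * t⁻¹) ζ) •
    fun v => 𝐞 (-inner ℝ v (ζ / 2)) • gaussianKernel (√2 * t) v
  have fourier_k (η : ℂ) :
      𝓕 k η = gaussianKernel t⁻¹ (η + ζ) * 𝓕 (gaussianKernel t) η := by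
    rw [gaussianKernel_add_mul_fourier_gaussianKernel ht, fourier_const_smul, Pi.smul_apply,
      fourier_fourierChar_smul, smul_eq_mul]
  have sqrt_two_mul_pos : 0 < √2 * t := by positivity
  have integrable_k : Integrable k :=
    ((Real.fourierIntegral_convergent_iff (ζ / 2)).2
      (integrable_gaussianKernel sqrt_two_mul_pos)).smul _
  have integrable_fourier_k : Integrable (𝓕 k) := by
    simp only [funext fourier_k, gaussianKernel_add_mul_fourier_gaussianKernel ht]
    exact ((integrable_fourier_gaussianKernel sqrt_two_mul_pos).comp_add_right _).const_mul _
  have integral_norm_k : ∫ v, ‖k v‖ = 2 * ‖gaussianKernel (√2 * t⁻¹) ζ‖ := by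
    simp [k, integral_const_mul, integral_norm_gaussianKernel sqrt_two_mul_pos]
  calc _ = ‖(k ⋆[.mul ℂ ℂ] u) z‖ := by
        rw [← fourierInv_fourier_mul_fourier integrable_k integrable_fourier_k hu huc hM]
        simp only [fourier_k, mul_assoc]
    _ ≤ (∫ v, ‖k v‖) * M := norm_convolution_le integrable_k hM z
    _ = 2 * M * ‖gaussianKernel (√2 * t⁻¹) ζ‖ := by rw [integral_norm_k]; ring

end GaussianSmoothing

section GeometricSum

lemma le_of_hasSum_of_le_add_succ {D b : ℕ → ℝ} {B : ℝ} (hD : ∀ n, D n ≤ b n + D (n + 1))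
    (hD₀ : Tendsto D atTop (𝓝 0)) (hb : HasSum b B) : D 0 ≤ B := by
  have partial_bound (n : ℕ) : D 0 - D n ≤ ∑ k ∈ Finset.range n, b k := by
    rw [← Finset.sum_range_sub']
    exact Finset.sum_le_sum fun k _ => sub_le_iff_le_add.2 (hD k)
  simpa using le_of_tendsto_of_tendsto' (hD₀.const_sub (D 0)) hb.tendsto_sum_nat partial_bound

lemma inv_one_sub_inv_sqrt_two_rpow_le {s : ℝ} (hs₀ : 0 < s) (hs₁ : s ≤ 1) :
    (1 - (√2)⁻¹ ^ s)⁻¹ ≤ 4 * s⁻¹ := by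
  have inv_sqrt_two_le : (√2)⁻¹ ≤ 3 / 4 :=
    inv_le_of_inv_le₀ (by norm_num) (Real.le_sqrt_of_sq_le (by norm_num))
  have bernoulli : (√2)⁻¹ ^ s ≤ 1 + s * ((√2)⁻¹ - 1) := by
    simpa using rpow_one_add_le_one_add_mul_self
      (by simp : -1 ≤ (√2)⁻¹ - 1) hs₀.le hs₁
  calc (1 - (√2)⁻¹ ^ s)⁻¹
    _ ≤ (s / 4)⁻¹ := by
      gcongr
      nlinarith
    _ = 4 * s⁻¹ := by rw [inv_div, div_eq_mul_inv]

lemma pow_mul_rpow_div_self {r t : ℝ} (hr : 0 < r) (ht : 0 < t) (α : ℝ) (k : ℕ) :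
    (r ^ k * t) ^ α / (r ^ k * t) = (r⁻¹ ^ (1 - α)) ^ k * (t ^ α / t) := by
  rw [← Real.rpow_sub_one (by positivity), ← Real.rpow_sub_one ht.ne',
    Real.mul_rpow (by positivity) ht.le, Real.inv_rpow hr.le, ← Real.rpow_neg hr.le, neg_sub,
    Real.rpow_pow_comm hr.le]

end GeometricSum

section Cutoff

lemma continuous_of_norm_sub_le_rpow {E G : Type*} [SeminormedAddCommGroup E]
    [SeminormedAddCommGroup G] {f : E → G} {α L : ℝ} (hα : 0 < α)
    (hf : ∀ x y, ‖f x - f y‖ ≤ L * ‖x - y‖ ^ α) : Continuous f := by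
  refine continuous_iff_continuousAt.2 fun x => tendsto_iff_norm_sub_tendsto_zero.2 ?_
  refine squeeze_zero (fun _ => norm_nonneg _) (hf · x) ?_
  have : Continuous fun y => L * ‖y - x‖ ^ α := by fun_prop (disch := simp [hα.le])
  simpa [hα.ne'] using this.tendsto x

variable {E G : Type*} [NormedAddCommGroup E] [NormedAddCommGroup G] [NormedSpace ℝ G]

lemma norm_smul_sub_smul_le_of_holder {f : E → G} {χ : E → ℝ} {α L R : ℝ} (hα₀ : 0 ≤ α)
    (hα₁ : α ≤ 1) (hL : 0 ≤ L) (hR : 0 < R) (hf : ∀ x y, ‖f x - f y‖ ≤ L * ‖x - y‖ ^ α)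
    (hf₀ : f 0 = 0) (hχ : ∀ x, χ x ∈ Set.Icc 0 1) (hχR : ∀ x y, |χ x - χ y| ≤ ‖x - y‖ / R)
    (hχ₀ : ∀ x, 2 * R ≤ ‖x‖ → χ x = 0) (x y : E) :
    ‖χ x • f x - χ y • f y‖ ≤ 3 * L * ‖x - y‖ ^ α := by
  wlog hy : ‖y‖ ≤ 2 * R generalizing x y
  · by_cases hx : ‖x‖ ≤ 2 * R
    · rw [norm_sub_rev, norm_sub_rev x y]
      exact this y x hx
    · rw [hχ₀ x (not_le.1 hx).le, hχ₀ y (not_le.1 hy).le, zero_smul, zero_smul, sub_zero, norm_zero]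
      positivity
  have abs_χ_sub_le : |χ x - χ y| ≤ (‖x - y‖ / R) ^ α := by
    have abs_le_one : |χ x - χ y| ≤ 1 :=
      abs_sub_le_of_nonneg_of_le (hχ x).1 (hχ x).2 (hχ y).1 (hχ y).2
    calc |χ x - χ y|
      _ ≤ |χ x - χ y| ^ α := Real.self_le_rpow_of_le_one (abs_nonneg _) abs_le_one hα₁
      _ ≤ (‖x - y‖ / R) ^ α := by gcongr; exact hχR x y
  have norm_f_le : ‖f y‖ ≤ L * (2 * R ^ α) := by
    calc ‖f y‖
      _ ≤ L * ‖y‖ ^ α := by simpa [hf₀] using hf y 0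
      _ ≤ L * (2 * R) ^ α := by gcongr
      _ = L * (2 ^ α * R ^ α) := by rw [Real.mul_rpow zero_le_two hR.le]
      _ ≤ L * (2 * R ^ α) := by
        gcongr
        exact Real.rpow_le_self_of_one_le one_le_two hα₁
  calc ‖χ x • f x - χ y • f y‖
    _ = ‖χ x • (f x - f y) + (χ x - χ y) • f y‖ := by congr 1; module
    _ ≤ 1 * (L * ‖x - y‖ ^ α) + (‖x - y‖ / R) ^ α * (L * (2 * R ^ α)) := by
      refine norm_add_le_of_le ?_ ?_ <;> rw [norm_smul]
      · gcongr
        · exact (abs_of_nonneg (hχ x).1).trans_le (hχ x).2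
        · exact hf x y
      · gcongr
        exact abs_χ_sub_le
    _ = 3 * L * ‖x - y‖ ^ α := by
      rw [Real.div_rpow (norm_nonneg _) hR.le]
      field_simp
      ring

lemma exists_holder_hasCompactSupport_eqOn [NormedSpace ℝ E] [ProperSpace E] {f : E → G}
    {α L : ℝ} (hα₀ : 0 ≤ α) (hα₁ : α ≤ 1) (hL : 0 ≤ L)
    (hf : ∀ x y, ‖f x - f y‖ ≤ L * ‖x - y‖ ^ α) (hf₀ : f 0 = 0) {s : Set E}
    (hs : Bornology.IsBounded s) :
    ∃ F : E → G, HasCompactSupport F ∧ Set.EqOn F f s ∧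
      ∀ x y, ‖F x - F y‖ ≤ 3 * L * ‖x - y‖ ^ α := by
  obtain ⟨R, hR, hsR⟩ := hs.subset_closedBall_lt 0 0
  let χ (x : E) : ℝ := thickenedIndicator hR (Metric.closedBall 0 R) x
  have χ_eq_zero {x : E} (hx : 2 * R ≤ ‖x‖) : χ x = 0 := by
    have : x ∉ Metric.thickening R (Metric.closedBall (0 : E) R) := by
      rwa [thickening_closedBall hR hR.le, ← two_mul, mem_ball_zero_iff, not_lt]
    simp only [χ, thickenedIndicator_zero hR _ this, NNReal.coe_zero]
  have χ_mem_Icc (x : E) : χ x ∈ Set.Icc 0 1 :=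
    ⟨NNReal.coe_nonneg _, thickenedIndicator_le_one hR _ x⟩
  have abs_χ_sub_le (x y : E) : |χ x - χ y| ≤ ‖x - y‖ / R := by
    simpa [χ, ← NNReal.dist_eq, dist_eq_norm, hR.le, div_eq_inv_mul] using
      (lipschitzWith_thickenedIndicator hR (Metric.closedBall (0 : E) R)).dist_le_mul x y
  refine ⟨fun x => χ x • f x, ?_, fun x hx => ?_, ?_⟩
  · refine .intro (isCompact_closedBall (0 : E) (2 * R)) fun x hx => ?_
    rw [mem_closedBall_zero_iff, not_le] at hx
    rw [χ_eq_zero hx.le, zero_smul]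
  · simp only [χ, thickenedIndicator_one hR _ (hsR hx), NNReal.coe_one, one_smul]
  · exact norm_smul_sub_smul_le_of_holder hα₀ hα₁ hL hR hf hf₀ χ_mem_Icc abs_χ_sub_le
      fun x => χ_eq_zero

end Cutoff

section CStarAlgebra

variable {A : Type*} [CStarAlgebra A]

lemma norm_exp_sub_exp_le_of_mem_skewAdjoint {x y : A} (hx : x ∈ skewAdjoint A)
    (hy : y ∈ skewAdjoint A) :
    ‖NormedSpace.exp x - NormedSpace.exp y‖ ≤ ‖x - y‖ := by
  let _ : NormedAlgebra ℚ A := .restrictScalars ℚ ℂ A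
  have exp_smul_mem {w : A} (hw : w ∈ skewAdjoint A) (s : ℝ) :
      NormedSpace.exp (s • w) ∈ unitary A :=
    NormedSpace.exp_mem_unitary_of_mem_skewAdjoint (skewAdjoint.smul_mem s hw)
  let path : ℝ → A := fun s => NormedSpace.exp (s • x) * NormedSpace.exp ((1 - s) • y)
  have hasDerivAt_path (s : ℝ) : HasDerivAt path
      (NormedSpace.exp (s • x) * (x - y) * NormedSpace.exp ((1 - s) • y)) s := by
    have hright : HasDerivAt (fun s : ℝ => NormedSpace.exp ((1 - s) • y))
        (-(y * NormedSpace.exp ((1 - s) • y))) s := by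
      simpa [Function.comp_def] using (hasDerivAt_exp_smul_const' y (1 - s)).scomp s
        ((hasDerivAt_id s).const_sub 1)
    refine ((hasDerivAt_exp_smul_const x s).mul hright).congr_deriv ?_
    noncomm_ring
  have norm_deriv_le (s : ℝ) :
      ‖NormedSpace.exp (s • x) * (x - y) * NormedSpace.exp ((1 - s) • y)‖ ≤ ‖x - y‖ := by
    rw [CStarRing.norm_mul_mem_unitary _ (exp_smul_mem hy _),
      CStarRing.norm_mem_unitary_mul _ (exp_smul_mem hx s)]
  simpa [path] using norm_image_sub_le_of_norm_deriv_le_segment_01'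
    (fun s _ => (hasDerivAt_path s).hasDerivWithinAt) (fun s _ => norm_deriv_le s)

/-- The unitary `e^{2πi⟨ξ, a⟩}` attached to a frequency `ξ` and a normal element `a`, where
`⟨ξ, ·⟩` is the real inner product of `ℂ ≅ ℝ²`; the normalisation is that of Mathlib's `𝓕`. -/
noncomputable def cfcChar (ξ : ℂ) (a : A) : A := cfc (fun z => (𝐞 (inner ℝ ξ z) : ℂ)) a

lemma norm_cfcChar_le (ξ : ℂ) (a : A) : ‖cfcChar ξ a‖ ≤ 1 :=
  norm_cfc_le zero_le_one fun _ _ => (Circle.norm_coe _).le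

lemma cfcChar_zero (a : A) [IsStarNormal a] : cfcChar 0 a = 1 := by
  simpa [cfcChar] using cfc_const_one ℂ a

lemma cfcChar_add (ξ η : ℂ) (a : A) [IsStarNormal a] :
    cfcChar (ξ + η) a = cfcChar ξ a * cfcChar η a := by
  rw [cfcChar, cfcChar, cfcChar, ← cfc_mul ..]
  simp [inner_add_left, AddChar.map_add_eq_mul]

lemma cfc_inner (ξ : ℂ) (a : A) [IsStarNormal a] :
    cfc (fun z : ℂ => (inner ℝ ξ z : ℂ)) a = ℜ (conj ξ • a) := by
  calc cfc (fun z : ℂ => (inner ℝ ξ z : ℂ)) a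
    _ = cfc (fun z : ℂ => (2⁻¹ : ℂ) • (conj ξ • z + ξ • star z)) a := by
      congr! 2 with z
      rw [Complex.inner, Complex.re_eq_add_conj]
      simp [div_eq_inv_mul, mul_comm]
    _ = (2⁻¹ : ℂ) • (conj ξ • a + ξ • star a) := by
      rw [cfc_smul .., cfc_add .., cfc_smul .., cfc_smul .., cfc_id' .., cfc_star_id ..]
    _ = ℜ (conj ξ • a) := by
      rw [realPart_apply_coe, star_smul, ← Complex.coe_smul]
      simp

lemma cfcChar_eq_exp (ξ : ℂ) (a : A) [IsStarNormal a] :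
    cfcChar ξ a =
      NormedSpace.exp ((2 * π) • Complex.I • (ℜ (conj ξ • a) : A)) := by
  rw [← cfc_inner, ← cfc_const_mul .., ← cfc_smul .., ← CFC.complex_exp_eq_normedSpace_exp,
    ← cfc_comp' ..]
  simp only [cfcChar, Real.fourierChar_apply]
  congr! 3
  simp
  ring

lemma continuous_cfcChar (a : A) [IsStarNormal a] : Continuous fun ξ => cfcChar ξ a := by
  simp only [cfcChar_eq_exp, realPart_apply_coe]
  let _ : NormedAlgebra ℚ A := .restrictScalars ℚ ℂ A
  refine NormedSpace.exp_continuous.comp ?_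
  fun_prop

lemma norm_cfcChar_sub_le (ξ : ℂ) (a b : A) [IsStarNormal a] [IsStarNormal b] :
    ‖cfcChar ξ a - cfcChar ξ b‖ ≤ 2 * π * ‖ξ‖ * ‖a - b‖ := by
  have smul_mem (c : A) :
      (2 * π) • Complex.I • (ℜ (conj ξ • c) : A) ∈ skewAdjoint A :=
    skewAdjoint.smul_mem _ ((ℜ (conj ξ • c)).2.smul_mem_skewAdjoint Complex.conj_I)
  rw [cfcChar_eq_exp, cfcChar_eq_exp]
  refine (norm_exp_sub_exp_le_of_mem_skewAdjoint (smul_mem a) (smul_mem b)).trans ?_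
  calc _ = 2 * π * ‖ℜ (conj ξ • (a - b))‖ := by
        rw [← smul_sub, ← smul_sub, ← AddSubgroup.coe_sub, ← map_sub, ← smul_sub, norm_smul,
          norm_smul]
        simp [abs_of_pos Real.pi_pos, mul_assoc]
    _ ≤ 2 * π * ‖conj ξ • (a - b)‖ := by gcongr; exact realPart.norm_le _
    _ = 2 * π * ‖ξ‖ * ‖a - b‖ := by rw [norm_smul, RCLike.norm_conj, ← mul_assoc]

lemma integrable_smul_cfcChar {Θ : ℂ → ℂ} (hΘ : Integrable Θ) (a : A) [IsStarNormal a] :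
    Integrable fun η => Θ η • cfcChar η a :=
  hΘ.smul_bdd 1 (continuous_cfcChar a).aestronglyMeasurable (ae_of_all _ (norm_cfcChar_le · a))

lemma cfc_fourierInv {Θ : ℂ → ℂ} (hΘ : Integrable Θ) (hΘc : Continuous Θ) (a : A)
    [IsStarNormal a] :
    cfc (𝓕⁻ Θ) a = ∫ η, Θ η • cfcChar η a := by
  calc cfc (𝓕⁻ Θ) a
    _ = cfc (fun z => ∫ η, Θ η • (𝐞 (inner ℝ η z) : ℂ)) a := by
      congr! 2 with z
      simp [Real.fourierInv_eq, Circle.smul_def, mul_comm]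
    _ = ∫ η, cfc (fun z => Θ η • (𝐞 (inner ℝ η z) : ℂ)) a :=
      cfc_integral _ (‖Θ ·‖) a (by fun_prop)
        (ae_of_all _ fun η z _ => by rw [norm_smul, Circle.norm_coe, mul_one])
        hΘ.norm.hasFiniteIntegral
    _ = ∫ η, Θ η • cfcChar η a := by
      congr! 2 with η
      exact cfc_smul ..

/-- The relative phase `e^{2πi⟨ζ, a⟩} e^{-2πi⟨ζ, b⟩}`, which is `1` when `a = b` and intertwines the
functional calculi of `a` and `b`. -/
noncomputable def relPhase (ζ : ℂ) (a b : A) : A := cfcChar ζ a * cfcChar (-ζ) b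

lemma relPhase_self (ζ : ℂ) (a : A) [IsStarNormal a] : relPhase ζ a a = 1 := by
  rw [relPhase, ← cfcChar_add, add_neg_cancel, cfcChar_zero]

lemma norm_relPhase_le (ζ : ℂ) (a b : A) : ‖relPhase ζ a b‖ ≤ 1 :=
  (norm_mul_le_of_le (norm_cfcChar_le ζ a) (norm_cfcChar_le (-ζ) b)).trans_eq (one_mul 1)

lemma continuous_relPhase (a b : A) [IsStarNormal a] [IsStarNormal b] :
    Continuous fun ζ => relPhase ζ a b :=
  (continuous_cfcChar a).mul ((continuous_cfcChar b).comp continuous_neg)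

lemma cfcChar_mul_relPhase (η ζ : ℂ) (a b : A) [IsStarNormal a] [IsStarNormal b] :
    cfcChar η a * relPhase ζ a b = relPhase (η + ζ) a b * cfcChar η b := by
  rw [relPhase, relPhase, ← mul_assoc, ← cfcChar_add, mul_assoc, ← cfcChar_add]
  congr 2
  ring

lemma norm_one_sub_relPhase_le (ζ : ℂ) (a b : A) [IsStarNormal a] [IsStarNormal b] :
    ‖1 - relPhase ζ a b‖ ≤ 2 * π * ‖ζ‖ * ‖a - b‖ := by
  calc ‖1 - relPhase ζ a b‖
    _ = ‖(cfcChar ζ a - cfcChar ζ b) * cfcChar (-ζ) b‖ := by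
      rw [← relPhase_self ζ b, relPhase, relPhase, ← sub_mul, ← neg_sub, neg_mul, norm_neg]
    _ ≤ ‖cfcChar ζ a - cfcChar ζ b‖ * 1 :=
      norm_mul_le_of_le le_rfl (norm_cfcChar_le (-ζ) b)
    _ ≤ 2 * π * ‖ζ‖ * ‖a - b‖ := by rw [mul_one]; exact norm_cfcChar_sub_le ζ a b

lemma integrable_smul_relPhase {ψ : ℂ → ℂ} (hψ : Integrable ψ) (a b : A) [IsStarNormal a]
    [IsStarNormal b] :
    Integrable fun ζ => ψ ζ • relPhase ζ a b :=
  hψ.smul_bdd 1 (continuous_relPhase a b).aestronglyMeasurable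
    (ae_of_all _ (norm_relPhase_le · a b))

/-- The average `∫ ψ(ζ) e^{2πi⟨ζ, a⟩} e^{-2πi⟨ζ, b⟩} dζ` of the relative phases of `a` and `b`. -/
noncomputable def phaseAverage (ψ : ℂ → ℂ) (a b : A) : A := ∫ ζ, ψ ζ • relPhase ζ a b

lemma phaseAverage_self {ψ : ℂ → ℂ} (hψ : ∫ ζ, ψ ζ = 1) (a : A) [IsStarNormal a] :
    phaseAverage ψ a a = 1 := by
  simp only [phaseAverage, relPhase_self, integral_smul_const, hψ, one_smul]

lemma norm_one_sub_phaseAverage_le {ψ : ℂ → ℂ} (hψ : Integrable ψ) (hψ₁ : ∫ ζ, ψ ζ = 1)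
    (hψm : Integrable fun ζ => ‖ζ‖ * ‖ψ ζ‖) (a b : A) [IsStarNormal a] [IsStarNormal b] :
    ‖1 - phaseAverage ψ a b‖ ≤ 2 * π * (∫ ζ, ‖ζ‖ * ‖ψ ζ‖) * ‖a - b‖ := by
  have eq_integral : 1 - phaseAverage ψ a b = ∫ ζ, ψ ζ • (1 - relPhase ζ a b) := by
    nth_rewrite 1 [← phaseAverage_self hψ₁ a]
    rw [phaseAverage, phaseAverage, ← integral_sub
      (integrable_smul_relPhase hψ a a) (integrable_smul_relPhase hψ a b)]
    simp only [relPhase_self, smul_sub]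
  rw [eq_integral, ← integral_const_mul, ← integral_mul_const]
  refine norm_integral_le_of_norm_le ((hψm.const_mul _).mul_const _) (ae_of_all _ fun ζ => ?_)
  rw [norm_smul]
  calc ‖ψ ζ‖ * ‖1 - relPhase ζ a b‖
    _ ≤ ‖ψ ζ‖ * (2 * π * ‖ζ‖ * ‖a - b‖) := by gcongr; exact norm_one_sub_relPhase_le ζ a b
    _ = 2 * π * (‖ζ‖ * ‖ψ ζ‖) * ‖a - b‖ := by ring

lemma integrable_shear_smul_relPhase {Θ ψ : ℂ → ℂ} (hΘ : Integrable Θ) (hψ : Integrable ψ)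
    (a b : A) [IsStarNormal a] [IsStarNormal b] :
    Integrable fun p : ℂ × ℂ =>
      (ψ (p.1 + p.2) * Θ p.1) • (cfcChar p.1 a * relPhase p.2 a b) := by
  refine (integrable_shear_mul hΘ hψ).smul_bdd 1 ?_ (ae_of_all _ fun p => ?_)
  · exact (((continuous_cfcChar a).comp continuous_fst).mul
      ((continuous_relPhase a b).comp continuous_snd)).aestronglyMeasurable
  · exact (norm_mul_le_of_le (norm_cfcChar_le p.1 a) (norm_relPhase_le p.2 a b)).trans_eq
      (one_mul 1)

lemma cfc_fourierInv_shear_mul_relPhase {Θ ψ : ℂ → ℂ} (hΘ : Integrable Θ) (hΘc : Continuous Θ)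
    (hψ : Integrable ψ) (hψc : Continuous ψ) (a b : A) [IsStarNormal a] [IsStarNormal b] :
    (fun ζ => cfc (𝓕⁻ fun η => ψ (η + ζ) * Θ η) a * relPhase ζ a b) =ᵐ[volume]
      fun ζ => ∫ η, (ψ (η + ζ) * Θ η) • (cfcChar η a * relPhase ζ a b) := by
  filter_upwards [(integrable_shear_mul hΘ hψ).prod_left_ae] with ζ hζ
  rw [cfc_fourierInv hζ (by fun_prop),
    ← integral_mul_const_of_integrable (integrable_smul_cfcChar hζ a)]
  simp only [smul_mul_assoc]

lemma integrable_cfc_fourierInv_shear_mul_relPhase {Θ ψ : ℂ → ℂ} (hΘ : Integrable Θ)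
    (hΘc : Continuous Θ) (hψ : Integrable ψ) (hψc : Continuous ψ) (a b : A) [IsStarNormal a]
    [IsStarNormal b] :
    Integrable fun ζ => cfc (𝓕⁻ fun η => ψ (η + ζ) * Θ η) a * relPhase ζ a b :=
  (integrable_shear_smul_relPhase hΘ hψ a b).integral_prod_right.congr
    (cfc_fourierInv_shear_mul_relPhase hΘ hΘc hψ hψc a b).symm

lemma phaseAverage_mul_cfc_fourierInv {Θ ψ : ℂ → ℂ} (hΘ : Integrable Θ) (hΘc : Continuous Θ)
    (hψ : Integrable ψ) (hψc : Continuous ψ) (a b : A) [IsStarNormal a] [IsStarNormal b] :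
    phaseAverage ψ a b * cfc (𝓕⁻ Θ) b =
      ∫ ζ, cfc (𝓕⁻ fun η => ψ (η + ζ) * Θ η) a * relPhase ζ a b := by
  have inner_integral (η : ℂ) :
      ∫ ζ, (ψ (η + ζ) * Θ η) • (cfcChar η a * relPhase ζ a b) =
        phaseAverage ψ a b * Θ η • cfcChar η b := by
    calc ∫ ζ, (ψ (η + ζ) * Θ η) • (cfcChar η a * relPhase ζ a b)
      _ = ∫ ζ, ψ (η + ζ) • relPhase (η + ζ) a b * Θ η • cfcChar η b := by
        simp only [cfcChar_mul_relPhase, smul_mul_smul_comm]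
      _ = ∫ ζ, ψ ζ • relPhase ζ a b * Θ η • cfcChar η b :=
        integral_add_left_eq_self (fun ζ => ψ ζ • relPhase ζ a b * Θ η • cfcChar η b) η
      _ = _ := integral_mul_const_of_integrable (integrable_smul_relPhase hψ a b)
  calc phaseAverage ψ a b * cfc (𝓕⁻ Θ) b
    _ = ∫ η, phaseAverage ψ a b * Θ η • cfcChar η b := by
      rw [cfc_fourierInv hΘ hΘc, integral_const_mul_of_integrable (integrable_smul_cfcChar hΘ b)]
    _ = ∫ η, ∫ ζ, (ψ (η + ζ) * Θ η) • (cfcChar η a * relPhase ζ a b) := by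
      simp only [inner_integral]
    _ = ∫ ζ, ∫ η, (ψ (η + ζ) * Θ η) • (cfcChar η a * relPhase ζ a b) :=
      integral_integral_swap (integrable_shear_smul_relPhase hΘ hψ a b)
    _ = _ := integral_congr_ae (cfc_fourierInv_shear_mul_relPhase hΘ hΘc hψ hψc a b).symm

lemma norm_cfc_sub_phaseAverage_mul_cfc_le {Θ ψ : ℂ → ℂ} (hΘ : Integrable Θ)
    (hΘc : Continuous Θ) (hψ : Integrable ψ) (hψc : Continuous ψ) (hψ₁ : ∫ ζ, ψ ζ = 1)
    {B : ℂ → ℝ} (hB : ∀ ζ z, ‖𝓕⁻ (fun η => ψ (η + ζ) * Θ η) z‖ ≤ B ζ)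
    (hBm : Integrable fun ζ => ‖ζ‖ * B ζ) (a b : A) [IsStarNormal a] [IsStarNormal b] :
    ‖cfc (𝓕⁻ Θ) a - phaseAverage ψ a b * cfc (𝓕⁻ Θ) b‖ ≤
      2 * π * (∫ ζ, ‖ζ‖ * B ζ) * ‖a - b‖ := by
  have eq_integral : cfc (𝓕⁻ Θ) a - phaseAverage ψ a b * cfc (𝓕⁻ Θ) b =
      ∫ ζ, cfc (𝓕⁻ fun η => ψ (η + ζ) * Θ η) a * (1 - relPhase ζ a b) := by
    -- The intertwining identity with `b = a` expresses `cfc (𝓕⁻ Θ) a` itself as an integral.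
    nth_rewrite 1 [← one_mul (cfc (𝓕⁻ Θ) a), ← phaseAverage_self hψ₁ a]
    rw [phaseAverage_mul_cfc_fourierInv hΘ hΘc hψ hψc,
      phaseAverage_mul_cfc_fourierInv hΘ hΘc hψ hψc,
      ← integral_sub (integrable_cfc_fourierInv_shear_mul_relPhase hΘ hΘc hψ hψc a a)
        (integrable_cfc_fourierInv_shear_mul_relPhase hΘ hΘc hψ hψc a b)]
    simp only [relPhase_self, mul_sub]
  rw [eq_integral, ← integral_const_mul, ← integral_mul_const]
  refine norm_integral_le_of_norm_le ((hBm.const_mul _).mul_const _) (ae_of_all _ fun ζ => ?_)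
  have B_nonneg : 0 ≤ B ζ := (norm_nonneg _).trans (hB ζ 0)
  calc ‖cfc (𝓕⁻ fun η => ψ (η + ζ) * Θ η) a * (1 - relPhase ζ a b)‖
    _ ≤ B ζ * (2 * π * ‖ζ‖ * ‖a - b‖) :=
      norm_mul_le_of_le (norm_cfc_le B_nonneg fun z _ => hB ζ z)
        (norm_one_sub_relPhase_le ζ a b)
    _ = 2 * π * (‖ζ‖ * B ζ) * ‖a - b‖ := by ring

-- Compare both `cfc (𝓕⁻ Θ) a` and `cfc (𝓕⁻ Θ) b` with `phaseAverage ψ a b * cfc (𝓕⁻ Θ) b`.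
lemma norm_cfc_fourierInv_sub_le {Θ ψ : ℂ → ℂ} (hΘ : Integrable Θ)
    (hΘc : Continuous Θ) (hψ : Integrable ψ) (hψc : Continuous ψ) (hψ₁ : ∫ ζ, ψ ζ = 1)
    (hψm : Integrable fun ζ => ‖ζ‖ * ‖ψ ζ‖)
    {B : ℂ → ℝ} (hB : ∀ ζ z, ‖𝓕⁻ (fun η => ψ (η + ζ) * Θ η) z‖ ≤ B ζ)
    (hBm : Integrable fun ζ => ‖ζ‖ * B ζ) {M : ℝ} (hM : ∀ z, ‖𝓕⁻ Θ z‖ ≤ M) (a b : A)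
    [IsStarNormal a] [IsStarNormal b] :
    ‖cfc (𝓕⁻ Θ) a - cfc (𝓕⁻ Θ) b‖ ≤
      2 * π * ((∫ ζ, ‖ζ‖ * B ζ) + M * ∫ ζ, ‖ζ‖ * ‖ψ ζ‖) * ‖a - b‖ := by
  have norm_cfc_le_M : ‖cfc (𝓕⁻ Θ) b‖ ≤ M :=
    norm_cfc_le ((norm_nonneg _).trans (hM 0)) fun z _ => hM z
  calc ‖cfc (𝓕⁻ Θ) a - cfc (𝓕⁻ Θ) b‖
    _ = ‖(cfc (𝓕⁻ Θ) a - phaseAverage ψ a b * cfc (𝓕⁻ Θ) b) -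
          (1 - phaseAverage ψ a b) * cfc (𝓕⁻ Θ) b‖ := by congr 1; noncomm_ring
    _ ≤ 2 * π * (∫ ζ, ‖ζ‖ * B ζ) * ‖a - b‖ +
          2 * π * (∫ ζ, ‖ζ‖ * ‖ψ ζ‖) * ‖a - b‖ * M :=
      norm_sub_le_of_le
        (norm_cfc_sub_phaseAverage_mul_cfc_le hΘ hΘc hψ hψc hψ₁ hB hBm a b)
        (norm_mul_le_of_le (norm_one_sub_phaseAverage_le hψ hψ₁ hψm a b) norm_cfc_le_M)
    _ = _ := by ring

lemma norm_cfc_gaussianSmoothing_sub_le {t M : ℝ} {u : ℂ → ℂ} (ht : 0 < t) (hu : Integrable u)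
    (huc : Continuous u) (hM : ∀ z, ‖u z‖ ≤ M) (a b : A) [IsStarNormal a] [IsStarNormal b] :
    ‖cfc (gaussianSmoothing t u) a - cfc (gaussianSmoothing t u) b‖ ≤
      8 * π * M / t * ‖a - b‖ := by
  have M_nonneg : 0 ≤ M := (norm_nonneg _).trans (hM 0)
  have t_inv_pos : 0 < t⁻¹ := inv_pos.2 ht
  have s_pos : 0 < √2 * t⁻¹ := by positivity
  have norm_smoothing_le := norm_gaussianSmoothing_le ht hM
  rw [gaussianSmoothing_eq_fourierInv ht hu huc hM] at norm_smoothing_le ⊢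
  have integrable_majorant :
      Integrable fun ζ => ‖ζ‖ * (2 * M * ‖gaussianKernel (√2 * t⁻¹) ζ‖) := by
    simpa only [mul_left_comm] using
      (integrable_norm_mul_norm_gaussianKernel s_pos).const_mul (2 * M)
  refine (norm_cfc_fourierInv_sub_le
    (integrable_fourier_mul_fourier (integrable_fourier_gaussianKernel ht) hu)
    ((continuous_fourier_of_integrable (integrable_gaussianKernel ht)).mul
      (continuous_fourier_of_integrable hu))
    (integrable_gaussianKernel t_inv_pos) (continuous_gaussianKernel _)
    (integral_gaussianKernel t_inv_pos) (integrable_norm_mul_norm_gaussianKernel t_inv_pos)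
    (norm_fourierInv_gaussianKernel_add_mul_le ht hu huc hM) integrable_majorant
    norm_smoothing_le a b).trans ?_
  gcongr
  calc 2 * π * ((∫ ζ, ‖ζ‖ * (2 * M * ‖gaussianKernel (√2 * t⁻¹) ζ‖)) +
        M * ∫ ζ, ‖ζ‖ * ‖gaussianKernel t⁻¹ ζ‖)
    _ ≤ 2 * π * (2 * M * (√2 * t⁻¹) + M * t⁻¹) := by
      simp only [mul_left_comm _ (2 * M), integral_const_mul]
      gcongr
      · exact integral_norm_mul_norm_gaussianKernel_le s_pos
      · exact integral_norm_mul_norm_gaussianKernel_le t_inv_pos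
    _ = 2 * π * (M * t⁻¹) * (2 * √2 + 1) := by ring
    _ ≤ 2 * π * (M * t⁻¹) * 4 := by
      gcongr
      linarith [Real.sqrt_le_iff.2 (by norm_num : (0 : ℝ) ≤ 3 / 2 ∧ 2 ≤ (3 / 2 : ℝ) ^ 2)]
    _ = 8 * π * M / t := by ring

variable {t α L M : ℝ} {F : ℂ → ℂ}

lemma norm_cfc_gaussianSmoothing_sub_le_add (ht : 0 < t) (hF : Integrable F)
    (hFc : Continuous F) (hM : ∀ z, ‖F z‖ ≤ M) (hα₀ : 0 ≤ α) (hα₁ : α ≤ 1) (hL : 0 ≤ L)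
    (hFα : ∀ z w, ‖F z - F w‖ ≤ L * ‖z - w‖ ^ α) (a b : A) [IsStarNormal a] [IsStarNormal b] :
    ‖cfc (gaussianSmoothing t F) a - cfc (gaussianSmoothing t F) b‖ ≤
      8 * π * (L * t ^ α) / t * ‖a - b‖ +
        ‖cfc (gaussianSmoothing (√2 * t) F) a - cfc (gaussianSmoothing (√2 * t) F) b‖ := by
  have continuous_smoothing {s : ℝ} (hs : 0 < s) := continuous_gaussianSmoothing hs hFc hM
  have smoothing_sub : gaussianSmoothing t (F - gaussianSmoothing t F) =
      gaussianSmoothing t F - gaussianSmoothing (√2 * t) F := by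
    rw [gaussianSmoothing_sub ht hFc hM (continuous_smoothing ht) (norm_gaussianSmoothing_le ht hM),
      gaussianSmoothing_gaussianSmoothing ht hF hFc hM]
  have cfc_smoothing_sub (c : A) [IsStarNormal c] :
      cfc (gaussianSmoothing t (F - gaussianSmoothing t F)) c =
        cfc (gaussianSmoothing t F) c - cfc (gaussianSmoothing (√2 * t) F) c := by
    rw [smoothing_sub]
    exact cfc_sub _ _ c (continuous_smoothing ht).continuousOn
      (continuous_smoothing (by positivity)).continuousOn
  refine (norm_le_norm_add_norm_sub' _
    (cfc (gaussianSmoothing (√2 * t) F) a - cfc (gaussianSmoothing (√2 * t) F) b)).trans ?_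
  rw [add_comm, sub_sub_sub_comm, ← cfc_smoothing_sub, ← cfc_smoothing_sub]
  gcongr
  exact norm_cfc_gaussianSmoothing_sub_le ht (hF.sub (integrable_gaussianSmoothing ht hF))
    (hFc.sub (continuous_smoothing ht)) (norm_sub_gaussianSmoothing_le ht hFc hM hα₀ hα₁ hL hFα) a b

lemma norm_cfc_gaussianSmoothing_sub_le_of_holder (ht : 0 < t) (hF : Integrable F)
    (hFc : Continuous F) (hM : ∀ z, ‖F z‖ ≤ M) (hα₀ : 0 ≤ α) (hα₁ : α < 1) (hL : 0 ≤ L)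
    (hFα : ∀ z w, ‖F z - F w‖ ≤ L * ‖z - w‖ ^ α) (a b : A) [IsStarNormal a] [IsStarNormal b] :
    ‖cfc (gaussianSmoothing t F) a - cfc (gaussianSmoothing t F) b‖ ≤
      32 * π * (1 - α)⁻¹ * (L * t ^ α) / t * ‖a - b‖ := by
  have one_sub_pos : 0 < 1 - α := sub_pos.2 hα₁
  have scale_pos (k : ℕ) : 0 < √2 ^ k * t := by positivity
  have scale_tendsto : Tendsto (fun k => √2 ^ k * t) atTop atTop :=
    (tendsto_pow_atTop_atTop_of_one_lt Real.one_lt_sqrt_two).atTop_mul_const ht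
  let D (k : ℕ) : ℝ :=
    ‖cfc (gaussianSmoothing (√2 ^ k * t) F) a - cfc (gaussianSmoothing (√2 ^ k * t) F) b‖
  let C : ℝ := 8 * π * (L * t ^ α) / t * ‖a - b‖
  have D_le_add_succ (k : ℕ) : D k ≤ C * ((√2)⁻¹ ^ (1 - α)) ^ k + D (k + 1) := by
    have := norm_cfc_gaussianSmoothing_sub_le_add (scale_pos k) hF hFc hM hα₀ hα₁.le hL hFα a b
    rw [← mul_assoc (√2), ← pow_succ'] at this
    refine this.trans_eq (congrArg (· + D (k + 1)) ?_)
    simp only [C, mul_div_assoc, pow_mul_rpow_div_self (by positivity : (0 : ℝ) < √2) ht]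
    ring
  have D_tendsto : Tendsto D atTop (𝓝 0) := by
    refine squeeze_zero (fun _ => norm_nonneg _)
      (fun k => norm_cfc_gaussianSmoothing_sub_le (scale_pos k) hF hFc hM a b) ?_
    simpa using (scale_tendsto.const_div_atTop (8 * π * M)).mul_const ‖a - b‖
  have ratio_lt_one : (√2)⁻¹ ^ (1 - α) < 1 :=
    Real.rpow_lt_one (by positivity) (inv_lt_one_of_one_lt₀ Real.one_lt_sqrt_two) one_sub_pos
  calc ‖cfc (gaussianSmoothing t F) a - cfc (gaussianSmoothing t F) b‖
    _ = D 0 := by simp only [D, pow_zero, one_mul]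
    _ ≤ C * (1 - (√2)⁻¹ ^ (1 - α))⁻¹ :=
      le_of_hasSum_of_le_add_succ D_le_add_succ D_tendsto
        ((hasSum_geometric_of_lt_one (by positivity) ratio_lt_one).mul_left C)
    _ ≤ C * (4 * (1 - α)⁻¹) := by
      gcongr
      exact inv_one_sub_inv_sqrt_two_rpow_le one_sub_pos (sub_le_self 1 hα₀)
    _ = 32 * π * (1 - α)⁻¹ * (L * t ^ α) / t * ‖a - b‖ := by ring

-- Smooth at the scale `‖a - b‖`.
lemma norm_cfc_sub_le_of_holder_of_integrable (hF : Integrable F) (hFc : Continuous F)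
    (hM : ∀ z, ‖F z‖ ≤ M) (hα₀ : 0 ≤ α) (hα₁ : α < 1) (hL : 0 ≤ L)
    (hFα : ∀ z w, ‖F z - F w‖ ≤ L * ‖z - w‖ ^ α) (a b : A) [IsStarNormal a] [IsStarNormal b] :
    ‖cfc F a - cfc F b‖ ≤ (32 * π + 2) * (1 - α)⁻¹ * L * ‖a - b‖ ^ α := by
  have one_sub_pos : 0 < 1 - α := sub_pos.2 hα₁
  rcases eq_or_ne a b with rfl | hab
  · rw [sub_self, norm_zero]
    positivity
  set t := ‖a - b‖
  have ht : 0 < t := norm_sub_pos_iff.2 hab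
  have norm_cfc_sub_smoothing_le (c : A) [IsStarNormal c] :
      ‖cfc F c - cfc (gaussianSmoothing t F) c‖ ≤ L * t ^ α := by
    rw [← cfc_sub _ _ c hFc.continuousOn (continuous_gaussianSmoothing ht hFc hM).continuousOn]
    exact norm_cfc_le (by positivity) fun z _ =>
      norm_sub_gaussianSmoothing_le ht hFc hM hα₀ hα₁.le hL hFα z
  calc ‖cfc F a - cfc F b‖
    _ ≤ ‖cfc F a - cfc (gaussianSmoothing t F) a‖ +
        ‖cfc (gaussianSmoothing t F) a - cfc (gaussianSmoothing t F) b‖ +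
        ‖cfc (gaussianSmoothing t F) b - cfc F b‖ := by
      simpa only [dist_eq_norm] using dist_triangle4 (cfc F a) _ _ (cfc F b)
    _ ≤ L * t ^ α + 32 * π * (1 - α)⁻¹ * (L * t ^ α) / t * t + L * t ^ α := by
      gcongr
      · exact norm_cfc_sub_smoothing_le a
      · exact norm_cfc_gaussianSmoothing_sub_le_of_holder ht hF hFc hM hα₀ hα₁ hL hFα a b
      · rw [norm_sub_rev]
        exact norm_cfc_sub_smoothing_le b
    _ = (32 * π * (1 - α)⁻¹ + 2 * 1) * L * t ^ α := by
      rw [div_mul_cancel₀ _ ht.ne']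
      ring
    _ ≤ (32 * π * (1 - α)⁻¹ + 2 * (1 - α)⁻¹) * L * t ^ α := by
      gcongr
      exact (one_le_inv₀ one_sub_pos).2 (sub_le_self 1 hα₀)
    _ = (32 * π + 2) * (1 - α)⁻¹ * L * t ^ α := by ring

end CStarAlgebra

end OperatorHolder

open OperatorHolder in
theorem stmt_8_general {A : Type*} [CStarAlgebra A] {α L : ℝ} {f : ℂ → ℂ} (hα₀ : 0 < α)
    (hα₁ : α < 1) (hf : ∀ z w, ‖f z - f w‖ ≤ L * ‖z - w‖ ^ α) (a b : A) [IsStarNormal a]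
    [IsStarNormal b] :
    ‖cfc f a - cfc f b‖ ≤ (96 * Real.pi + 6) * (1 - α)⁻¹ * L * ‖a - b‖ ^ α := by
  have hL : 0 ≤ L := by simpa using (norm_nonneg _).trans (hf 1 0)
  obtain ⟨F, F_compact, F_eqOn, F_holder⟩ :=
    exists_holder_hasCompactSupport_eqOn (f := fun z => f z - f 0)
      (s := spectrum ℂ a ∪ spectrum ℂ b) hα₀.le hα₁.le hL (by simpa using hf) (sub_self _)
      ((spectrum.isCompact a).union (spectrum.isCompact b)).isBounded
  have F_continuous := continuous_of_norm_sub_le_rpow hα₀ F_holder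
  obtain ⟨M, hM⟩ := F_compact.exists_bound_of_continuous F_continuous
  have cfc_eq {c : A} [IsStarNormal c] (hc : spectrum ℂ c ⊆ spectrum ℂ a ∪ spectrum ℂ b) :
      cfc F c = cfc f c - algebraMap ℂ A (f 0) := by
    have f_continuous := continuous_of_norm_sub_le_rpow hα₀ hf
    rw [cfc_congr (F_eqOn.mono hc), cfc_sub .., cfc_const ..]
  calc ‖cfc f a - cfc f b‖
    _ = ‖cfc F a - cfc F b‖ := by
      rw [cfc_eq Set.subset_union_left, cfc_eq Set.subset_union_right, sub_sub_sub_cancel_right]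
    _ ≤ (32 * Real.pi + 2) * (1 - α)⁻¹ * (3 * L) * ‖a - b‖ ^ α :=
      norm_cfc_sub_le_of_holder_of_integrable
        (F_continuous.integrable_of_hasCompactSupport F_compact) F_continuous hM hα₀.le hα₁
        (by positivity) F_holder a b
    _ = _ := by ring

/-- Operator Hölder estimate for normal operators: there is a constant `c > 0`
such that for every `α ∈ (0,1)`, every `L ≥ 0`, every `f : ℂ → ℂ` with
`‖f z - f w‖ ≤ L * ‖z - w‖^α`, and all bounded normal operators `N₁`, `N₂` on a
complex Hilbert space, `‖f(N₁) - f(N₂)‖ ≤ c * (1-α)⁻¹ * L * ‖N₁ - N₂‖^α`. -/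
theorem stmt_8 :
    ∃ c : ℝ, 0 < c ∧
      ∀ (α L : ℝ), α ∈ Set.Ioo (0 : ℝ) 1 → 0 ≤ L →
        ∀ f : ℂ → ℂ, (∀ z w : ℂ, ‖f z - f w‖ ≤ L * ‖z - w‖ ^ α) →
          ∀ (H : Type) [NormedAddCommGroup H] [InnerProductSpace ℂ H] [CompleteSpace H]
            (N₁ N₂ : H →L[ℂ] H), IsStarNormal N₁ → IsStarNormal N₂ →
            ‖cfc f N₁ - cfc f N₂‖ ≤ c * (1 - α)⁻¹ * L * ‖N₁ - N₂‖ ^ α :=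
  ⟨96 * Real.pi + 6, by positivity, fun _ _ hα _ _ hf _ _ _ _ N₁ N₂ _ _ =>
    stmt_8_general hα.1 hα.2 hf N₁ N₂⟩
end

section
/- Let F be a closed subset of ℂ and let f : ℂ → ℂ be continuous on F. The following statements are equivalent: (a) for every complex Hilbert space H and all bounded normal operators N₁, N₂ on H with spectra contained in F, ‖f(N₁) − f(N₂)‖ ≤ ‖N₁ − N₂‖; (b) for every complex Hilbert space H, every unitary operator U on H and all bounded normal operators N₁, N₂ on H with spectra in F, ‖f(N₁)U − Uf(N₂)‖ ≤ ‖N₁U − UN₂‖; (c) for every complex Hilbert space H, every self-adjoint unitary operator U on H and every bounded normal operator N on H with spectrum in F, ‖f(N)U − Uf(N)‖ ≤ ‖NU − UN‖; (d) for every complex Hilbert space H, every bounded self-adjoint operator A on H and every bounded normal operator N on H with spectrum in F, ‖f(N)A − Af(N)‖ ≤ ‖NA − AN‖. -/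
/-!
Conjugating by a unitary `U` turns `‖N₁ U - U N₂‖` into `‖N₁ - U N₂ U*‖`, so (a) gives (b).
Applying (b) with `N₁ = N₂ = N` to the unitaries `exp (itA)` and differentiating at `t = 0` gives
(d), of which (c) is a special case. For (c) ⇒ (a), apply (c) on `H ⊕ H` to `N = N₁ ⊕ N₂` and the
swap `U`: then `N U - U N = ((N₁ - N₂) ⊕ (N₂ - N₁)) U` has norm `‖N₁ - N₂‖`.
-/

universe u

open scoped Topology

theorem norm_sub_conjStarAlgAut (𝕜 : Type*) {A : Type*} [NormedRing A] [StarRing A] [CStarRing A]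
    [SMul 𝕜 A] [IsScalarTower 𝕜 A A] [SMulCommClass 𝕜 A A] (u : unitary A) (a b : A) :
    ‖a - Unitary.conjStarAlgAut 𝕜 A u b‖ = ‖a * u - u * b‖ := by
  rw [← CStarRing.norm_mul_coe_unitary _ u, sub_mul, Unitary.conjStarAlgAut_apply,
    mul_assoc (u * b : A), Unitary.coe_star_mul_self, mul_one]

theorem isStarNormal_prodMk {A B : Type*} [Mul A] [Star A] [Mul B] [Star B] {a : A} {b : B}
    (ha : IsStarNormal a) (hb : IsStarNormal b) : IsStarNormal (a, b) :=
  ⟨Prod.ext ha.star_comm_self hb.star_comm_self⟩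

section Exponential

theorem norm_le_of_hasDerivAt_of_norm_sub_le {𝕜 E F : Type*} [NontriviallyNormedField 𝕜]
    [NormedAddCommGroup E] [NormedSpace 𝕜 E] [NormedAddCommGroup F] [NormedSpace 𝕜 F]
    {g : 𝕜 → E} {h : 𝕜 → F} {g' : E} {h' : F} {x : 𝕜}
    (hg : HasDerivAt g g' x) (hh : HasDerivAt h h' x)
    (hle : ∀ᶠ t in 𝓝[≠] x, ‖g t - g x‖ ≤ ‖h t - h x‖) : ‖g'‖ ≤ ‖h'‖ := by
  refine le_of_tendsto_of_tendsto hg.tendsto_slope.norm hh.tendsto_slope.norm ?_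
  filter_upwards [hle] with t ht
  simp only [slope_def_module, norm_smul]
  gcongr

theorem hasDerivAt_mul_exp_smul_sub_exp_smul_mul {𝕜 A : Type*} [RCLike 𝕜] [NormedRing A]
    [NormedAlgebra 𝕜 A] [CompleteSpace A] (x a : A) :
    HasDerivAt (fun t : 𝕜 ↦ x * NormedSpace.exp (t • a) - NormedSpace.exp (t • a) * x)
      (x * a - a * x) 0 := by
  have hexp : HasDerivAt (fun t : 𝕜 ↦ NormedSpace.exp (t • a)) a 0 := by
    simpa using hasDerivAt_exp_smul_const a (0 : 𝕜)
  exact (hexp.const_mul x).sub (hexp.mul_const x)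

variable {A : Type*} [NormedRing A] [NormedAlgebra ℂ A] [StarRing A] [ContinuousStar A]
  [CompleteSpace A] [StarModule ℂ A]

theorem norm_commutator_le_of_forall_unitary {x y : A}
    (h : ∀ u ∈ unitary A, ‖x * u - u * x‖ ≤ ‖y * u - u * y‖) {a : A} (ha : IsSelfAdjoint a) :
    ‖x * a - a * x‖ ≤ ‖y * a - a * y‖ := by
  have exp_mem (t : ℝ) : NormedSpace.exp (t • Complex.I • a) ∈ unitary A := by
    rw [smul_comm]
    exact (selfAdjoint.expUnitary (t • ⟨a, ha⟩)).2
  have norm_commutator_I_smul (z : A) :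
      ‖z * (Complex.I • a) - (Complex.I • a) * z‖ = ‖z * a - a * z‖ := by
    simp [← smul_sub, norm_smul]
  rw [← norm_commutator_I_smul x, ← norm_commutator_I_smul y]
  refine norm_le_of_hasDerivAt_of_norm_sub_le
    (hasDerivAt_mul_exp_smul_sub_exp_smul_mul (𝕜 := ℝ) x (Complex.I • a))
    (hasDerivAt_mul_exp_smul_sub_exp_smul_mul (𝕜 := ℝ) y (Complex.I • a)) (.of_forall fun t ↦ ?_)
  simpa using h _ (exp_mem t)

end Exponential

section HilbertSum

variable {𝕜 E F : Type*} [RCLike 𝕜]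
  [NormedAddCommGroup E] [InnerProductSpace 𝕜 E] [CompleteSpace E]
  [NormedAddCommGroup F] [InnerProductSpace 𝕜 F] [CompleteSpace F]

variable (𝕜 E F) in
/-- The block-diagonal embedding `(S, T) ↦ S ⊕ T` of pairs of operators into the operators on the
Hilbert sum `E ⊕ F`, which is encoded as `WithLp 2 (E × F)`. -/
noncomputable def blockDiagonal :
    (E →L[𝕜] E) × (F →L[𝕜] F) →⋆ₐ[𝕜] (WithLp 2 (E × F) →L[𝕜] WithLp 2 (E × F)) where
  toFun p := (WithLp.prodContinuousLinearEquiv 2 𝕜 E F).symm.toContinuousLinearMap ∘L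
    p.1.prodMap p.2 ∘L (WithLp.prodContinuousLinearEquiv 2 𝕜 E F).toContinuousLinearMap
  map_one' := rfl
  map_mul' _ _ := rfl
  map_zero' := rfl
  map_add' _ _ := rfl
  commutes' _ := rfl
  map_star' p := by
    rw [ContinuousLinearMap.star_eq_adjoint, ContinuousLinearMap.eq_adjoint_iff]
    intro x y
    simp [WithLp.prod_inner_apply, ContinuousLinearMap.star_eq_adjoint,
      ContinuousLinearMap.adjoint_inner_left]

@[simp]
theorem blockDiagonal_apply (p : (E →L[𝕜] E) × (F →L[𝕜] F)) (x : WithLp 2 (E × F)) :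
    blockDiagonal 𝕜 E F p x = WithLp.toLp 2 (p.1 x.fst, p.2 x.snd) :=
  rfl

theorem blockDiagonal_injective : Function.Injective (blockDiagonal 𝕜 E F) := by
  intro p q h
  ext x
  · simpa using congrArg WithLp.fst (DFunLike.congr_fun h (WithLp.toLp 2 (x, 0)))
  · simpa using congrArg WithLp.snd (DFunLike.congr_fun h (WithLp.toLp 2 (0, x)))

theorem spectrum_blockDiagonal_subset (S : E →L[𝕜] E) (T : F →L[𝕜] F) :
    spectrum 𝕜 (blockDiagonal 𝕜 E F (S, T)) ⊆ spectrum 𝕜 S ∪ spectrum 𝕜 T := by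
  rw [← Prod.spectrum_eq]
  exact AlgHom.spectrum_apply_subset _ _

variable (𝕜 E) in
/-- The flip `(x, y) ↦ (y, x)` of the Hilbert sum `E ⊕ E`, as a unitary operator. -/
noncomputable def swapUnitary : unitary (WithLp 2 (E × E) →L[𝕜] WithLp 2 (E × E)) :=
  Unitary.linearIsometryEquiv.symm (LinearIsometryEquiv.withLpProdComm 2 𝕜 E E)

@[simp]
theorem swapUnitary_apply (x : WithLp 2 (E × E)) :
    (swapUnitary 𝕜 E : WithLp 2 (E × E) →L[𝕜] WithLp 2 (E × E)) x =
      WithLp.toLp 2 (x.snd, x.fst) :=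
  rfl

theorem isSelfAdjoint_swapUnitary :
    IsSelfAdjoint (swapUnitary 𝕜 E : WithLp 2 (E × E) →L[𝕜] WithLp 2 (E × E)) := by
  rw [ContinuousLinearMap.isSelfAdjoint_iff_isSymmetric]
  intro x y
  simp [WithLp.prod_inner_apply, add_comm]

theorem blockDiagonal_mul_swapUnitary_sub (S T : E →L[𝕜] E) :
    blockDiagonal 𝕜 E E (S, T) * swapUnitary 𝕜 E - swapUnitary 𝕜 E * blockDiagonal 𝕜 E E (S, T) =
      blockDiagonal 𝕜 E E (S - T, T - S) * swapUnitary 𝕜 E := by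
  ext x
  simp [← WithLp.toLp_sub]

end HilbertSum

section ComplexHilbertSum

variable {E F : Type*}
  [NormedAddCommGroup E] [InnerProductSpace ℂ E] [CompleteSpace E]
  [NormedAddCommGroup F] [InnerProductSpace ℂ F] [CompleteSpace F]

theorem norm_blockDiagonal (p : (E →L[ℂ] E) × (F →L[ℂ] F)) : ‖blockDiagonal ℂ E F p‖ = ‖p‖ :=
  NonUnitalStarAlgHom.norm_map _ blockDiagonal_injective p

theorem cfc_blockDiagonal {f : ℂ → ℂ} {S : E →L[ℂ] E} {T : F →L[ℂ] F} (hS : IsStarNormal S)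
    (hT : IsStarNormal T) (hf : ContinuousOn f (spectrum ℂ S ∪ spectrum ℂ T)) :
    cfc f (blockDiagonal ℂ E F (S, T)) = blockDiagonal ℂ E F (cfc f S, cfc f T) := by
  have hST := isStarNormal_prodMk hS hT
  have hcont : Continuous (blockDiagonal ℂ E F) :=
    (AddMonoidHomClass.isometry_of_norm _ norm_blockDiagonal).continuous
  rw [← cfc_map_prod (S := ℂ) f S T hf hST hS hT]
  exact (StarAlgHom.map_cfc (blockDiagonal ℂ E F) f (S, T) (by rwa [Prod.spectrum_eq]) hcont hST
    (hST.map _)).symm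

theorem norm_blockDiagonal_mul_swapUnitary_sub (S T : E →L[ℂ] E) :
    ‖blockDiagonal ℂ E E (S, T) * swapUnitary ℂ E -
      swapUnitary ℂ E * blockDiagonal ℂ E E (S, T)‖ = ‖S - T‖ := by
  rw [blockDiagonal_mul_swapUnitary_sub, CStarRing.norm_mul_coe_unitary, norm_blockDiagonal,
    Prod.norm_mk, norm_sub_rev T S, max_self]

end ComplexHilbertSum

theorem stmt_10_general (F : Set ℂ) (f : ℂ → ℂ) (hf : ContinuousOn f F) :
    List.TFAE
      [ (∀ (H : Type u) [NormedAddCommGroup H] [InnerProductSpace ℂ H] [CompleteSpace H]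
          (N₁ N₂ : H →L[ℂ] H), IsStarNormal N₁ → IsStarNormal N₂ →
          spectrum ℂ N₁ ⊆ F → spectrum ℂ N₂ ⊆ F →
          ‖cfc f N₁ - cfc f N₂‖ ≤ ‖N₁ - N₂‖),
        (∀ (H : Type u) [NormedAddCommGroup H] [InnerProductSpace ℂ H] [CompleteSpace H]
          (U N₁ N₂ : H →L[ℂ] H), U ∈ unitary (H →L[ℂ] H) →
          IsStarNormal N₁ → IsStarNormal N₂ →
          spectrum ℂ N₁ ⊆ F → spectrum ℂ N₂ ⊆ F →
          ‖cfc f N₁ * U - U * cfc f N₂‖ ≤ ‖N₁ * U - U * N₂‖),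
        (∀ (H : Type u) [NormedAddCommGroup H] [InnerProductSpace ℂ H] [CompleteSpace H]
          (U N : H →L[ℂ] H), U ∈ unitary (H →L[ℂ] H) → IsSelfAdjoint U →
          IsStarNormal N → spectrum ℂ N ⊆ F →
          ‖cfc f N * U - U * cfc f N‖ ≤ ‖N * U - U * N‖),
        (∀ (H : Type u) [NormedAddCommGroup H] [InnerProductSpace ℂ H] [CompleteSpace H]
          (A N : H →L[ℂ] H), IsSelfAdjoint A →
          IsStarNormal N → spectrum ℂ N ⊆ F →
          ‖cfc f N * A - A * cfc f N‖ ≤ ‖N * A - A * N‖) ] := by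
  tfae_have 1 → 2 := by
    intro h H _ _ _ U N₁ N₂ hU hN₁ hN₂ hF₁ hF₂
    let φ := Unitary.conjStarAlgAut ℂ (H →L[ℂ] H) ⟨U, hU⟩
    have hφ : cfc f (φ N₂) = φ (cfc f N₂) :=
      (StarAlgHomClass.map_cfc (S := ℂ) φ f N₂ (hf.mono hF₂) (StarAlgEquiv.isometry φ).continuous
        hN₂ (hN₂.map φ)).symm
    have hle := h H N₁ (φ N₂) hN₁ (hN₂.map φ) hF₁ ((AlgEquiv.spectrum_eq φ N₂).trans_subset hF₂)
    rwa [hφ, norm_sub_conjStarAlgAut ℂ, norm_sub_conjStarAlgAut ℂ] at hle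
  tfae_have 2 → 4 := fun h H _ _ _ A N hA hN hF ↦
    norm_commutator_le_of_forall_unitary (fun U hU ↦ h H U N N hU hN hN hF hF) hA
  tfae_have 4 → 3 := fun h H _ _ _ U N _ hU hN hF ↦ h H U N hU hN hF
  tfae_have 3 → 1 := by
    intro h H _ _ _ N₁ N₂ hN₁ hN₂ hF₁ hF₂
    have hF := Set.union_subset hF₁ hF₂
    have hle := h (WithLp 2 (H × H)) (swapUnitary ℂ H) (blockDiagonal ℂ H H (N₁, N₂))
      (swapUnitary ℂ H).2 isSelfAdjoint_swapUnitary ((isStarNormal_prodMk hN₁ hN₂).map _)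
      ((spectrum_blockDiagonal_subset N₁ N₂).trans hF)
    rwa [cfc_blockDiagonal hN₁ hN₂ (hf.mono hF), norm_blockDiagonal_mul_swapUnitary_sub,
      norm_blockDiagonal_mul_swapUnitary_sub] at hle
  tfae_finish

/-- Let `F ⊆ ℂ` be closed and `f : ℂ → ℂ` continuous on `F`. The following are
equivalent:
(a) `‖f(N₁) - f(N₂)‖ ≤ ‖N₁ - N₂‖` for all bounded normal `N₁`, `N₂` with
spectra in `F`;
(b) `‖f(N₁)U - Uf(N₂)‖ ≤ ‖N₁U - UN₂‖` for every unitary `U` and all bounded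
normal `N₁`, `N₂` with spectra in `F`;
(c) `‖f(N)U - Uf(N)‖ ≤ ‖NU - UN‖` for every self-adjoint unitary `U` and every
bounded normal `N` with spectrum in `F`;
(d) `‖f(N)A - Af(N)‖ ≤ ‖NA - AN‖` for every bounded self-adjoint `A` and every
bounded normal `N` with spectrum in `F`. -/
theorem stmt_10 (F : Set ℂ) (hF : IsClosed F) (f : ℂ → ℂ) (hf : ContinuousOn f F) :
    List.TFAE
      [ (∀ (H : Type) [NormedAddCommGroup H] [InnerProductSpace ℂ H] [CompleteSpace H]
          (N₁ N₂ : H →L[ℂ] H), IsStarNormal N₁ → IsStarNormal N₂ →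
          spectrum ℂ N₁ ⊆ F → spectrum ℂ N₂ ⊆ F →
          ‖cfc f N₁ - cfc f N₂‖ ≤ ‖N₁ - N₂‖),
        (∀ (H : Type) [NormedAddCommGroup H] [InnerProductSpace ℂ H] [CompleteSpace H]
          (U N₁ N₂ : H →L[ℂ] H), U ∈ unitary (H →L[ℂ] H) →
          IsStarNormal N₁ → IsStarNormal N₂ →
          spectrum ℂ N₁ ⊆ F → spectrum ℂ N₂ ⊆ F →
          ‖cfc f N₁ * U - U * cfc f N₂‖ ≤ ‖N₁ * U - U * N₂‖),
        (∀ (H : Type) [NormedAddCommGroup H] [InnerProductSpace ℂ H] [CompleteSpace H]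
          (U N : H →L[ℂ] H), U ∈ unitary (H →L[ℂ] H) → IsSelfAdjoint U →
          IsStarNormal N → spectrum ℂ N ⊆ F →
          ‖cfc f N * U - U * cfc f N‖ ≤ ‖N * U - U * N‖),
        (∀ (H : Type) [NormedAddCommGroup H] [InnerProductSpace ℂ H] [CompleteSpace H]
          (A N : H →L[ℂ] H), IsSelfAdjoint A →
          IsStarNormal N → spectrum ℂ N ⊆ F →
          ‖cfc f N * A - A * cfc f N‖ ≤ ‖N * A - A * N‖) ] :=
  stmt_10_general F f hf
end

section
/- f-regularity passes to pairs with smaller spectra: Let N₁ and N₂ be bounded normal operators on complex Hilbert spaces H₁ and H₂ respectively, and let f : ℂ → ℂ be continuous on σ(N₁) ∪ σ(N₂). Suppose that ‖f(N₁)R − Rf(N₂)‖ ≤ ‖N₁R − RN₂‖ for every bounded linear operator R : H₂ → H₁. Then for all complex Hilbert spaces K₁, K₂, all bounded normal operators M₁ on K₁ and M₂ on K₂ with σ(M₁) ⊆ σ(N₁) and σ(M₂) ⊆ σ(N₂), and every bounded linear operator R : K₂ → K₁, one has ‖f(M₁)R − Rf(M₂)‖ ≤ ‖M₁R − RM₂‖.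 -/
/-!
Write `δ_{P,Q}(R) = P R - R Q`; it obeys the Leibniz rule
`δ_{P,P'}(S T) = δ_{P,Q}(S) T + S δ_{Q,P'}(T)`.  Hence an inequality between two generalized
derivations survives conjugation by contractions that almost intertwine the operators involved.

Such contractions arise as follows.  If the functions `p i` live near points `c i` and satisfy
`∑ ‖p i‖ ^ 2 ≤ 1` on `σ(N)`, and the vectors `y i` have norm at most one, then
`a ↦ ∑ a i • p i (N) (y i)` is a contraction from `ℂ^ι` which almost intertwines `diag (g ∘ c)` and
`g(N)`.  Disjoint bumps at points of `σ(N)` give isometries of this kind; they carry regularity of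
`(N₁, N₂)` down to diagonal matrices with entries in the two spectra.  Square partitions of unity
on `σ(M)` give such contractions with any prescribed vector in the image of a vector of no larger
norm; they carry regularity of diagonal matrices up to `(M₁, M₂)`.
-/

open Function Metric Topology
open scoped InnerProductSpace InnerProduct

section GeneralizedDerivation

/-- The generalized derivation `δ_{P,Q}(R) = P R - R Q`, measuring how far `R` is from intertwining
`Q` and `P`. -/
def generalizedDerivation {𝕜 E F : Type*} [NontriviallyNormedField 𝕜]
    [NormedAddCommGroup E] [NormedSpace 𝕜 E] [NormedAddCommGroup F] [NormedSpace 𝕜 F]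
    (P : F →L[𝕜] F) (Q : E →L[𝕜] E) (R : E →L[𝕜] F) : E →L[𝕜] F :=
  P ∘L R - R ∘L Q

variable {𝕜 E E' F F' : Type*}

section Normed

variable [NontriviallyNormedField 𝕜]
  [NormedAddCommGroup E] [NormedSpace 𝕜 E] [NormedAddCommGroup E'] [NormedSpace 𝕜 E']
  [NormedAddCommGroup F] [NormedSpace 𝕜 F] [NormedAddCommGroup F'] [NormedSpace 𝕜 F']

lemma generalizedDerivation_comp (P : F →L[𝕜] F) (Q : E →L[𝕜] E) (P' : E' →L[𝕜] E')
    (S : E →L[𝕜] F) (T : E' →L[𝕜] E) :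
    generalizedDerivation P P' (S ∘L T) =
      generalizedDerivation P Q S ∘L T + S ∘L generalizedDerivation Q P' T := by
  ext v
  simp [generalizedDerivation]

lemma norm_comp_comp_le_of_norm_le_one {S : F →L[𝕜] F'} {T : E' →L[𝕜] E} (hS : ‖S‖ ≤ 1)
    (hT : ‖T‖ ≤ 1) (X : E →L[𝕜] F) : ‖S ∘L X ∘L T‖ ≤ ‖X‖ :=
  calc ‖S ∘L X ∘L T‖ ≤ ‖S‖ * (‖X‖ * ‖T‖) :=
        (S.opNorm_comp_le _).trans (by gcongr; exact X.opNorm_comp_le T)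
    _ ≤ 1 * (‖X‖ * 1) := by gcongr
    _ = ‖X‖ := by ring

lemma norm_comp_generalizedDerivation_comp_sub_le {P₁ : F' →L[𝕜] F'} {Q₁ : F →L[𝕜] F}
    {Q₂ : E →L[𝕜] E} {P₂ : E' →L[𝕜] E'} {S : F →L[𝕜] F'} {T : E' →L[𝕜] E} {ε : ℝ}
    (hS : ‖S‖ ≤ 1) (hT : ‖T‖ ≤ 1) (hPS : ‖generalizedDerivation P₁ Q₁ S‖ ≤ ε)
    (hPT : ‖generalizedDerivation Q₂ P₂ T‖ ≤ ε) (R : E →L[𝕜] F) :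
    ‖S ∘L generalizedDerivation Q₁ Q₂ R ∘L T - generalizedDerivation P₁ P₂ (S ∘L R ∘L T)‖ ≤
      2 * ε * ‖R‖ := by
  have leibniz : S ∘L generalizedDerivation Q₁ Q₂ R ∘L T -
      generalizedDerivation P₁ P₂ (S ∘L R ∘L T) =
      -(generalizedDerivation P₁ Q₁ S ∘L R ∘L T + S ∘L R ∘L generalizedDerivation Q₂ P₂ T) := by
    rw [generalizedDerivation_comp P₁ Q₁ P₂, generalizedDerivation_comp Q₁ Q₂ P₂,
      ContinuousLinearMap.comp_add]
    abel
  have hε : 0 ≤ ε := (norm_nonneg _).trans hPS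
  calc _ ≤ ‖generalizedDerivation P₁ Q₁ S‖ * (‖R‖ * ‖T‖) +
        ‖S‖ * (‖R‖ * ‖generalizedDerivation Q₂ P₂ T‖) := by
        rw [leibniz, norm_neg]
        refine (norm_add_le _ _).trans (add_le_add ?_ ?_) <;>
        refine (ContinuousLinearMap.opNorm_comp_le _ _).trans ?_ <;>
        gcongr <;> exact ContinuousLinearMap.opNorm_comp_le _ _
    _ ≤ ε * (‖R‖ * 1) + 1 * (‖R‖ * ε) := by gcongr
    _ = 2 * ε * ‖R‖ := by ring

lemma norm_comp_generalizedDerivation_comp_le {P₁ P₁' : F' →L[𝕜] F'} {Q₁ Q₁' : F →L[𝕜] F}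
    {Q₂ Q₂' : E →L[𝕜] E} {P₂ P₂' : E' →L[𝕜] E'} {S : F →L[𝕜] F'} {T : E' →L[𝕜] E} {ε : ℝ}
    (hS : ‖S‖ ≤ 1) (hT : ‖T‖ ≤ 1)
    (hPS : ‖generalizedDerivation P₁ Q₁ S‖ ≤ ε) (hPT : ‖generalizedDerivation Q₂ P₂ T‖ ≤ ε)
    (hPS' : ‖generalizedDerivation P₁' Q₁' S‖ ≤ ε) (hPT' : ‖generalizedDerivation Q₂' P₂' T‖ ≤ ε)
    {R : E →L[𝕜] F}
    (hR : ‖generalizedDerivation P₁ P₂ (S ∘L R ∘L T)‖ ≤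
      ‖generalizedDerivation P₁' P₂' (S ∘L R ∘L T)‖) :
    ‖S ∘L generalizedDerivation Q₁ Q₂ R ∘L T‖ ≤
      ‖generalizedDerivation Q₁' Q₂' R‖ + ε * (4 * ‖R‖) := by
  have h := norm_comp_generalizedDerivation_comp_sub_le hS hT hPS hPT R
  have h' := norm_comp_generalizedDerivation_comp_sub_le hS hT hPS' hPT' R
  rw [norm_sub_rev] at h'
  linarith [(norm_sub_norm_le _ _).trans h, (norm_sub_norm_le _ _).trans h',
    norm_comp_comp_le_of_norm_le_one hS hT (generalizedDerivation Q₁' Q₂' R)]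

end Normed

section Hilbert

variable [RCLike 𝕜]
  [NormedAddCommGroup E] [InnerProductSpace 𝕜 E] [CompleteSpace E]
  [NormedAddCommGroup E'] [InnerProductSpace 𝕜 E'] [CompleteSpace E']
  [NormedAddCommGroup F] [InnerProductSpace 𝕜 F] [CompleteSpace F]
  [NormedAddCommGroup F'] [InnerProductSpace 𝕜 F'] [CompleteSpace F']

lemma norm_generalizedDerivation_adjoint (P : E →L[𝕜] E) (Q : F →L[𝕜] F) (R : E →L[𝕜] F) :
    ‖generalizedDerivation P Q (R†)‖ = ‖generalizedDerivation (Q†) (P†) R‖ := by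
  have adjoint_eq : (generalizedDerivation P Q (R†))† = -generalizedDerivation (Q†) (P†) R := by
    simp [generalizedDerivation, ContinuousLinearMap.adjoint_comp]
  rw [← ContinuousLinearMap.adjoint.norm_map, adjoint_eq, norm_neg]

lemma norm_le_one_of_adjoint_comp_self {V : E →L[𝕜] F}
    (hV : V† ∘L V = ContinuousLinearMap.id 𝕜 E) : ‖V‖ ≤ 1 :=
  V.opNorm_le_bound zero_le_one fun v ↦ by
    rw [V.norm_map_iff_adjoint_comp_self.2 hV, one_mul]

lemma norm_le_norm_comp_comp_adjoint_of_adjoint_comp_self {V : F →L[𝕜] F'} {W : E →L[𝕜] E'}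
    (hV : V† ∘L V = ContinuousLinearMap.id 𝕜 F) (hW : W† ∘L W = ContinuousLinearMap.id 𝕜 E)
    (X : E →L[𝕜] F) : ‖X‖ ≤ ‖V ∘L X ∘L W†‖ := by
  have X_eq : X = V† ∘L (V ∘L X ∘L W†) ∘L W := by
    ext u
    have hVX : (V†) (V (X u)) = X u := DFunLike.congr_fun hV _
    have hWu : (W†) (W u) = u := DFunLike.congr_fun hW _
    simp [hVX, hWu]
  calc ‖X‖ = ‖V† ∘L (V ∘L X ∘L W†) ∘L W‖ := congrArg _ X_eq
    _ ≤ ‖V ∘L X ∘L W†‖ := norm_comp_comp_le_of_norm_le_one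
        ((ContinuousLinearMap.adjoint.norm_map V).trans_le (norm_le_one_of_adjoint_comp_self hV))
        (norm_le_one_of_adjoint_comp_self hW) _

end Hilbert

end GeneralizedDerivation

section Synthesis

variable {𝕜 ι H : Type*} [RCLike 𝕜] [Fintype ι] [NormedAddCommGroup H] [InnerProductSpace 𝕜 H]

/-- The operator on `𝕜^ι` given by the diagonal matrix with entries `d`. -/
noncomputable def diagonalCLM [DecidableEq ι] (d : ι → 𝕜) :
    EuclideanSpace 𝕜 ι →L[𝕜] EuclideanSpace 𝕜 ι :=
  Matrix.toEuclideanCLM (𝕜 := 𝕜) (Matrix.diagonal d)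

/-- The synthesis operator `a ↦ ∑ a i • w i` of a finite family of vectors. -/
noncomputable def synthesis (w : ι → H) : EuclideanSpace 𝕜 ι →L[𝕜] H :=
  ∑ i, (EuclideanSpace.proj i).smulRight (w i)

lemma diagonalCLM_apply [DecidableEq ι] (d : ι → 𝕜) (a : EuclideanSpace 𝕜 ι) (i : ι) :
    diagonalCLM d a i = d i * a i := by
  simp [diagonalCLM, Matrix.mulVec_diagonal]

lemma adjoint_diagonalCLM [DecidableEq ι] (d : ι → 𝕜) :
    (diagonalCLM d)† = diagonalCLM (star d) := by
  rw [← ContinuousLinearMap.star_eq_adjoint, diagonalCLM, ← map_star,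
    Matrix.star_eq_conjTranspose, Matrix.diagonal_conjTranspose, diagonalCLM]

lemma synthesis_apply (w : ι → H) (a : EuclideanSpace 𝕜 ι) : synthesis w a = ∑ i, a i • w i := by
  simp [synthesis]

lemma adjoint_synthesis_apply [CompleteSpace H] (w : ι → H) (v : H) (i : ι) :
    ((synthesis (𝕜 := 𝕜) w)†) v i = ⟪w i, v⟫_𝕜 := by
  classical
  rw [← one_mul (((synthesis (𝕜 := 𝕜) w)†) v i), ← map_one (starRingEnd 𝕜),
    ← EuclideanSpace.inner_single_left, ContinuousLinearMap.adjoint_inner_right, synthesis_apply]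
  simp

lemma norm_synthesis_le [CompleteSpace H] {w : ι → H} {C : ℝ} (hC : 0 ≤ C)
    (hw : ∀ v, ∑ i, ‖⟪w i, v⟫_𝕜‖ ^ 2 ≤ C ^ 2 * ‖v‖ ^ 2) : ‖synthesis (𝕜 := 𝕜) w‖ ≤ C := by
  rw [← ContinuousLinearMap.adjoint.norm_map]
  refine ContinuousLinearMap.opNorm_le_bound _ hC fun v ↦ le_of_sq_le_sq ?_ (by positivity)
  simpa only [EuclideanSpace.norm_sq_eq, adjoint_synthesis_apply, mul_pow] using hw v

lemma adjoint_synthesis_comp_synthesis [CompleteSpace H] {w : ι → H} (hw : Orthonormal 𝕜 w) :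
    (synthesis w)† ∘L synthesis w = ContinuousLinearMap.id 𝕜 (EuclideanSpace 𝕜 ι) := by
  ext a i
  rw [ContinuousLinearMap.comp_apply, adjoint_synthesis_apply, synthesis_apply,
    hw.inner_right_fintype, ContinuousLinearMap.id_apply]

lemma generalizedDerivation_diagonalCLM_synthesis [DecidableEq ι] (P : H →L[𝕜] H) (d : ι → 𝕜)
    (w : ι → H) :
    generalizedDerivation P (diagonalCLM d) (synthesis w) =
      synthesis (fun i ↦ P (w i) - d i • w i) := by
  ext a
  simp [generalizedDerivation, synthesis_apply, diagonalCLM_apply, smul_sub, smul_smul, mul_comm]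

end Synthesis

section Localized

/-- Functions `p i`, each vanishing on `X` outside the ball of radius `r` about the point
`c i ∈ X`, with `∑ ‖p i‖ ^ 2 ≤ 1` on `X`. -/
structure IsLocalizedFamily {ι : Type*} [Fintype ι] (X : Set ℂ) (r : ℝ) (c : ι → ℂ)
    (p : ι → ℂ → ℂ) : Prop where
  mem : ∀ i, c i ∈ X
  continuousOn : ∀ i, ContinuousOn (p i) X
  dist_lt : ∀ i, ∀ z ∈ X, p i z ≠ 0 → dist z (c i) < r
  sum_sq_le_one : ∀ z ∈ X, ∑ i, ‖p i z‖ ^ 2 ≤ 1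

variable {X : Set ℂ} {r : ℝ}

lemma sum_norm_sq_le_one_of_disjoint_support {ι α E : Type*} [Fintype ι] [SeminormedAddGroup E]
    {p : ι → α → E} (hp : Pairwise (Disjoint on fun i ↦ support (p i)))
    (hp_le : ∀ i z, ‖p i z‖ ≤ 1) (z : α) : ∑ i, ‖p i z‖ ^ 2 ≤ 1 := by
  by_cases h : ∃ i, p i z ≠ 0
  · obtain ⟨i, hi⟩ := h
    rw [Finset.sum_eq_single i _ (by simp)]
    · exact pow_le_one₀ (norm_nonneg _) (hp_le i z)
    · intro j _ hji
      have hj : p j z = 0 := notMem_support.1 (Set.disjoint_right.1 (hp hji) hi)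
      simp [hj]
  · push Not at h
    simp [h]

lemma exists_isLocalizedFamily_disjoint_bumps {ι : Type*} [Fintype ι] {c : ι → ℂ}
    (hc : Injective c) (hcX : ∀ i, c i ∈ X) (hr : 0 < r) :
    ∃ p : ι → ℂ → ℂ, IsLocalizedFamily X r c p ∧ (∀ i, ∀ᶠ z in 𝓝 (c i), p i z = 1) ∧
      Pairwise (Disjoint on fun i ↦ support (p i)) := by
  obtain ⟨U, hU, hU_disj⟩ :=
    (Pairwise.exists_mem_filter_of_disjoint fun i j hij ↦ disjoint_nhds_nhds.2 (hc.ne hij) :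
      ∃ U : ι → Set ℂ, (∀ i, U i ∈ 𝓝 (c i)) ∧ Pairwise (Disjoint on U))
  choose ρ hρ hρU using fun i ↦
    Metric.mem_nhds_iff.1 (Filter.inter_mem (hU i) (ball_mem_nhds (c i) hr))
  let φ (i : ι) : ContDiffBump (c i) := ⟨ρ i / 2, ρ i, half_pos (hρ i), half_lt_self (hρ i)⟩
  have support_φ (i : ι) : support (fun z ↦ (φ i z : ℂ)) ⊆ U i ∩ ball (c i) r := by
    intro z hz
    exact hρU i ((φ i).support_eq ▸ Complex.ofReal_ne_zero.1 hz)
  have disj : Pairwise (Disjoint on fun i ↦ support (fun z ↦ (φ i z : ℂ))) :=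
    fun i j hij ↦ (hU_disj hij).mono ((support_φ i).trans Set.inter_subset_left)
      ((support_φ j).trans Set.inter_subset_left)
  refine ⟨fun i z ↦ φ i z, ⟨hcX, fun i ↦ ?_, fun i z _ hz ↦ (support_φ i hz).2, fun z _ ↦ ?_⟩,
    fun i ↦ ?_, disj⟩
  · exact (Complex.continuous_ofReal.comp (φ i).continuous).continuousOn
  · refine sum_norm_sq_le_one_of_disjoint_support disj (fun i z ↦ ?_) z
    rw [Complex.norm_real, Real.norm_of_nonneg (φ i).nonneg]
    exact (φ i).le_one
  · filter_upwards [(φ i).eventuallyEq_one] with z hz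
    simp [hz]

lemma exists_isLocalizedFamily_sum_sq_eq_one (hX : IsCompact X) (hr : 0 < r) :
    ∃ (s : Finset ℂ) (p : s → ℂ → ℂ), IsLocalizedFamily X r (↑) p ∧
      ∀ z ∈ X, ∑ i, p i z ^ 2 = 1 := by
  obtain ⟨t, htX, ht, hXt⟩ := hX.finite_cover_balls hr
  lift t to Finset ℂ using ht
  obtain ⟨φ, hφ⟩ := PartitionOfUnity.exists_isSubordinate hX.isClosed (fun i : t ↦ ball (i : ℂ) r)
    (fun _ ↦ isOpen_ball) (by simpa [Set.iUnion_subtype] using hXt)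
  have sum_φ (z : ℂ) (hz : z ∈ X) : ∑ i, φ i z = 1 := by
    rw [← finsum_eq_sum_of_fintype]
    exact φ.sum_eq_one hz
  refine ⟨t, fun i z ↦ (√(φ i z) : ℝ), ⟨fun i ↦ htX i.2, fun i ↦ ?_, fun i z _ hz ↦ ?_,
    fun z hz ↦ ?_⟩, fun z hz ↦ ?_⟩
  · fun_prop
  · refine hφ i (subset_tsupport _ fun h ↦ hz ?_)
    simp [h]
  · simp [-Finset.univ_eq_attach, Real.sq_sqrt (φ.nonneg _ _), sum_φ z hz]
  · simp [-Finset.univ_eq_attach, ← Complex.ofReal_pow, Real.sq_sqrt (φ.nonneg _ _),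
      ← Complex.ofReal_sum, sum_φ z hz]

end Localized

section FunctionalCalculus

variable {ι H : Type*} [NormedAddCommGroup H] [InnerProductSpace ℂ H] [CompleteSpace H]
  {N : H →L[ℂ] H}

lemma inner_cfc_apply_eq_zero {p q : ℂ → ℂ} (hp : ContinuousOn p (spectrum ℂ N))
    (hq : ContinuousOn q (spectrum ℂ N)) (hpq : Disjoint (support p) (support q)) (u v : H) :
    ⟪cfc p N u, cfc q N v⟫_ℂ = 0 := by
  have star_mul_eq_zero : star (cfc p N) * cfc q N = 0 := by
    rw [← cfc_star, ← cfc_mul _ _ N hp.star hq, ← cfc_const_zero ℂ N]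
    refine cfc_congr fun z _ ↦ ?_
    by_cases hz : p z = 0
    · simp [hz]
    · simp [notMem_support.1 (Set.disjoint_left.1 hpq hz)]
  rw [← ContinuousLinearMap.adjoint_inner_right, ← ContinuousLinearMap.star_eq_adjoint,
    ← mul_apply_eq_comp, star_mul_eq_zero, zero_apply,
    inner_zero_right]

variable [Fintype ι]

lemma sum_norm_cfc_apply_sq_le {p : ι → ℂ → ℂ} {C : ℝ} (hC : 0 ≤ C)
    (hp : ∀ i, ContinuousOn (p i) (spectrum ℂ N))
    (hpC : ∀ z ∈ spectrum ℂ N, ∑ i, ‖p i z‖ ^ 2 ≤ C) (v : H) :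
    ∑ i, ‖cfc (p i) N v‖ ^ 2 ≤ C * ‖v‖ ^ 2 := by
  let Q : H →L[ℂ] H := cfc (∑ i, fun z ↦ star (p i z) * p i z) N
  have Q_eq : Q = ∑ i, star (cfc (p i) N) * cfc (p i) N := by
    simp only [Q]
    rw [cfc_sum_univ (fun i z ↦ star (p i z) * p i z) N fun i ↦ (hp i).star.mul (hp i)]
    exact Finset.sum_congr rfl fun i _ ↦ by rw [cfc_mul _ _ N (hp i).star (hp i), cfc_star]
  have norm_Q_le : ‖Q‖ ≤ C := by
    refine norm_cfc_le hC fun z hz ↦ ?_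
    have h : ∑ i, star (p i z) * p i z = ((∑ i, ‖p i z‖ ^ 2 : ℝ) : ℂ) := by
      simp [Complex.conj_mul']
    rw [Finset.sum_apply, h, Complex.norm_real, Real.norm_of_nonneg (by positivity)]
    exact hpC z hz
  have inner_Q : ⟪v, Q v⟫_ℂ = ((∑ i, ‖cfc (p i) N v‖ ^ 2 : ℝ) : ℂ) := by
    simp [Q_eq, ContinuousLinearMap.star_eq_adjoint,
      ContinuousLinearMap.adjoint_inner_right, inner_self_eq_norm_sq_to_K]
  calc ∑ i, ‖cfc (p i) N v‖ ^ 2 = ‖⟪v, Q v⟫_ℂ‖ := by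
        rw [inner_Q, Complex.norm_real, Real.norm_of_nonneg (by positivity)]
    _ ≤ ‖v‖ * (C * ‖v‖) :=
        (norm_inner_le_norm _ _).trans (by gcongr; exact Q.le_of_opNorm_le norm_Q_le v)
    _ = C * ‖v‖ ^ 2 := by ring

lemma norm_synthesis_cfc_le {p : ι → ℂ → ℂ} {y : ι → H} {C : ℝ} (hC : 0 ≤ C)
    (hp : ∀ i, ContinuousOn (p i) (spectrum ℂ N))
    (hpC : ∀ z ∈ spectrum ℂ N, ∑ i, ‖p i z‖ ^ 2 ≤ C ^ 2) (hy : ∀ i, ‖y i‖ ≤ 1) :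
    ‖synthesis (𝕜 := ℂ) fun i ↦ cfc (p i) N (y i)‖ ≤ C := by
  refine norm_synthesis_le hC fun v ↦ ?_
  have coord_le (i : ι) : ‖⟪cfc (p i) N (y i), v⟫_ℂ‖ ≤ ‖cfc (fun z ↦ star (p i z)) N v‖ := by
    rw [cfc_star, ContinuousLinearMap.star_eq_adjoint, ← ContinuousLinearMap.adjoint_inner_right]
    exact (norm_inner_le_norm _ _).trans (mul_le_of_le_one_left (norm_nonneg _) (hy i))
  calc ∑ i, ‖⟪cfc (p i) N (y i), v⟫_ℂ‖ ^ 2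
      ≤ ∑ i, ‖cfc (fun z ↦ star (p i z)) N v‖ ^ 2 := by gcongr with i; exact coord_le i
    _ ≤ C ^ 2 * ‖v‖ ^ 2 :=
        sum_norm_cfc_apply_sq_le (sq_nonneg C) (fun i ↦ (hp i).star) (by simpa using hpC) v

variable [IsStarNormal N]

lemma exists_norm_eq_one_cfc_apply_eq_self {p : ℂ → ℂ} {c : ℂ} (hc : c ∈ spectrum ℂ N)
    (hp : ContinuousOn p (spectrum ℂ N)) (hpc : ∀ᶠ z in 𝓝 c, p z = 1) :
    ∃ e : H, ‖e‖ = 1 ∧ cfc p N e = e := by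
  obtain ⟨ρ, hρ, hpρ⟩ := Metric.eventually_nhds_iff_ball.1 hpc
  let φ : ContDiffBump c := ⟨ρ / 2, ρ, half_pos hρ, half_lt_self hρ⟩
  let ψ : ℂ → ℂ := fun z ↦ φ z
  have hψ : ContinuousOn ψ (spectrum ℂ N) :=
    (Complex.continuous_ofReal.comp φ.continuous).continuousOn
  have cfc_ψ_ne_zero : cfc ψ N ≠ 0 := by
    rw [← cfc_const_zero ℂ N, Ne, cfc_eq_cfc_iff_eqOn]
    intro h
    simpa [ψ, φ.eventuallyEq_one.eq_of_nhds] using h hc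
  have cfc_mul_cfc_ψ : cfc p N * cfc ψ N = cfc ψ N := by
    rw [← cfc_mul p ψ N hp hψ]
    refine cfc_congr fun z _ ↦ ?_
    rcases lt_or_ge (dist z c) ρ with hz | hz
    · simp [hpρ z hz]
    · simp [ψ, φ.zero_of_le_dist hz]
  obtain ⟨v, hv⟩ := DFunLike.ne_iff.1 cfc_ψ_ne_zero
  refine ⟨((‖cfc ψ N v‖⁻¹ : ℝ) : ℂ) • cfc ψ N v, by simpa using norm_smul_inv_norm (𝕜 := ℂ) hv, ?_⟩
  rw [map_smul, ← mul_apply_eq_comp, cfc_mul_cfc_ψ]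

lemma sum_cfc_apply_cfc_apply {p : ι → ℂ → ℂ} (hp : ∀ i, ContinuousOn (p i) (spectrum ℂ N))
    (hp_sq : ∀ z ∈ spectrum ℂ N, ∑ i, p i z ^ 2 = 1) (x : H) :
    ∑ i, cfc (p i) N (cfc (p i) N x) = x := by
  have sum_sq : ∑ i, cfc (p i) N * cfc (p i) N = 1 := by
    rw [← cfc_const_one ℂ N]
    simp_rw [fun i ↦ (cfc_mul (p i) (p i) N (hp i) (hp i)).symm]
    rw [← cfc_sum_univ (fun i z ↦ p i z * p i z) N fun i ↦ (hp i).mul (hp i)]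
    refine cfc_congr fun z hz ↦ ?_
    simpa [sq] using hp_sq z hz
  simpa using DFunLike.congr_fun sum_sq x

end FunctionalCalculus

section ApproximateIntertwining

/-- A contraction `T` from `ℂ^ι` which, for every `g ∈ F`, intertwines the diagonal matrix with
entries `g (c i)` and the operator `g(N)` up to an error `ε`, and whose adjoint intertwines them in
the opposite direction up to the same error. -/
structure ApproxIntertwines {ι H : Type*} [Fintype ι] [DecidableEq ι] [NormedAddCommGroup H]
    [InnerProductSpace ℂ H] [CompleteSpace H] (F : Set (ℂ → ℂ)) (ε : ℝ) (c : ι → ℂ)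
    (N : H →L[ℂ] H) (T : EuclideanSpace ℂ ι →L[ℂ] H) : Prop where
  norm_le_one : ‖T‖ ≤ 1
  norm_le : ∀ g ∈ F, ‖generalizedDerivation (cfc g N) (diagonalCLM (g ∘ c)) T‖ ≤ ε
  norm_adjoint_le : ∀ g ∈ F, ‖generalizedDerivation (diagonalCLM (g ∘ c)) (cfc g N) (T†)‖ ≤ ε

lemma exists_pos_forall_dist_lt_dist_le {α β : Type*} [PseudoMetricSpace α] [PseudoMetricSpace β]
    {X : Set α} (hX : IsCompact X) {F : Set (α → β)} (hF : F.Finite)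
    (hF_cont : ∀ g ∈ F, ContinuousOn g X) {ε : ℝ} (hε : 0 < ε) :
    ∃ r > 0, ∀ g ∈ F, ∀ z ∈ X, ∀ w ∈ X, dist z w < r → dist (g z) (g w) ≤ ε := by
  have eventually_scale : ∀ g ∈ F, ∀ᶠ r in 𝓝[>] (0 : ℝ),
      ∀ z ∈ X, ∀ w ∈ X, dist z w < r → dist (g z) (g w) ≤ ε := by
    intro g hg
    obtain ⟨r, hr, h⟩ := Metric.uniformContinuousOn_iff.1
      (hX.uniformContinuousOn_of_continuous (hF_cont g hg)) ε hε
    filter_upwards [Ioo_mem_nhdsGT hr] with r' hr' z hz w hw hzw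
    exact (h z hz w hw (hzw.trans hr'.2)).le
  obtain ⟨r, h, hr⟩ := (((Filter.eventually_all_finite hF).2 eventually_scale).and
    self_mem_nhdsWithin).exists
  exact ⟨r, hr, h⟩

variable {ι H : Type*} [Fintype ι] [DecidableEq ι]
  [NormedAddCommGroup H] [InnerProductSpace ℂ H] [CompleteSpace H] {N : H →L[ℂ] H}
  {r ε : ℝ} {c : ι → ℂ} {p : ι → ℂ → ℂ} {y : ι → H} {F : Set (ℂ → ℂ)}

lemma IsLocalizedFamily.norm_generalizedDerivation_synthesis_le [IsStarNormal N]
    (hp : IsLocalizedFamily (spectrum ℂ N) r c p) (hy : ∀ i, ‖y i‖ ≤ 1) (hε : 0 ≤ ε) {g : ℂ → ℂ}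
    (hg : ContinuousOn g (spectrum ℂ N)) (hgε : ∀ z ∈ spectrum ℂ N, ∀ w ∈ spectrum ℂ N,
      dist z w < r → dist (g z) (g w) ≤ ε) :
    ‖generalizedDerivation (cfc g N) (diagonalCLM (g ∘ c))
      (synthesis fun i ↦ cfc (p i) N (y i))‖ ≤ ε := by
  have column_eq (i : ι) : cfc g N (cfc (p i) N (y i)) - g (c i) • cfc (p i) N (y i) =
      cfc (fun z ↦ (g z - g (c i)) * p i z) N (y i) := by
    rw [cfc_mul _ _ N (by fun_prop) (hp.continuousOn i), cfc_sub _ _ N, cfc_const (g (c i)) N]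
    simp [Algebra.algebraMap_eq_smul_one]
  simp only [generalizedDerivation_diagonalCLM_synthesis, comp_apply, column_eq]
  refine norm_synthesis_cfc_le hε (fun i ↦ (hg.sub continuousOn_const).mul (hp.continuousOn i))
    (fun z hz ↦ ?_) hy
  have term_le (i : ι) : ‖(g z - g (c i)) * p i z‖ ≤ ε * ‖p i z‖ := by
    rcases eq_or_ne (p i z) 0 with h | h
    · simp [h]
    · rw [norm_mul, ← dist_eq_norm]
      gcongr
      exact hgε z hz _ (hp.mem i) (hp.dist_lt i z hz h)
  calc ∑ i, ‖(g z - g (c i)) * p i z‖ ^ 2 ≤ ∑ i, (ε * ‖p i z‖) ^ 2 := by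
        gcongr with i; exact term_le i
    _ = ε ^ 2 * ∑ i, ‖p i z‖ ^ 2 := by simp only [mul_pow, Finset.mul_sum]
    _ ≤ ε ^ 2 := mul_le_of_le_one_right (sq_nonneg ε) (hp.sum_sq_le_one z hz)

lemma IsLocalizedFamily.approxIntertwines_synthesis [IsStarNormal N]
    (hp : IsLocalizedFamily (spectrum ℂ N) r c p) (hy : ∀ i, ‖y i‖ ≤ 1) (hε : 0 ≤ ε)
    (hF : ∀ g ∈ F, ContinuousOn g (spectrum ℂ N))
    (hFε : ∀ g ∈ F, ∀ z ∈ spectrum ℂ N, ∀ w ∈ spectrum ℂ N,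
      dist z w < r → dist (g z) (g w) ≤ ε) :
    ApproxIntertwines F ε c N (synthesis fun i ↦ cfc (p i) N (y i)) where
  norm_le_one := norm_synthesis_cfc_le zero_le_one hp.continuousOn
    (by simpa using hp.sum_sq_le_one) hy
  norm_le g hg := hp.norm_generalizedDerivation_synthesis_le hy hε (hF g hg) (hFε g hg)
  norm_adjoint_le g hg := by
    rw [norm_generalizedDerivation_adjoint, adjoint_diagonalCLM,
      ← ContinuousLinearMap.star_eq_adjoint, ← cfc_star]
    refine hp.norm_generalizedDerivation_synthesis_le (g := fun z ↦ star (g z)) hy hε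
      (hF g hg).star fun z hz w hw hzw ↦ ?_
    rw [dist_star_star]
    exact hFε g hg z hz w hw hzw

lemma exists_approxIntertwines_adjoint_comp_self_eq_id [IsStarNormal N] (hF : F.Finite)
    (hF_cont : ∀ g ∈ F, ContinuousOn g (spectrum ℂ N)) (hc : Injective c)
    (hcN : ∀ i, c i ∈ spectrum ℂ N) (hε : 0 < ε) :
    ∃ T : EuclideanSpace ℂ ι →L[ℂ] H, ApproxIntertwines F ε c N T ∧
      T† ∘L T = ContinuousLinearMap.id ℂ (EuclideanSpace ℂ ι) := by
  obtain ⟨r, hr, hFr⟩ := exists_pos_forall_dist_lt_dist_le (spectrum.isCompact N) hF hF_cont hε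
  obtain ⟨p, hp, hp_one, hp_disj⟩ := exists_isLocalizedFamily_disjoint_bumps hc hcN hr
  choose e norm_e cfc_e using fun i ↦
    exists_norm_eq_one_cfc_apply_eq_self (hcN i) (hp.continuousOn i) (hp_one i)
  have orthonormal_e : Orthonormal ℂ e := by
    refine ⟨norm_e, fun i j hij ↦ ?_⟩
    change ⟪e i, e j⟫_ℂ = 0
    rw [← cfc_e i, ← cfc_e j]
    exact inner_cfc_apply_eq_zero (hp.continuousOn i) (hp.continuousOn j) (hp_disj hij) _ _
  refine ⟨synthesis e, ?_, adjoint_synthesis_comp_synthesis orthonormal_e⟩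
  simpa only [cfc_e] using
    hp.approxIntertwines_synthesis (fun i ↦ (norm_e i).le) hε.le hF_cont hFr

lemma exists_approxIntertwines_apply_eq [IsStarNormal N] (hF : F.Finite)
    (hF_cont : ∀ g ∈ F, ContinuousOn g (spectrum ℂ N)) (hε : 0 < ε) (x : H) :
    ∃ s : Finset ℂ, ↑s ⊆ spectrum ℂ N ∧ ∃ T : EuclideanSpace ℂ s →L[ℂ] H,
      ApproxIntertwines F ε (↑) N T ∧ ∃ a, ‖a‖ ≤ ‖x‖ ∧ T a = x := by
  obtain ⟨r, hr, hFr⟩ := exists_pos_forall_dist_lt_dist_le (spectrum.isCompact N) hF hF_cont hε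
  obtain ⟨s, p, hp, hp_sq⟩ := exists_isLocalizedFamily_sum_sq_eq_one (spectrum.isCompact N) hr
  let y (i : s) : H := NormedSpace.normalize (cfc (p i) N x)
  let a : EuclideanSpace ℂ s := WithLp.toLp 2 fun i ↦ (‖cfc (p i) N x‖ : ℂ)
  have norm_y_le (i : s) : ‖y i‖ ≤ 1 := by
    simpa only [y, NormedSpace.normalize, norm_smul, norm_inv, norm_norm] using inv_mul_le_one
  refine ⟨s, fun z hz ↦ hp.mem ⟨z, hz⟩, synthesis fun i ↦ cfc (p i) N (y i),
    hp.approxIntertwines_synthesis norm_y_le hε.le hF_cont hFr, a, ?_, ?_⟩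
  · refine le_of_sq_le_sq ?_ (norm_nonneg x)
    simpa [a, EuclideanSpace.norm_sq_eq] using
      sum_norm_cfc_apply_sq_le zero_le_one hp.continuousOn hp.sum_sq_le_one x
  · have smul_y (i : s) : (‖cfc (p i) N x‖ : ℂ) • y i = cfc (p i) N x :=
      NormedSpace.norm_smul_normalize _
    simp only [synthesis_apply, a, ← map_smul, smul_y]
    exact sum_cfc_apply_cfc_apply hp.continuousOn hp_sq x

end ApproximateIntertwining

section Regularity

lemma le_of_forall_pos_le_add_mul {a b C : ℝ} (h : ∀ ε > 0, a ≤ b + ε * C) : a ≤ b := by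
  have tendsto_b : Filter.Tendsto (fun ε ↦ b + ε * C) (𝓝[>] 0) (𝓝 b) :=
    tendsto_nhdsWithin_of_tendsto_nhds (Continuous.tendsto' (by fun_prop) _ _ (by simp))
  exact ge_of_tendsto tendsto_b (Filter.eventually_of_mem self_mem_nhdsWithin h)

variable {H₁ H₂ : Type*}
  [NormedAddCommGroup H₁] [InnerProductSpace ℂ H₁] [CompleteSpace H₁]
  [NormedAddCommGroup H₂] [InnerProductSpace ℂ H₂] [CompleteSpace H₂]
  {N₁ : H₁ →L[ℂ] H₁} {N₂ : H₂ →L[ℂ] H₂} [IsStarNormal N₁] [IsStarNormal N₂] {f g : ℂ → ℂ}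

theorem norm_generalizedDerivation_diagonalCLM_le_of_cfc
    (hf₁ : ContinuousOn f (spectrum ℂ N₁)) (hf₂ : ContinuousOn f (spectrum ℂ N₂))
    (hg₁ : ContinuousOn g (spectrum ℂ N₁)) (hg₂ : ContinuousOn g (spectrum ℂ N₂))
    (hN : ∀ R : H₂ →L[ℂ] H₁, ‖generalizedDerivation (cfc f N₁) (cfc f N₂) R‖ ≤
      ‖generalizedDerivation (cfc g N₁) (cfc g N₂) R‖)
    {ι₁ ι₂ : Type*} [Fintype ι₁] [DecidableEq ι₁] [Fintype ι₂] [DecidableEq ι₂]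
    {c₁ : ι₁ → ℂ} {c₂ : ι₂ → ℂ} (hc₁ : Injective c₁) (hc₂ : Injective c₂)
    (hcN₁ : ∀ i, c₁ i ∈ spectrum ℂ N₁) (hcN₂ : ∀ i, c₂ i ∈ spectrum ℂ N₂)
    (R : EuclideanSpace ℂ ι₂ →L[ℂ] EuclideanSpace ℂ ι₁) :
    ‖generalizedDerivation (diagonalCLM (f ∘ c₁)) (diagonalCLM (f ∘ c₂)) R‖ ≤
      ‖generalizedDerivation (diagonalCLM (g ∘ c₁)) (diagonalCLM (g ∘ c₂)) R‖ := by
  refine le_of_forall_pos_le_add_mul (C := 4 * ‖R‖) fun ε hε ↦ ?_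
  obtain ⟨V₁, hV₁, hV₁_id⟩ := exists_approxIntertwines_adjoint_comp_self_eq_id
    (N := N₁) (F := {f, g}) (by simp) (by simp [hf₁, hg₁]) hc₁ hcN₁ hε
  obtain ⟨V₂, hV₂, hV₂_id⟩ := exists_approxIntertwines_adjoint_comp_self_eq_id
    (N := N₂) (F := {f, g}) (by simp) (by simp [hf₂, hg₂]) hc₂ hcN₂ hε
  calc _ ≤ ‖V₁ ∘L generalizedDerivation (diagonalCLM (f ∘ c₁)) (diagonalCLM (f ∘ c₂)) R ∘L V₂†‖ :=
        norm_le_norm_comp_comp_adjoint_of_adjoint_comp_self hV₁_id hV₂_id _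
    _ ≤ _ := norm_comp_generalizedDerivation_comp_le hV₁.norm_le_one
        ((ContinuousLinearMap.adjoint.norm_map V₂).trans_le hV₂.norm_le_one)
        (hV₁.norm_le f (by simp)) (hV₂.norm_adjoint_le f (by simp))
        (hV₁.norm_le g (by simp)) (hV₂.norm_adjoint_le g (by simp)) (hN _)

theorem norm_generalizedDerivation_cfc_le_of_diagonalCLM
    (hf₁ : ContinuousOn f (spectrum ℂ N₁)) (hf₂ : ContinuousOn f (spectrum ℂ N₂))
    (hg₁ : ContinuousOn g (spectrum ℂ N₁)) (hg₂ : ContinuousOn g (spectrum ℂ N₂))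
    (hdiag : ∀ s₁ s₂ : Finset ℂ, ↑s₁ ⊆ spectrum ℂ N₁ → ↑s₂ ⊆ spectrum ℂ N₂ →
      ∀ R : EuclideanSpace ℂ s₂ →L[ℂ] EuclideanSpace ℂ s₁,
        ‖generalizedDerivation (diagonalCLM (f ∘ (↑))) (diagonalCLM (f ∘ (↑))) R‖ ≤
          ‖generalizedDerivation (diagonalCLM (g ∘ (↑))) (diagonalCLM (g ∘ (↑))) R‖)
    (R : H₂ →L[ℂ] H₁) :
    ‖generalizedDerivation (cfc f N₁) (cfc f N₂) R‖ ≤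
      ‖generalizedDerivation (cfc g N₁) (cfc g N₂) R‖ := by
  refine ContinuousLinearMap.opNorm_le_of_re_inner_le (norm_nonneg _) fun x y hx hy ↦ ?_
  refine le_of_forall_pos_le_add_mul (C := 4 * ‖R‖) fun ε hε ↦ ?_
  obtain ⟨s₁, hs₁, T₁, hT₁, b, hb, T₁_b⟩ :=
    exists_approxIntertwines_apply_eq (N := N₁) (F := {f, g}) (by simp) (by simp [hf₁, hg₁]) hε y
  obtain ⟨s₂, hs₂, T₂, hT₂, a, ha, T₂_a⟩ :=
    exists_approxIntertwines_apply_eq (N := N₂) (F := {f, g}) (by simp) (by simp [hf₂, hg₂]) hε x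
  rw [hy] at hb
  rw [hx] at ha
  have compression_le : ‖T₁† ∘L generalizedDerivation (cfc f N₁) (cfc f N₂) R ∘L T₂‖ ≤
      ‖generalizedDerivation (cfc g N₁) (cfc g N₂) R‖ + ε * (4 * ‖R‖) :=
    norm_comp_generalizedDerivation_comp_le
      ((ContinuousLinearMap.adjoint.norm_map T₁).trans_le hT₁.norm_le_one) hT₂.norm_le_one
      (hT₁.norm_adjoint_le f (by simp)) (hT₂.norm_le f (by simp))
      (hT₁.norm_adjoint_le g (by simp)) (hT₂.norm_le g (by simp)) (hdiag s₁ s₂ hs₁ hs₂ _)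
  refine le_trans ?_ compression_le
  set D := generalizedDerivation (cfc f N₁) (cfc f N₂) R
  calc RCLike.re ⟪D x, y⟫_ℂ = RCLike.re ⟪(T₁† ∘L D ∘L T₂) a, b⟫_ℂ := by
        simp [ContinuousLinearMap.adjoint_inner_left, T₁_b, T₂_a]
    _ ≤ ‖(T₁† ∘L D ∘L T₂) a‖ * ‖b‖ := re_inner_le_norm _ _
    _ ≤ ‖T₁† ∘L D ∘L T₂‖ * 1 * 1 := by
        gcongr
        exact (T₁† ∘L D ∘L T₂).le_of_opNorm_le_of_le le_rfl ha
    _ = ‖T₁† ∘L D ∘L T₂‖ := by ring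

theorem stmt_12_general
    (hf : ContinuousOn f (spectrum ℂ N₁ ∪ spectrum ℂ N₂))
    (hg : ContinuousOn g (spectrum ℂ N₁ ∪ spectrum ℂ N₂))
    (hN : ∀ R : H₂ →L[ℂ] H₁, ‖generalizedDerivation (cfc f N₁) (cfc f N₂) R‖ ≤
      ‖generalizedDerivation (cfc g N₁) (cfc g N₂) R‖)
    {K₁ K₂ : Type*} [NormedAddCommGroup K₁] [InnerProductSpace ℂ K₁] [CompleteSpace K₁]
    [NormedAddCommGroup K₂] [InnerProductSpace ℂ K₂] [CompleteSpace K₂]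
    {M₁ : K₁ →L[ℂ] K₁} {M₂ : K₂ →L[ℂ] K₂} [IsStarNormal M₁] [IsStarNormal M₂]
    (h₁ : spectrum ℂ M₁ ⊆ spectrum ℂ N₁) (h₂ : spectrum ℂ M₂ ⊆ spectrum ℂ N₂) (R : K₂ →L[ℂ] K₁) :
    ‖generalizedDerivation (cfc f M₁) (cfc f M₂) R‖ ≤
      ‖generalizedDerivation (cfc g M₁) (cfc g M₂) R‖ := by
  have hf₁ := hf.mono Set.subset_union_left
  have hf₂ := hf.mono Set.subset_union_right
  have hg₁ := hg.mono Set.subset_union_left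
  have hg₂ := hg.mono Set.subset_union_right
  exact norm_generalizedDerivation_cfc_le_of_diagonalCLM (hf₁.mono h₁) (hf₂.mono h₂) (hg₁.mono h₁)
    (hg₂.mono h₂) (fun s₁ s₂ hs₁ hs₂ ↦
      norm_generalizedDerivation_diagonalCLM_le_of_cfc hf₁ hf₂ hg₁ hg₂ hN Subtype.val_injective
        Subtype.val_injective (fun i ↦ h₁ (hs₁ i.2)) fun i ↦ h₂ (hs₂ i.2)) R

end Regularity

/-- `f`-regularity passes to pairs with smaller spectra: if `N₁`, `N₂` are
bounded normal operators on complex Hilbert spaces `H₁`, `H₂`, `f` is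
continuous on `σ(N₁) ∪ σ(N₂)`, and `‖f(N₁)R - Rf(N₂)‖ ≤ ‖N₁R - RN₂‖` for every
bounded `R : H₂ → H₁`, then the same inequality holds for every pair of bounded
normal operators `M₁`, `M₂` (on arbitrary complex Hilbert spaces) with
`σ(M₁) ⊆ σ(N₁)` and `σ(M₂) ⊆ σ(N₂)`. -/
theorem stmt_12 {H₁ H₂ : Type}
    [NormedAddCommGroup H₁] [InnerProductSpace ℂ H₁] [CompleteSpace H₁]
    [NormedAddCommGroup H₂] [InnerProductSpace ℂ H₂] [CompleteSpace H₂]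
    (N₁ : H₁ →L[ℂ] H₁) (N₂ : H₂ →L[ℂ] H₂)
    (hN₁ : IsStarNormal N₁) (hN₂ : IsStarNormal N₂)
    (f : ℂ → ℂ) (hf : ContinuousOn f (spectrum ℂ N₁ ∪ spectrum ℂ N₂))
    (hreg : ∀ R : H₂ →L[ℂ] H₁,
      ‖(cfc f N₁).comp R - R.comp (cfc f N₂)‖ ≤ ‖N₁.comp R - R.comp N₂‖) :
    ∀ (K₁ K₂ : Type)
      [NormedAddCommGroup K₁] [InnerProductSpace ℂ K₁] [CompleteSpace K₁]
      [NormedAddCommGroup K₂] [InnerProductSpace ℂ K₂] [CompleteSpace K₂]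
      (M₁ : K₁ →L[ℂ] K₁) (M₂ : K₂ →L[ℂ] K₂),
      IsStarNormal M₁ → IsStarNormal M₂ →
      spectrum ℂ M₁ ⊆ spectrum ℂ N₁ → spectrum ℂ M₂ ⊆ spectrum ℂ N₂ →
      ∀ R : K₂ →L[ℂ] K₁,
        ‖(cfc f M₁).comp R - R.comp (cfc f M₂)‖ ≤ ‖M₁.comp R - R.comp M₂‖ := by
  intro K₁ K₂ _ _ _ _ _ _ M₁ M₂ hM₁ hM₂ h₁ h₂ R
  simpa only [generalizedDerivation, cfc_id] using stmt_12_general hf continuousOn_id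
    (by simpa only [generalizedDerivation, cfc_id] using hreg) h₁ h₂ R
end

section
/- Approximation of a normal operator by a commuting normal operator with finite spectrum: Let N be a bounded normal operator on a complex Hilbert space H, let ε > 0 and let Λ ⊆ ℂ be an ε-net of the spectrum of N, i.e. for every ζ ∈ σ(N) there exists λ ∈ Λ with |λ − ζ| < ε. Then there exists a bounded normal operator N₀ on H such that N N₀ = N₀ N, ‖N − N₀‖ < ε, and the spectrum of N₀ is a finite subset of Λ. -/
/-! An orthogonal decomposition `1 = ∑ qᵢ` by projections commuting with `N` gives the
approximant `N₀ = ∑ λᵢ qᵢ`, and `‖N - N₀‖` is then the largest of the norms `‖(N - λᵢ) qᵢ‖`. To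
find projections with `‖(N - λᵢ) qᵢ‖ ≤ δ` without a spectral measure, use compactness to cover
`σ(N)` by finitely many balls `B(λᵢ, δ)` with `δ < ε`, and put `gᵢ(z) = max(|z - λᵢ|, δ) - δ`.
As `∏ gᵢ` vanishes on `σ(N)`, the self-adjoint elements `gᵢ(N)` have product zero, so
splitting off their kernels one after another exhausts the whole space; on the kernel of `gᵢ(N)`
the operator `N` is within `δ` of `λᵢ`.

All that is needed of the algebra is that kernels of self-adjoint elements are given by
projections. -/

open Set Metric
open scoped Function NNReal

section Compactness

variable {X : Type*} [PseudoMetricSpace X]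

theorem exists_finite_closedBall_cover_of_subset_thickening {K Λ : Set X} {ε : ℝ}
    (hK : IsCompact K) (hε : 0 < ε) (hKΛ : K ⊆ thickening ε Λ) :
    ∃ δ ∈ Ioo 0 ε, ∃ t ⊆ Λ, t.Finite ∧ K ⊆ ⋃ x ∈ t, closedBall x δ := by
  have : Nonempty (Ioo 0 ε) := (nonempty_Ioo.2 hε).to_subtype
  obtain ⟨⟨δ, hδ⟩, hKδ⟩ : ∃ δ : Ioo 0 ε, K ⊆ thickening δ Λ := by
    refine hK.elim_directed_cover _ (fun _ => isOpen_thickening) (fun x hx => ?_)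
      (Monotone.directed_le fun _ _ h => thickening_mono h Λ)
    obtain ⟨y, hy, hxy⟩ := mem_thickening_iff.1 (hKΛ hx)
    obtain ⟨δ, hδ, hδε⟩ := exists_between hxy
    exact mem_iUnion.2 ⟨⟨δ, dist_nonneg.trans_lt hδ, hδε⟩, mem_thickening_iff.2 ⟨y, hy, hδ⟩⟩
  rw [thickening_eq_biUnion_ball] at hKδ
  obtain ⟨t, htΛ, ht, hKt⟩ := hK.elim_finite_subcover_image (fun _ _ => isOpen_ball) hKδ
  exact ⟨δ, hδ, t, htΛ, ht, hKt.trans (iUnion₂_mono fun _ _ => ball_subset_closedBall)⟩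

end Compactness

section Rickart

/-- `p` is a projection generating the right annihilator of `a`; for bounded operators on a Hilbert
space it is the orthogonal projection onto the kernel of `a`. -/
structure IsRightAnnihilatorProjection {A : Type*} [Ring A] [StarRing A] (a p : A) : Prop
    extends IsStarProjection p where
  mul_eq_zero_iff (x : A) : a * x = 0 ↔ p * x = x

/-- Rickart `*`-rings: the right annihilator of every element is generated by a projection. Von
Neumann algebras are the main examples. -/
class IsRickartStarRing (A : Type*) [Ring A] [StarRing A] : Prop where
  exists_isRightAnnihilatorProjection (a : A) : ∃ p, IsRightAnnihilatorProjection a p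

namespace IsRightAnnihilatorProjection

variable {A : Type*} [Ring A] [StarRing A] {a p : A}

theorem mul_eq_zero (h : IsRightAnnihilatorProjection a p) : a * p = 0 :=
  (h.mul_eq_zero_iff p).2 h.isIdempotentElem

theorem mul_mul_self_of_commute (h : IsRightAnnihilatorProjection a p) {c : A}
    (hc : Commute c a) : p * (c * p) = c * p :=
  (h.mul_eq_zero_iff _).1 <| by rw [← mul_assoc, ← hc.eq, mul_assoc, h.mul_eq_zero, mul_zero]

theorem commute (h : IsRightAnnihilatorProjection a p) (ha : IsSelfAdjoint a) {c : A}
    (hc : Commute c a) : Commute c p := by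
  have hc_star : Commute (star c) a := by simpa only [ha.star_eq] using hc.star_star
  have hpc : p * c * p = p * c := by
    simpa only [star_mul, star_star, h.isSelfAdjoint.star_eq] using
      congr(star $(h.mul_mul_self_of_commute hc_star))
  rw [commute_iff_eq, ← h.mul_mul_self_of_commute hc, ← mul_assoc, hpc]

theorem mul_one_sub_mul_eq_zero (h : IsRightAnnihilatorProjection a p) (ha : IsSelfAdjoint a)
    {r e : A} (hr : Commute r a) (hre : a * (r * e) = 0) : r * ((1 - p) * e) = 0 := by
  have hpr : p * (r * e) = r * e := (h.mul_eq_zero_iff _).1 hre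
  rw [sub_mul, one_mul, mul_sub, ← mul_assoc r p, (h.commute ha hr).eq, mul_assoc, hpr, sub_self]

end IsRightAnnihilatorProjection

theorem exists_orthogonalIdempotents_of_prod_mul_eq_zero {A : Type*} [Ring A] [StarRing A]
    [IsRickartStarRing A] {n : ℕ} (t : Fin n → A) (ht : ∀ i, IsSelfAdjoint (t i))
    (htt : ∀ i j, Commute (t i) (t j)) {e : A} (he : IsStarProjection e)
    (hte : ∀ i, Commute (t i) e) (hprod : (List.ofFn t).prod * e = 0) :
    ∃ q : Fin n → A, OrthogonalIdempotents q ∧ ∑ i, q i = e ∧ (∀ i, IsStarProjection (q i)) ∧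
      (∀ i, t i * q i = 0) ∧ ∀ c, Commute c e → (∀ i, Commute c (t i)) → ∀ i, Commute c (q i) := by
  induction n generalizing e with
  | zero =>
    have he0 : e = 0 := by simpa using hprod
    exact ⟨0, ⟨fun i => i.elim0, fun i => i.elim0⟩, by simp [he0], fun i => i.elim0,
      fun i => i.elim0, fun _ _ _ i => i.elim0⟩
  | succ n ih =>
    obtain ⟨p, hp⟩ := IsRickartStarRing.exists_isRightAnnihilatorProjection (t 0)
    have hpe : Commute p e := (hp.commute (ht 0) (hte 0).symm).symm
    have hcf {c : A} (hce : Commute c e) (hc : Commute c (t 0)) : Commute c ((1 - p) * e) :=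
      ((Commute.one_right c).sub_right (hp.commute (ht 0) hc)).mul_right hce
    have hf : IsStarProjection ((1 - p) * e) :=
      hp.one_sub.mul he ((Commute.one_left e).sub_left hpe)
    have hrest : (List.ofFn fun i : Fin n => t i.succ).prod * ((1 - p) * e) = 0 := by
      refine hp.mul_one_sub_mul_eq_zero (ht 0) (Commute.list_prod_left _ _ fun x hx => ?_) ?_
      · obtain ⟨i, rfl⟩ := (List.mem_ofFn' _ _).1 hx
        exact htt _ _
      · rw [← hprod, List.ofFn_succ, List.prod_cons, mul_assoc]
    obtain ⟨q, hq, hsum, hqproj, htq, hqc⟩ :=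
      ih (fun i => t i.succ) (fun i => ht _) (fun i j => htt _ _) hf
        (fun i => hcf (hte _) (htt _ _)) hrest
    have hpe_proj : IsStarProjection (p * e) := hp.mul he hpe
    have hpef : p * e * ∑ i, q i = 0 := by
      rw [hsum, ((Commute.one_right e).sub_right hpe.symm).mul_mul_mul_comm,
        hp.mul_one_sub_self, zero_mul]
    have hfpe : (∑ i, q i) * (p * e) = 0 := by
      rw [hsum, hpe.symm.mul_mul_mul_comm, hp.one_sub_mul_self, zero_mul]
    refine ⟨(Option.elim · (p * e) q) ∘ finSuccEquiv n, (OrthogonalIdempotents.equiv _).2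
      (hq.option _ hpe_proj.isIdempotentElem hpef hfpe), ?_, ?_, ?_, fun c hce hct => ?_⟩
    · simp [Fin.sum_univ_succ, hsum, sub_mul]
    · simpa [Fin.forall_fin_succ] using ⟨hpe_proj, hqproj⟩
    · simpa [Fin.forall_fin_succ, ← mul_assoc, hp.mul_eq_zero] using htq
    · simpa [Fin.forall_fin_succ] using
        ⟨(hp.commute (ht 0) (hct 0)).mul_right hce, hqc c (hcf hce (hct 0)) fun i => hct _⟩

end Rickart

section OrthogonalSums

variable {ι : Type*} [Fintype ι]

theorem sum_smul_mul_sum_smul_of_orthogonalIdempotents {R A : Type*} [CommSemiring R] [Semiring A]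
    [Algebra R A] {q : ι → A} (hq : OrthogonalIdempotents q) (x y : ι → R) :
    (∑ i, x i • q i) * ∑ i, y i • q i = ∑ i, (x i * y i) • q i := by
  classical
  simp [Finset.sum_mul, Finset.mul_sum, hq.mul_eq, smul_smul, mul_comm]

theorem spectrum_sum_smul_subset_range {K A : Type*} [Field K] [Ring A] [Algebra K A] {q : ι → A}
    (hq : CompleteOrthogonalIdempotents q) (x : ι → K) :
    spectrum K (∑ i, x i • q i) ⊆ range x := by
  intro μ hμ
  by_contra hx
  have hne (i : ι) : μ - x i ≠ 0 := sub_ne_zero.2 fun h => hx ⟨i, h.symm⟩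
  have hsub : algebraMap K A μ - ∑ i, x i • q i = ∑ i, (μ - x i) • q i := by
    simp only [sub_smul, Finset.sum_sub_distrib, ← Finset.smul_sum, hq.complete,
      Algebra.algebraMap_eq_smul_one]
  refine hμ (isUnit_iff_exists.2 ⟨∑ i, (μ - x i)⁻¹ • q i, ?_, ?_⟩) <;>
    simp [hsub, sum_smul_mul_sum_smul_of_orthogonalIdempotents hq.toOrthogonalIdempotents, hne,
      hq.complete]

theorem isStarNormal_sum_smul {R A : Type*} [CommSemiring R] [StarRing R] [Semiring A] [StarRing A]
    [Algebra R A] [StarModule R A] {q : ι → A} (hq : OrthogonalIdempotents q)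
    (hsa : ∀ i, IsSelfAdjoint (q i)) (x : ι → R) : IsStarNormal (∑ i, x i • q i) := by
  have hstar : star (∑ i, x i • q i) = ∑ i, star (x i) • q i := by
    simp only [star_sum, star_smul, (hsa _).star_eq]
  constructor
  rw [commute_iff_eq, hstar, sum_smul_mul_sum_smul_of_orthogonalIdempotents hq,
    sum_smul_mul_sum_smul_of_orthogonalIdempotents hq]
  simp only [mul_comm]

theorem norm_le_of_forall_norm_mul_le {A : Type*} [CStarAlgebra A] {q : ι → A}
    (hq : CompleteOrthogonalIdempotents q) (hsa : ∀ i, IsSelfAdjoint (q i)) {b : A}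
    (hb : ∀ i, Commute b (q i)) {c : ℝ} (hc : 0 ≤ c) (h : ∀ i, ‖b * q i‖ ≤ c) : ‖b‖ ≤ c := by
  lift c to ℝ≥0 using hc
  have hbb (i : ι) : Commute (star b * b) (q i) :=
    .mul_left (by simpa only [(hsa i).star_eq] using (hb i).star_star) (hb i)
  have hself (i : ι) : IsSelfAdjoint (star b * b * q i) :=
    ((IsSelfAdjoint.star_mul_self b).commute_iff (hsa i)).1 (hbb i)
  have horth : Pairwise ((· * · = 0) on fun i => star b * b * q i) := fun i j hij => by
    rw [Function.onFun, (hbb i).symm.mul_mul_mul_comm, hq.ortho hij, mul_zero]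
  have hterm (i : ι) : star b * b * q i = star (b * q i) * (b * q i) := by
    rw [star_mul, (hsa i).star_eq, mul_assoc (q i), ← mul_assoc (star b), ← mul_assoc (q i),
      ← (hbb i).eq, mul_assoc _ (q i), (hq.idem i).eq]
  have hterm_le (i : ι) : ‖star b * b * q i‖₊ ≤ c * c := by
    rw [hterm, CStarRing.nnnorm_star_mul_self]
    exact mul_self_le_mul_self zero_le (h i)
  have hsq : ‖b‖₊ * ‖b‖₊ ≤ c * c := by
    calc ‖b‖₊ * ‖b‖₊ = ‖∑ i, star b * b * q i‖₊ := by
          rw [← Finset.mul_sum, hq.complete, mul_one, CStarRing.nnnorm_star_mul_self]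
      _ = Finset.univ.sup fun i => ‖star b * b * q i‖₊ :=
          IsSelfAdjoint.nnnorm_sum_eq_sup _ (fun i _ => hself i) horth
      _ ≤ c * c := Finset.sup_le fun i _ => hterm_le i
  exact NNReal.coe_le_coe.2 ((mul_self_le_mul_self_iff zero_le zero_le).2 hsq)

end OrthogonalSums

section FunctionalCalculus

theorem cfc_prod_eq_prod_ofFn {R A : Type*} {p : A → Prop} [CommSemiring R] [StarRing R]
    [MetricSpace R] [IsTopologicalSemiring R] [ContinuousStar R] [TopologicalSpace A] [Ring A]
    [StarRing A] [Algebra R A] [ContinuousFunctionalCalculus R A p] {n : ℕ} (f : Fin n → R → R)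
    (a : A) (hf : ∀ i, ContinuousOn (f i) (spectrum R a)) (ha : p a) :
    cfc (fun z => ∏ i, f i z) a = (List.ofFn fun i => cfc (f i) a).prod := by
  induction n with
  | zero => simp [cfc_const_one R a]
  | succ n ih =>
    simp only [Fin.prod_univ_succ, List.ofFn_succ, List.prod_cons]
    rw [cfc_mul _ _ a (hf 0) (continuousOn_finsetProd _ fun i _ => hf i.succ),
      ih _ fun i => hf i.succ]

/-- The amount `max(|z - l|, δ) - δ` by which `z` lies outside the closed disc of centre `l` and
radius `δ`, complex-valued so that it can be fed to the functional calculus. -/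
noncomputable def discExcess (l : ℂ) (δ : ℝ) (z : ℂ) : ℂ := (max ‖z - l‖ δ - δ : ℝ)

@[fun_prop]
theorem continuous_discExcess (l : ℂ) (δ : ℝ) : Continuous (discExcess l δ) := by
  unfold discExcess
  fun_prop

theorem discExcess_eq_zero {l z : ℂ} {δ : ℝ} (hz : z ∈ closedBall l δ) : discExcess l δ z = 0 := by
  simp [discExcess, max_eq_right (mem_closedBall_iff_norm.1 hz)]

variable {A : Type*} [CStarAlgebra A]

theorem isSelfAdjoint_cfc_discExcess (l : ℂ) (δ : ℝ) (a : A) :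
    IsSelfAdjoint (cfc (discExcess l δ) a) := by
  rw [IsSelfAdjoint, ← cfc_star]
  congr 1
  ext z
  exact Complex.conj_ofReal _

theorem norm_sub_algebraMap_mul_le {a p : A} {l : ℂ} {δ : ℝ} (ha : IsStarNormal a) (hδ : 0 < δ)
    (hp : cfc (discExcess l δ) a * p = 0) : ‖(a - algebraMap ℂ A l) * p‖ ≤ δ * ‖p‖ := by
  let w (z : ℂ) : ℂ := (z - l) / (max ‖z - l‖ δ : ℝ)
  have hmax (z : ℂ) : 0 < max ‖z - l‖ δ := lt_max_of_lt_right hδ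
  have hmax_ne (z : ℂ) : ((max ‖z - l‖ δ : ℝ) : ℂ) ≠ 0 := mod_cast (hmax z).ne'
  have hw : Continuous w := by fun_prop (disch := exact hmax_ne _)
  have hw_le (z : ℂ) : ‖(δ : ℂ) * w z‖ ≤ δ := by
    rw [norm_mul, norm_div, Complex.norm_of_nonneg hδ.le, Complex.norm_of_nonneg (hmax z).le]
    exact mul_le_of_le_one_right hδ.le ((div_le_one (hmax z)).2 (le_max_left _ _))
  have hsplit (z : ℂ) : z - l = δ * w z + w z * discExcess l δ z := by
    have hz := hmax_ne z
    simp only [w, discExcess]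
    push_cast at hz ⊢
    field_simp
    ring
  have hcfc : a - algebraMap ℂ A l =
      cfc (fun z => δ * w z) a + cfc w a * cfc (discExcess l δ) a := by
    rw [← cfc_mul w (discExcess l δ) a hw.continuousOn (by fun_prop),
      ← cfc_add (a := a) (fun z => δ * w z) (fun z => w z * discExcess l δ z) (by fun_prop)
        (by fun_prop),
      ← cfc_congr fun z _ => hsplit z, cfc_sub (fun z => z) (fun _ => l) a, cfc_id' ℂ a,
      cfc_const l a]
  calc ‖(a - algebraMap ℂ A l) * p‖ = ‖cfc (fun z => δ * w z) a * p‖ := by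
        rw [hcfc, add_mul, mul_assoc, hp, mul_zero, add_zero]
    _ ≤ δ * ‖p‖ := norm_mul_le_of_le (norm_cfc_le hδ.le fun z _ => hw_le z) le_rfl

theorem exists_completeOrthogonalIdempotents_norm_sub_algebraMap_mul_le [IsRickartStarRing A]
    {a : A} (ha : IsStarNormal a) {δ : ℝ} (hδ : 0 < δ) {n : ℕ} (l : Fin n → ℂ)
    (hcover : spectrum ℂ a ⊆ ⋃ i, closedBall (l i) δ) :
    ∃ q : Fin n → A, CompleteOrthogonalIdempotents q ∧ (∀ i, IsStarProjection (q i)) ∧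
      (∀ i, Commute a (q i)) ∧ ∀ i, ‖(a - algebraMap ℂ A (l i)) * q i‖ ≤ δ := by
  let t (i : Fin n) : A := cfc (discExcess (l i) δ) a
  have hprod : (List.ofFn t).prod = 0 := by
    rw [← cfc_prod_eq_prod_ofFn _ a (fun i => by fun_prop) ha, ← cfc_zero ℂ a]
    refine cfc_congr fun z hz => ?_
    obtain ⟨i, hi⟩ := mem_iUnion.1 (hcover hz)
    exact Finset.prod_eq_zero (Finset.mem_univ i) (discExcess_eq_zero hi)
  obtain ⟨q, hq, hsum, hproj, htq, hcomm⟩ :=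
    exists_orthogonalIdempotents_of_prod_mul_eq_zero t (fun i => isSelfAdjoint_cfc_discExcess _ _ a)
      (fun i j => cfc_commute_cfc _ _ a) (.one A) (fun i => .one_right _) (by rw [hprod, zero_mul])
  have hat (i : Fin n) : Commute a (t i) :=
    ((Commute.refl a).cfc ha.star_comm_self _).symm
  refine ⟨q, ⟨hq, hsum⟩, hproj, hcomm a (.one_right a) hat, fun i => ?_⟩
  exact (norm_sub_algebraMap_mul_le ha hδ (htq i)).trans
    (mul_le_of_le_one_right hδ.le (hproj i).norm_le)

end FunctionalCalculus

instance isRickartStarRing_continuousLinearMap {H : Type*} [NormedAddCommGroup H]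
    [InnerProductSpace ℂ H] [CompleteSpace H] : IsRickartStarRing (H →L[ℂ] H) where
  exists_isRightAnnihilatorProjection T := by
    have := T.isClosed_ker.completeSpace_coe
    refine ⟨T.ker.starProjection, isStarProjection_starProjection, fun S => ?_⟩
    simp [ContinuousLinearMap.ext_iff, Submodule.starProjection_eq_self_iff]

theorem stmt_13_general {A : Type*} [CStarAlgebra A] [IsRickartStarRing A]
    (a : A) (ha : IsStarNormal a) {ε : ℝ} (hε : 0 < ε) {Λ : Set ℂ}
    (hnet : ∀ ζ ∈ spectrum ℂ a, ∃ l ∈ Λ, ‖l - ζ‖ < ε) :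
    ∃ a₀ : A, IsStarNormal a₀ ∧ a * a₀ = a₀ * a ∧ ‖a - a₀‖ < ε ∧
      (spectrum ℂ a₀).Finite ∧ spectrum ℂ a₀ ⊆ Λ := by
  have hthick : spectrum ℂ a ⊆ thickening ε Λ := fun ζ hζ => by
    simpa only [mem_thickening_iff, dist_comm ζ, dist_eq_norm] using hnet ζ hζ
  obtain ⟨δ, ⟨hδ, hδε⟩, t, htΛ, ht, hcover⟩ :=
    exists_finite_closedBall_cover_of_subset_thickening (spectrum.isCompact a) hε hthick
  obtain ⟨n, l, -, rfl⟩ := ht.fin_param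
  rw [biUnion_range] at hcover
  obtain ⟨q, hq, hproj, haq, hbound⟩ :=
    exists_completeOrthogonalIdempotents_norm_sub_algebraMap_mul_le ha hδ l hcover
  have hsa (i : Fin n) : IsSelfAdjoint (q i) := (hproj i).isSelfAdjoint
  set a₀ := ∑ i, l i • q i
  have ha₀_mul (i : Fin n) : a₀ * q i = l i • q i := by simp [a₀, Finset.sum_mul, hq.mul_eq]
  have ha₀q (i : Fin n) : Commute a₀ (q i) := by
    simp [commute_iff_eq, ha₀_mul, a₀, Finset.mul_sum, hq.mul_eq]
  have hcomm : Commute a a₀ := Commute.sum_right _ _ _ fun i _ => (haq i).smul_right _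
  have hspec : spectrum ℂ a₀ ⊆ range l := spectrum_sum_smul_subset_range hq l
  have hnorm : ‖a - a₀‖ ≤ δ :=
    norm_le_of_forall_norm_mul_le hq hsa (fun i => (haq i).sub_left (ha₀q i)) hδ.le fun i => by
      simpa only [sub_mul, ha₀_mul, Algebra.algebraMap_eq_smul_one, smul_one_mul] using hbound i
  exact ⟨a₀, isStarNormal_sum_smul hq.toOrthogonalIdempotents hsa l, hcomm.eq,
    hnorm.trans_lt hδε, (finite_range l).subset hspec, hspec.trans htΛ⟩

/-- Approximation of a normal operator by a commuting normal operator with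
finite spectrum: if `N` is a bounded normal operator on a complex Hilbert space
and `Λ ⊆ ℂ` is an `ε`-net of `σ(N)`, then there is a bounded normal operator
`N₀` commuting with `N` such that `‖N - N₀‖ < ε` and `σ(N₀)` is a finite subset
of `Λ`. -/
theorem stmt_13 {H : Type*} [NormedAddCommGroup H] [InnerProductSpace ℂ H] [CompleteSpace H]
    (N : H →L[ℂ] H) (hN : IsStarNormal N) (ε : ℝ) (hε : 0 < ε) (Λ : Set ℂ)
    (hnet : ∀ ζ ∈ spectrum ℂ N, ∃ l ∈ Λ, ‖l - ζ‖ < ε) :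
    ∃ N₀ : H →L[ℂ] H, IsStarNormal N₀ ∧ N * N₀ = N₀ * N ∧ ‖N - N₀‖ < ε ∧
      (spectrum ℂ N₀).Finite ∧ spectrum ℂ N₀ ⊆ Λ :=
  stmt_13_general N hN hε hnet
end
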